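/- Let ω = (ω₁, ω₂, …) be a nondecreasing sequence of positive reals tending to +∞ with ω_k ≥ (log k)^α for some α > 0 and all k ≥ k₀, and let (n_k) be a sequence of distinct positive integers satisfying Condition A_ω. Then for any f satisfying the stated conditions, limsup_{N→∞} ( Σ_{k=1}^N f(n_k x) ) / √(2N log log N) = ‖f‖ for Lebesgue-almost every x ∈ (0,1). -/

import Mathlib

/-!
The sums `∑ f (n_k x)` are compared with sums of independent random variables, scale by scale.

For each scale `Q`, serving partial sums of length `2 ^ O(Q)`, `f` is replaced by a Fourier partial
sum `T Q` of degree `2 ^ (40 Q)`, and the `2 ^ Q` smallest elements of the sequence are discarded.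
Bounded variation gives Fourier coefficients `O(1 / |a|)`, hence `|T Q| = O(Q)` and an `L²` error so
small that, by Borel–Cantelli, the replacement is almost surely harmless. Condition `A_ω` with
`N = 2 ^ Q` says that the remaining `n_k` have only trivial linear relations of length `ω_N`, with
coefficients up to `N ^ ω_N`; expanding a power of `∑ c_k T Q (n_k x)` into characters, all its
moments of order `m ≤ ω_N` are exactly those of `∑ c_k T Q (u_k)` with `u_k` independent and uniform
(`moments_match`, `relation_trivial`). Since `ω_N ≥ (Q log 2) ^ α`, this covers every order
`m ≤ D log Q`, that is, every multiple of `log log` of the length of the sum. The structure `Scales`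
records these facts, and `exists_scales` establishes them.

*Upper bound* (`Scales.upper`). For independent summands the moments of order `2p = O(log Q)` obey
the sub-Gaussian bound with a constant arbitrarily close to `‖f‖²` (`pi_moment_le`), so Markov's
inequality gives Gaussian tails at the level of the iterated logarithm (`Scales.tail_le`). With
Borel–Cantelli over `Q`, this controls the partial sums at finitely many points per scale with the
sharp constant (`Scales.grid`), and dyadic chaining fills the gaps (`Scales.chain`).

*Lower bound* (`Scales.lower`). Agreement of `O(log Q)` moments makes the joint characteristic
functions of two normalized blocks Gaussian up to `Q ^ (-3)`, for frequencies up to a multiple of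
`√(log Q)` (`Scales.charFun_le`, `Scales.pair`). The test function `cos (θ (y - t)) ^ (2 K)`, with
`K ≈ β log Q` and `θ ≈ 1 / √(log Q)`, has its spectrum in that range and is concentrated near
`t = √2 s √(log Q)`; for `s < ‖f‖` its Gaussian mean is at least a constant times `Q ^ (-κ)` with
`κ < 1`. The second moment method over `J` geometric blocks, `Q = b J`, then yields a block of the
required size outside a set of measure `O(Q ^ (κ - 1))` (`Scales.nb_large`). Along `J = 2 ^ s` these
measures are summable, and the upper bound shows that the sum before such a block is negligible.
-/

open MeasureTheory Filter Real Topology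

noncomputable section

/-- `n k` is among the `N` smallest elements of the sequence `n`. -/
def AmongSmallest (n : ℕ → ℕ) (N : ℕ) (k : ℕ) : Prop :=
  {j : ℕ | n j ≤ n k}.ncard ≤ N

/-- Condition `A_ω` with explicit threshold `N₀`. -/
def CondAWith (ω : ℕ → ℝ) (n : ℕ → ℕ) (N₀ : ℕ) : Prop :=
  ∀ N : ℕ, N₀ ≤ N →
    ∀ (r : ℕ) (k : Fin r → ℕ) (a : Fin r → ℤ),
      2 ≤ r → (r : ℝ) ≤ ω N →
      Function.Injective k →
      (∀ i, a i ≠ 0) →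
      (∀ i, (|a i| : ℝ) ≤ (N : ℝ) ^ ω N) →
      (∑ i, a i * (n (k i) : ℤ)) = 0 →
      ∀ i, AmongSmallest n N (k i)

/-- Condition `A_ω`. -/
def CondA (ω : ℕ → ℝ) (n : ℕ → ℕ) : Prop := ∃ N₀, CondAWith ω n N₀

/-! ### Characters on the unit interval -/

namespace LIL

/-- The uniform distribution on `(0,1]`, the underlying probability measure. -/
def U : Measure ℝ := volume.restrict (Set.Ioc 0 1)

instance : IsProbabilityMeasure U := ⟨by simp [U]⟩

lemma integral_U {E : Type*} [NormedAddCommGroup E] [NormedSpace ℝ E] (g : ℝ → E) :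
    ∫ x, g x ∂U = ∫ x in (0:ℝ)..1, g x := by
  rw [intervalIntegral.integral_of_le zero_le_one, U]

/-- The character `x ↦ e^{2πi m x}`. -/
def ee (m : ℤ) (x : ℝ) : ℂ := Complex.exp ((2 * π * m * x : ℝ) * Complex.I)

lemma norm_ee (m : ℤ) (x : ℝ) : ‖ee m x‖ = 1 := Complex.norm_exp_ofReal_mul_I _

lemma continuous_ee (m : ℤ) : Continuous (ee m) := by
  unfold ee; fun_prop

lemma ee_add (m k : ℤ) (x : ℝ) : ee (m + k) x = ee m x * ee k x := by
  rw [ee, ee, ee, ← Complex.exp_add]; congr 1; push_cast; ring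

lemma ee_zero (x : ℝ) : ee 0 x = 1 := by simp [ee]

lemma ee_sum {ι : Type*} (s : Finset ι) (g : ι → ℤ) (x : ℝ) :
    ee (∑ i ∈ s, g i) x = ∏ i ∈ s, ee (g i) x := by
  classical
  induction s using Finset.induction_on with
  | empty => simp [ee_zero]
  | insert a s ha ih => rw [Finset.sum_insert ha, Finset.prod_insert ha, ee_add, ih]

lemma ee_mul_nat (a : ℤ) (m : ℕ) (x : ℝ) : ee a (m * x) = ee (a * m) x := by
  simp only [ee]; congr 2; push_cast; ring

lemma ee_neg (a : ℤ) (x : ℝ) : ee (-a) x = (starRingEnd ℂ) (ee a x) := by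
  simp only [ee]
  rw [← Complex.exp_conj]
  congr 1
  simp only [map_mul, Complex.conj_ofReal, Complex.conj_I]
  push_cast; ring

lemma ee_add_one (a : ℤ) (x : ℝ) : ee a (x + 1) = ee a x := by
  simp only [ee]
  rw [Complex.exp_eq_exp_iff_exists_int]
  exact ⟨a, by push_cast; ring⟩

lemma ee_periodic_int (a : ℤ) (x : ℝ) (j : ℤ) : ee a (x + j) = ee a x := by
  simp only [ee]
  rw [Complex.exp_eq_exp_iff_exists_int]
  exact ⟨a * j, by push_cast; ring⟩

lemma intervalIntegral_ee_period (m : ℤ) (hm : m ≠ 0) (a b : ℝ)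
    (hab : ee m a = ee m b) : ∫ x in a..b, ee m x = 0 := by
  have h : (2 * π * m * Complex.I : ℂ) ≠ 0 := by
    simp [hm, Real.pi_ne_zero]
  have : ∀ x, ee m x = Complex.exp ((2 * π * m * Complex.I : ℂ) * x) := by
    intro x; simp only [ee]; congr 1; push_cast; ring
  simp_rw [this] at hab ⊢
  rw [integral_exp_mul_complex h, hab]; simp

lemma integral_ee (m : ℤ) : ∫ x, ee m x ∂U = if m = 0 then 1 else 0 := by
  split_ifs with h
  · subst h; simp [ee_zero]
  · rw [integral_U]
    exact intervalIntegral_ee_period m h 0 1 (by rw [← ee_add_one m 0, zero_add])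

lemma sum_Icc_neg {M : Type*} [AddCommMonoid M] (g : ℤ → M) (R : ℕ) :
    ∑ a ∈ Finset.Icc (-(R:ℤ)) R, g a =
      g 0 + ∑ m ∈ Finset.range R, (g (m + 1) + g (-(m + 1))) := by
  induction R with
  | zero => simp
  | succ k ih =>
    have : Finset.Icc (-((k+1:ℕ):ℤ)) ((k+1:ℕ):ℤ)
        = insert ((k:ℤ)+1) (insert (-((k:ℤ)+1)) (Finset.Icc (-(k:ℤ)) k)) := by
      ext a; simp only [Finset.mem_Icc, Finset.mem_insert]; push_cast; omega
    rw [this, Finset.sum_insert, Finset.sum_insert, ih, Finset.sum_range_succ]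
    · abel
    · simp
    · simp only [Finset.mem_insert, Finset.mem_Icc]; omega

end LIL

/-! ### Trigonometric approximation of functions of bounded variation -/

namespace LIL

/-- The `a`-th Fourier coefficient of a real function of period `1`. -/
def fc (f : ℝ → ℝ) (a : ℤ) : ℂ := ∫ x, (f x : ℂ) * ee (-a) x ∂U

/-- A 1-periodic function of bounded variation on a period is bounded. -/
lemma bounded_of_bv {f : ℝ → ℝ} (hf_per : ∀ x, f (x + 1) = f x)
    (hf_bv : BoundedVariationOn f (Set.Icc 0 1)) : ∃ B, 0 < B ∧ ∀ x, |f x| ≤ B := by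
  refine ⟨|f 0| + (eVariationOn f (Set.Icc 0 1)).toReal + 1, by positivity, fun x => ?_⟩
  have hp : Function.Periodic f 1 := hf_per
  have h1 : f x = f (Int.fract x) := by
    have := hp.sub_int_mul_eq (x := x) ⌊x⌋
    rw [← this, Int.fract]; simp
  have h2 := hf_bv.dist_le (x := Int.fract x) (y := 0)
    ⟨Int.fract_nonneg x, (Int.fract_lt_one x).le⟩ (by simp)
  rw [h1]
  rw [Real.dist_eq] at h2
  have := abs_sub_abs_le_abs_sub (f (Int.fract x)) (f 0)
  linarith

lemma integrable_of_bdd {E : Type*} [NormedAddCommGroup E] {Ω : Type*} [MeasurableSpace Ω]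
    {μ : Measure Ω} [IsFiniteMeasure μ] {g : Ω → E} (hg : AEStronglyMeasurable g μ) {B : ℝ}
    (hB : ∀ x, ‖g x‖ ≤ B) : Integrable g μ :=
  (integrable_const B).mono' hg (Eventually.of_forall hB)

lemma intervalIntegrable_of_bdd {g : ℝ → ℂ} (hg : Measurable g) {B : ℝ}
    (hB : ∀ x, ‖g x‖ ≤ B) (a b : ℝ) : IntervalIntegrable g volume a b := by
  have : IntervalIntegrable (fun _ : ℝ => B) volume a b := by simp
  exact this.mono_fun' hg.aestronglyMeasurable (Eventually.of_forall hB)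

/-- Splitting `[0,1]` into `|a|` periods of the character, on each of which it has mean `0`,
bounds the Fourier coefficient by the total variation over `|a|`. -/
lemma norm_fc_le {f : ℝ → ℝ} (hf_meas : Measurable f) (hf_per : ∀ x, f (x + 1) = f x)
    (hf_bv : BoundedVariationOn f (Set.Icc 0 1)) (m : ℕ) (hm : 0 < m) (a : ℤ)
    (ha : a.natAbs = m) :
    ‖fc f a‖ ≤ (eVariationOn f (Set.Icc 0 1)).toReal / m := by
  obtain ⟨B, hB0, hB⟩ := bounded_of_bv hf_per hf_bv
  have ha0 : a ≠ 0 := by rintro rfl; simp at ha; omega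
  have hm' : (0:ℝ) < m := by exact_mod_cast hm
  set I : ℕ → ℝ := fun i => (i:ℝ) / m with hI
  have hImono : Monotone I := fun i j hij => by
    simp only [hI]; gcongr
  have hI0 : I 0 = 0 := by simp [hI]
  have hIm : I m = 1 := by simp [hI, hm'.ne']
  have hvar := eVariationOn.sum' f hImono (n := m)
  rw [hI0, hIm] at hvar
  have hfin : ∀ i ∈ Finset.range m, eVariationOn f (Set.Icc (I i) (I (i+1))) ≠ ⊤ := by
    intro i hi
    refine ne_top_of_le_ne_top hf_bv ?_
    rw [← hvar]
    exact Finset.single_le_sum (f := fun i => eVariationOn f (Set.Icc (I i) (I (i+1))))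
      (fun _ _ => zero_le) hi
  have hgm : Measurable fun x => (f x : ℂ) * ee (-a) x :=
    (Complex.measurable_ofReal.comp hf_meas).mul (continuous_ee _).measurable
  have hgB : ∀ x, ‖(f x : ℂ) * ee (-a) x‖ ≤ B := fun x => by
    rw [norm_mul, norm_ee, mul_one, Complex.norm_real]; exact hB x
  have hsplit : fc f a = ∑ i ∈ Finset.range m, ∫ x in (I i)..(I (i+1)), (f x : ℂ) * ee (-a) x := by
    rw [intervalIntegral.sum_integral_adjacent_intervals, hI0, hIm, fc, integral_U]
    intro k _
    exact intervalIntegrable_of_bdd hgm hgB _ _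
  have hpiece : ∀ i ∈ Finset.range m, ‖∫ x in (I i)..(I (i+1)), (f x : ℂ) * ee (-a) x‖
      ≤ (eVariationOn f (Set.Icc (I i) (I (i+1)))).toReal * (1 / m) := by
    intro i hi
    have hstep : I (i+1) - I i = 1 / m := by simp only [hI]; push_cast; ring
    have hper : ee (-a) (I i) = ee (-a) (I (i+1)) := by
      simp only [ee, hI]
      rw [eq_comm, Complex.exp_eq_exp_iff_exists_int]
      rcases Int.natAbs_eq a with h | h
      · refine ⟨-1, ?_⟩
        rw [h, ha]; push_cast
        have : (m:ℂ) ≠ 0 := by exact_mod_cast hm.ne'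
        field_simp
        ring
      · refine ⟨1, ?_⟩
        rw [h, ha]; push_cast
        have : (m:ℂ) ≠ 0 := by exact_mod_cast hm.ne'
        field_simp
    have hz := intervalIntegral_ee_period (-a) (by simpa using ha0) _ _ hper
    have heq : ∫ x in (I i)..(I (i+1)), (f x : ℂ) * ee (-a) x
        = ∫ x in (I i)..(I (i+1)), ((f x : ℂ) - f (I i)) * ee (-a) x := by
      simp_rw [sub_mul]
      rw [intervalIntegral.integral_sub (intervalIntegrable_of_bdd hgm hgB _ _),
        intervalIntegral.integral_const_mul, hz, mul_zero, sub_zero]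
      exact ((continuous_ee _).const_mul _ |>.intervalIntegrable _ _)
    rw [heq]
    have := intervalIntegral.norm_integral_le_of_norm_le_const (a := I i) (b := I (i+1))
      (C := (eVariationOn f (Set.Icc (I i) (I (i+1)))).toReal)
      (f := fun x => ((f x : ℂ) - f (I i)) * ee (-a) x) ?_
    · rwa [hstep, abs_of_nonneg (by positivity)] at this
    · intro x hx
      rw [Set.uIoc_of_le (hImono (Nat.le_succ i))] at hx
      rw [norm_mul, norm_ee, mul_one, ← Complex.ofReal_sub, Complex.norm_real]
      have hb : BoundedVariationOn f (Set.Icc (I i) (I (i+1))) := hfin i hi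
      exact hb.dist_le (x := x) (y := I i) ⟨hx.1.le, hx.2⟩ ⟨le_rfl, hImono (Nat.le_succ i)⟩
  rw [hsplit]
  refine (norm_sum_le _ _).trans ((Finset.sum_le_sum hpiece).trans ?_)
  rw [← Finset.sum_mul, ← ENNReal.toReal_sum hfin, hvar]
  exact le_of_eq (by ring)

/-- Symmetric partial sums of the Fourier series of a function of bounded variation:
they are bounded by a logarithm, and converge in `L²` at rate `R^{-1/2}`. -/
theorem exists_trig_approx {f : ℝ → ℝ} (hf_meas : Measurable f) (hf_per : ∀ x, f (x + 1) = f x)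
    (hf_int : ∫ x in (0:ℝ)..1, f x = 0)
    (hf_bv : BoundedVariationOn f (Set.Icc 0 1)) :
    ∃ C : ℝ, 0 < C ∧ ∀ R : ℕ, 0 < R → ∃ (w : ℤ → ℂ) (T : ℝ → ℝ),
      (∀ x, (T x : ℂ) = ∑ a ∈ Finset.Icc (-(R:ℤ)) R, w a * ee a x) ∧
      (∀ x, |T x| ≤ C * (1 + Real.log R)) ∧
      ∫ x, T x ∂U = 0 ∧
      ∫ x, T x ^ 2 ∂U ≤ ∫ x, f x ^ 2 ∂U ∧
      ∫ x, (f x - T x) ^ 2 ∂U ≤ C / R ∧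
      ∫ x, f x ^ 2 ∂U - ∫ x, T x ^ 2 ∂U ≤ C / R := by
  obtain ⟨B, hB0, hB⟩ := bounded_of_bv hf_per hf_bv
  set V := (eVariationOn f (Set.Icc 0 1)).toReal with hV
  have hV0 : 0 ≤ V := ENNReal.toReal_nonneg
  have hfc : ∀ m : ℕ, ‖fc f (m+1)‖ ≤ V / (m+1) ∧ ‖fc f (-(m+1))‖ ≤ V / (m+1) := by
    intro m
    have h1 := norm_fc_le hf_meas hf_per hf_bv (m+1) m.succ_pos ((m:ℤ)+1) (by omega)
    have h2 := norm_fc_le hf_meas hf_per hf_bv (m+1) m.succ_pos (-((m:ℤ)+1)) (by omega)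
    push_cast at h1 h2
    exact ⟨h1, h2⟩
  have hfc0 : fc f 0 = 0 := by
    rw [fc]; simp only [neg_zero, ee_zero, mul_one]
    rw [integral_complex_ofReal, integral_U, hf_int]; simp
  have hconj : ∀ a, (starRingEnd ℂ) (fc f a) = fc f (-a) := by
    intro a
    rw [fc, fc, ← integral_conj]
    congr 1; ext x
    rw [map_mul, Complex.conj_ofReal, ← ee_neg]
  have hfU : Integrable f U := integrable_of_bdd hf_meas.aestronglyMeasurable hB
  have hpars : HasSum (fun a => ‖fc f a‖ ^ 2) (∫ x, f x ^ 2 ∂U) := by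
    have hL2 : MemLp (fun x => (f x : ℂ)) 2 (volume.restrict (Set.Ioc 0 1)) := by
      apply MemLp.of_bound (Complex.measurable_ofReal.comp hf_meas).aestronglyMeasurable B
      exact Eventually.of_forall fun x => by
        rw [Function.comp_apply, Complex.norm_real]; exact hB x
    have := hasSum_sq_fourierCoeffOn (zero_lt_one) hL2
    convert this using 1
    · ext a
      rw [fourierCoeffOn_eq_integral, fc, integral_U]
      congr 2
      simp only [sub_zero, ne_eq, one_ne_zero, not_false_eq_true, div_self, smul_eq_mul, one_smul]
      congr 1; ext x
      rw [mul_comm]; congr 1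
      rw [fourier_coe_apply, ee]
      congr 1; push_cast; simp; ring
    · simp [integral_U]
  have hpart : ∀ R : ℕ, 0 < R → ∀ k : ℕ, ∑ a ∈ Finset.Icc (-((R+k:ℕ):ℤ)) ((R+k:ℕ):ℤ), ‖fc f a‖ ^ 2 ≤
      ∑ a ∈ Finset.Icc (-(R:ℤ)) R, ‖fc f a‖ ^ 2 + 2 * V ^ 2 * (1 / R - 1 / (R + k)) := by
    intro R hR k
    have hR' : (0:ℝ) < R := by exact_mod_cast hR
    induction k with
    | zero => simp
    | succ k ih =>
      rw [sum_Icc_neg] at ih ⊢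
      rw [← add_assoc, Finset.sum_range_succ]
      have h1 := (hfc (R+k)).1
      have h2 := (hfc (R+k)).2
      push_cast at h1 h2 ih ⊢
      have h3 := pow_le_pow_left₀ (norm_nonneg _) h1 2
      have h4 := pow_le_pow_left₀ (norm_nonneg _) h2 2
      have h5 : (V / (R + k + 1)) ^ 2 ≤ V ^ 2 * (1 / (R + k) - 1 / (R + (k + 1))) := by
        rw [div_pow, div_eq_mul_inv]
        apply mul_le_mul_of_nonneg_left _ (by positivity)
        rw [div_sub_div _ _ (by positivity) (by positivity), ← one_div]
        rw [div_le_div_iff₀ (by positivity) (by positivity)]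
        have : (0:ℝ) ≤ k := by positivity
        nlinarith
      linarith
  have htail : ∀ R : ℕ, 0 < R → ∫ x, f x ^ 2 ∂U ≤
      ∑ a ∈ Finset.Icc (-(R:ℤ)) R, ‖fc f a‖ ^ 2 + 2 * V ^ 2 / R := by
    intro R hR
    refine hasSum_le_of_sum_le hpars fun s => ?_
    obtain ⟨k, hk⟩ : ∃ k : ℕ, s ⊆ Finset.Icc (-((R+k:ℕ):ℤ)) ((R+k:ℕ):ℤ) := by
      refine ⟨s.sup Int.natAbs, fun a ha => ?_⟩
      have := Finset.le_sup (f := Int.natAbs) ha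
      rw [Finset.mem_Icc]; omega
    refine (Finset.sum_le_sum_of_subset_of_nonneg hk (fun _ _ _ => by positivity)).trans
      ((hpart R hR k).trans ?_)
    have : (0:ℝ) ≤ 1 / (R + k) := by positivity
    have h2 : 0 ≤ 2 * V ^ 2 * (1 / ((R:ℝ) + k)) := by positivity
    have : 2 * V ^ 2 / (R:ℝ) = 2 * V ^ 2 * (1 / R) := by ring
    rw [this]; linarith
  refine ⟨2 * V ^ 2 + 2 * V + 1, by positivity, fun R hR => ?_⟩
  set A := Finset.Icc (-(R:ℤ)) R with hA
  have hAneg : ∀ a, a ∈ A → -a ∈ A := by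
    intro a; simp only [hA, Finset.mem_Icc]; omega
  set Tc : ℝ → ℂ := fun x => ∑ a ∈ A, fc f a * ee a x with hTc
  have hreal : ∀ x, (((Tc x).re : ℝ) : ℂ) = Tc x := by
    intro x
    rw [← Complex.conj_eq_iff_re, hTc]
    simp only [map_sum, map_mul, hconj, ← ee_neg]
    exact Finset.sum_nbij' (fun a => -a) (fun a => -a) hAneg hAneg (by simp) (by simp) (by simp)
  have hTcont : Continuous Tc := by
    apply continuous_finsetSum; intro a _; exact (continuous_ee a).const_mul _
  have hTbd : ∀ x, ‖Tc x‖ ≤ 2 * V * (1 + Real.log R) := by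
    intro x
    calc ‖Tc x‖ ≤ ∑ a ∈ A, ‖fc f a‖ := by
          refine (norm_sum_le _ _).trans (Finset.sum_le_sum fun a _ => ?_)
          rw [norm_mul, norm_ee, mul_one]
      _ ≤ ∑ m ∈ Finset.range R, 2 * V * ((m:ℝ) + 1)⁻¹ := by
          rw [hA, sum_Icc_neg, hfc0, norm_zero, zero_add]
          refine Finset.sum_le_sum fun m _ => ?_
          have := hfc m
          have e : V / ((m:ℝ)+1) = V * ((m:ℝ) + 1)⁻¹ := by ring
          rw [e] at this
          linarith [this.1, this.2]
      _ ≤ _ := by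
          rw [← Finset.mul_sum]
          refine mul_le_mul_of_nonneg_left ?_ (by positivity)
          have := harmonic_le_one_add_log R
          rw [harmonic] at this
          push_cast at this
          exact this
  set T : ℝ → ℝ := fun x => (Tc x).re with hT
  have hTm : Continuous T := Complex.continuous_re.comp hTcont
  have hTb' : ∀ x, |T x| ≤ 2 * V * (1 + Real.log R) := fun x =>
    (Complex.abs_re_le_norm _).trans (hTbd x)
  have hee : ∀ (a : ℤ), Integrable (ee a) U := fun a =>
    integrable_of_bdd (continuous_ee a).aestronglyMeasurable (fun x => (norm_ee a x).le)
  have hint : ∀ (g : ℝ → ℂ), Integrable g U → ∀ a, Integrable (fun x => g x * ee a x) U := by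
    intro g hg a
    exact hg.mul_bdd (c := 1) (continuous_ee a).aestronglyMeasurable
      (Eventually.of_forall fun x => (norm_ee a x).le)
  have hmulT : ∀ (g : ℝ → ℂ), Integrable g U → ∫ x, g x * Tc x ∂U
      = ∑ a ∈ A, fc f a * ∫ x, g x * ee a x ∂U := by
    intro g hg
    simp only [hTc, Finset.mul_sum]
    rw [integral_finsetSum]
    · refine Finset.sum_congr rfl fun a _ => ?_
      rw [← integral_const_mul]; congr 1; ext x; ring
    · intro a _
      have := (hint g hg a).const_mul (fc f a)
      refine this.congr (Eventually.of_forall fun x => ?_)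
      simp only []; ring
  have hTcI : Integrable Tc U := integrable_of_bdd hTcont.aestronglyMeasurable hTbd
  have hTee : ∀ b ∈ A, ∫ x, Tc x * ee b x ∂U = fc f (-b) := by
    intro b hb
    have := hmulT (ee b) (hee b)
    simp_rw [mul_comm (Tc _) _]
    rw [this]
    simp_rw [← ee_add, integral_ee]
    rw [Finset.sum_eq_single (-b)]
    · simp
    · intro a _ ha; rw [if_neg (by intro h; apply ha; omega)]; simp
    · intro h; exact absurd (hAneg b hb) h
  have hnorm : ∀ a, fc f a * fc f (-a) = ((‖fc f a‖ ^ 2 : ℝ) : ℂ) := by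
    intro a
    rw [← hconj, Complex.mul_conj, Complex.normSq_eq_norm_sq]
  have hTT : ∫ x, T x ^ 2 ∂U = ∑ a ∈ A, ‖fc f a‖ ^ 2 := by
    have h := hmulT Tc hTcI
    rw [Finset.sum_congr rfl (fun b hb => by rw [hTee b hb, hnorm]), ← Complex.ofReal_sum] at h
    rw [← Complex.ofReal_inj, ← h, ← integral_complex_ofReal]
    congr 1; ext x
    rw [← hreal x]; push_cast; ring
  have hfT : ∫ x, f x * T x ∂U = ∑ a ∈ A, ‖fc f a‖ ^ 2 := by
    have h := hmulT (fun x => (f x : ℂ)) hfU.ofReal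
    have h2 : ∀ b, ∫ x, (f x : ℂ) * ee b x ∂U = fc f (-b) := fun b => by rw [fc, neg_neg]
    simp_rw [h2, hnorm] at h
    rw [← Complex.ofReal_sum] at h
    rw [← Complex.ofReal_inj, ← h, ← integral_complex_ofReal]
    congr 1; ext x
    rw [← hreal x]; push_cast; ring
  have hff : Integrable (fun x => f x ^ 2) U :=
    integrable_of_bdd (hf_meas.pow_const 2).aestronglyMeasurable (B := B ^ 2) (fun x => by
      rw [norm_pow]; exact pow_le_pow_left₀ (norm_nonneg _) (hB x) 2)
  have hTTi : Integrable (fun x => T x ^ 2) U :=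
    integrable_of_bdd (hTm.pow 2).aestronglyMeasurable (B := (2 * V * (1 + Real.log R)) ^ 2)
      (fun x => by rw [norm_pow]; exact pow_le_pow_left₀ (norm_nonneg _) (hTb' x) 2)
  have hfTi : Integrable (fun x => f x * T x) U :=
    hfU.mul_bdd hTm.aestronglyMeasurable (Eventually.of_forall hTb')
  have hsq : ∫ x, (f x - T x) ^ 2 ∂U = ∫ x, f x ^ 2 ∂U - ∑ a ∈ A, ‖fc f a‖ ^ 2 := by
    have : ∀ x, (f x - T x) ^ 2 = f x ^ 2 - 2 * (f x * T x) + T x ^ 2 := fun x => by ring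
    simp_rw [this]
    have h1 := integral_add (hff.sub (hfTi.const_mul 2)) hTTi
    have h2 := integral_sub hff (hfTi.const_mul 2)
    simp only [Pi.sub_apply] at h1
    rw [h1, h2, integral_const_mul, hfT, hTT]
    ring
  have htl := htail R hR
  have hR' : (0:ℝ) < R := by exact_mod_cast hR
  have hlog : 0 ≤ 1 + Real.log R := by
    have := Real.log_natCast_nonneg R; linarith
  have hCR : 2 * V ^ 2 / R ≤ (2 * V ^ 2 + 2 * V + 1) / R := by gcongr; linarith
  refine ⟨fc f, T, fun x => hreal x, fun x => (hTb' x).trans ?_, ?_, ?_, ?_, ?_⟩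
  · gcongr; nlinarith
  · rw [← Complex.ofReal_inj, ← integral_complex_ofReal]
    have h := hTee 0 (by simp [hA])
    simp only [ee_zero, mul_one, neg_zero, hfc0] at h
    rw [Complex.ofReal_zero, ← h]
    congr 1; ext x; exact hreal x
  · rw [hTT]; exact sum_le_hasSum _ (fun _ _ => by positivity) hpars
  · rw [hsq]; linarith
  · rw [hTT]; linarith

end LIL

/-! ### Diophantine relations and moments -/

namespace LIL

/-- Moments of a finite linear combination, expanded into mixed moments. -/
lemma integral_sum_pow {Ω β : Type*} [MeasurableSpace Ω] (μ : Measure Ω) [IsFiniteMeasure μ]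
    [DecidableEq β]
    (S : Finset β) (b : β → ℂ) (E : β → Ω → ℂ) (hE : ∀ p, Measurable (E p))
    (hB : ∀ p x, ‖E p x‖ ≤ 1) (m : ℕ) :
    ∫ x, (∑ p ∈ S, b p * E p x) ^ m ∂μ =
      ∑ τ ∈ Fintype.piFinset (fun _ : Fin m => S),
        (∏ i, b (τ i)) * ∫ x, ∏ i, E (τ i) x ∂μ := by
  have h : ∀ x, (∑ p ∈ S, b p * E p x) ^ m =
      ∑ τ ∈ Fintype.piFinset (fun _ : Fin m => S), (∏ i, b (τ i)) * ∏ i, E (τ i) x := by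
    intro x
    have := Finset.prod_univ_sum (fun _ : Fin m => S) (fun _ p => b p * E p x)
    rw [Finset.prod_const, Finset.card_univ, Fintype.card_fin] at this
    rw [this]
    exact Finset.sum_congr rfl fun τ _ => Finset.prod_mul_distrib
  simp_rw [h]
  rw [integral_finsetSum]
  · exact Finset.sum_congr rfl fun τ _ => integral_const_mul _ _
  · intro τ _
    apply Integrable.const_mul
    apply integrable_of_bdd (B := 1)
    · exact (Finset.measurable_prod _ fun i _ => hE (τ i)).aestronglyMeasurable
    · intro x
      rw [norm_prod]
      exact Finset.prod_le_one (fun _ _ => norm_nonneg _) (fun i _ => hB _ _)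

/-- If the frequencies `ν` satisfy only trivial relations of length `m` with coefficients in the
spectrum of `T`, then the `m`-th moments of `∑ c_k T(ν_k x)` are those of `∑ c_k T(u_k)` with
independent uniform `u_k`. -/
theorem moments_match {ι : Type*} [Fintype ι] [DecidableEq ι] (ν : ι → ℕ) (A : Finset ℤ)
    (w : ℤ → ℂ) (T : ℝ → ℝ) (hT : ∀ x, (T x : ℂ) = ∑ a ∈ A, w a * ee a x) (m : ℕ)
    (hrel : ∀ (κ : Fin m → ι) (a : Fin m → ℤ), (∀ i, a i ∈ A) →
      ∑ i, a i * (ν (κ i) : ℤ) = 0 → ∀ k, ∑ i with κ i = k, a i = 0) (c : ι → ℝ) :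
    ∫ x, (∑ k, c k * T (ν k * x)) ^ m ∂U =
      ∫ u, (∑ k, c k * T (u k)) ^ m ∂(Measure.pi fun _ : ι => U) := by
  rw [← Complex.ofReal_inj, ← integral_complex_ofReal, ← integral_complex_ofReal]
  have e1 : ∀ (y : ι → ℝ), (((∑ k, c k * T (y k)) ^ m : ℝ) : ℂ) =
      (∑ p ∈ Finset.univ ×ˢ A, (c p.1 * w p.2) * ee p.2 (y p.1)) ^ m := by
    intro y
    push_cast
    congr 1
    rw [Finset.sum_product]
    refine Finset.sum_congr rfl fun k _ => ?_
    rw [hT, Finset.mul_sum]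
    exact Finset.sum_congr rfl fun a _ => by ring
  have e2 := fun x : ℝ => e1 (fun k => ν k * x)
  simp only [e2, e1]
  rw [integral_sum_pow U _ (fun p : ι × ℤ => (c p.1 : ℂ) * w p.2)
      (fun p x => ee p.2 (ν p.1 * x))
      (fun p => ((continuous_ee _).comp (continuous_const.mul continuous_id)).measurable)
      (fun p x => (norm_ee _ _).le),
    integral_sum_pow (Measure.pi fun _ : ι => U) _ (fun p : ι × ℤ => (c p.1 : ℂ) * w p.2)
      (fun p x => ee p.2 (x p.1))
      (fun p => (continuous_ee _).measurable.comp (measurable_pi_apply _))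
      (fun p x => (norm_ee _ _).le)]
  refine Finset.sum_congr rfl fun τ hτ => ?_
  congr 1
  have hτA : ∀ i, (τ i).2 ∈ A := by
    intro i
    have := Fintype.mem_piFinset.mp hτ i
    exact (Finset.mem_product.mp this).2
  have L : ∫ x, ∏ i, ee (τ i).2 (ν (τ i).1 * x) ∂U
      = if ∑ i, (τ i).2 * (ν (τ i).1 : ℤ) = 0 then 1 else 0 := by
    simp_rw [ee_mul_nat, ← ee_sum, integral_ee]
  have Rr : ∫ u : ι → ℝ, ∏ i, ee (τ i).2 (u (τ i).1) ∂(Measure.pi fun _ : ι => U)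
      = ∏ k, if ∑ i with (τ i).1 = k, (τ i).2 = 0 then 1 else 0 := by
    have : ∀ u : ι → ℝ, ∏ i, ee (τ i).2 (u (τ i).1) =
        ∏ k, ee (∑ i with (τ i).1 = k, (τ i).2) (u k) := by
      intro u
      rw [← Finset.prod_fiberwise Finset.univ (fun i => (τ i).1)]
      refine Finset.prod_congr rfl fun k _ => ?_
      rw [ee_sum]
      refine Finset.prod_congr rfl fun i hi => ?_
      rw [(Finset.mem_filter.mp hi).2]
    simp_rw [this]
    rw [integral_fintype_prod_eq_prod (𝕜 := ℂ)
      (f := fun k x => ee (∑ i with (τ i).1 = k, (τ i).2) x)]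
    simp_rw [integral_ee]
  rw [L, Rr]
  split_ifs with h
  · have := hrel (fun i => (τ i).1) (fun i => (τ i).2) hτA h
    simp [this]
  · have hne : ∃ k, ∑ i with (τ i).1 = k, (τ i).2 ≠ 0 := by
      by_contra hcon
      push Not at hcon
      apply h
      rw [← Finset.sum_fiberwise Finset.univ (fun i => (τ i).1)]
      refine Finset.sum_eq_zero fun k _ => ?_
      have : ∑ i with (τ i).1 = k, (τ i).2 * (ν (τ i).1 : ℤ)
          = (∑ i with (τ i).1 = k, (τ i).2) * (ν k : ℤ) := by
        rw [Finset.sum_mul]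
        exact Finset.sum_congr rfl fun i hi => by rw [(Finset.mem_filter.mp hi).2]
      rw [this, hcon k, zero_mul]
    obtain ⟨k, hk⟩ := hne
    exact (Finset.prod_eq_zero (Finset.mem_univ k) (by simp [hk])).symm

/-- Condition `A_ω` rules out nontrivial relations among indices outside the `N` smallest. -/
lemma relation_trivial {ω : ℕ → ℝ} {n : ℕ → ℕ} (hn_pos : ∀ k, 0 < n k) {N₀ N : ℕ}
    (hA : CondAWith ω n N₀) (hN : N₀ ≤ N) (I : Finset ℕ) (hI : ∀ k ∈ I, ¬ AmongSmallest n N k)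
    (m R : ℕ) (hm : (m : ℝ) ≤ ω N) (hR : (m * R : ℝ) ≤ (N : ℝ) ^ ω N)
    (κ : Fin m → I) (a : Fin m → ℤ) (ha : ∀ i, a i ∈ Finset.Icc (-(R:ℤ)) R)
    (h0 : ∑ i, a i * (n (κ i) : ℤ) = 0) (k : I) : ∑ i with κ i = k, a i = 0 := by
  classical
  set b : I → ℤ := fun k => ∑ i with κ i = k, a i with hb
  set S : Finset I := Finset.univ.filter (fun k => b k ≠ 0) with hS
  have hsum : ∑ k ∈ S, b k * (n k : ℤ) = 0 := by
    rw [Finset.sum_filter_of_ne (fun k _ h => left_ne_zero_of_mul h), ← h0,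
      ← Finset.sum_fiberwise Finset.univ κ]
    refine Finset.sum_congr rfl fun k _ => ?_
    rw [hb, Finset.sum_mul]
    exact Finset.sum_congr rfl fun i hi => by rw [(Finset.mem_filter.mp hi).2]
  by_contra hk
  have hkS : k ∈ S := by simp [hS, hb, hk]
  have hcard : S.card ≤ m := by
    have hsub : S ⊆ Finset.univ.image κ := by
      intro k hk
      have : b k ≠ 0 := (Finset.mem_filter.mp hk).2
      obtain ⟨i, hi, _⟩ := Finset.exists_ne_zero_of_sum_ne_zero this
      exact Finset.mem_image.mpr ⟨i, Finset.mem_univ _, (Finset.mem_filter.mp hi).2⟩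
    calc S.card ≤ (Finset.univ.image κ).card := Finset.card_le_card hsub
      _ ≤ _ := Finset.card_image_le.trans (by simp)
  have hbound : ∀ k, (|b k| : ℝ) ≤ (N:ℝ) ^ ω N := by
    intro k
    refine le_trans ?_ hR
    have h1 : |b k| ≤ (m * R : ℤ) := by
      calc |b k| ≤ ∑ i with κ i = k, |a i| := Finset.abs_sum_le_sum_abs _ _
        _ ≤ ∑ i, |a i| := Finset.sum_le_univ_sum_of_nonneg (fun _ => abs_nonneg _)
        _ ≤ ∑ i : Fin m, (R:ℤ) := Finset.sum_le_sum fun i _ => by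
            have := Finset.mem_Icc.mp (ha i); exact abs_le.mpr this
        _ = _ := by simp
    exact_mod_cast h1
  rcases Nat.lt_or_ge S.card 2 with h2 | h2
  · have h1 : S.card = 1 := by
      have := Finset.card_pos.mpr ⟨k, hkS⟩; omega
    obtain ⟨k', hk'⟩ := Finset.card_eq_one.mp h1
    rw [hk', Finset.sum_singleton] at hsum
    have : b k' ≠ 0 := (Finset.mem_filter.mp (hk' ▸ Finset.mem_singleton_self k' : k' ∈ S)).2
    have hnk := hn_pos k'
    rcases mul_eq_zero.mp hsum with h | h
    · exact this h
    · have : n k' = 0 := by exact_mod_cast h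
      omega
  · set e := S.equivFin.symm
    have := hA N hN S.card (fun i => ((e i : I) : ℕ)) (fun i => b (e i)) h2
      ((by exact_mod_cast hcard : (S.card:ℝ) ≤ m).trans hm)
      (fun i j hij => e.injective (Subtype.ext (Subtype.ext hij)))
      (fun i => (Finset.mem_filter.mp (e i).2).2) (fun i => hbound _) ?_
      (e.symm ⟨k, hkS⟩)
    · simp only [Equiv.apply_symm_apply] at this
      exact hI k k.2 this
    · rw [← hsum, ← Finset.sum_coe_sort S]
      exact Equiv.sum_comp e (fun k : S => b k * (n k : ℤ))

/-- At most `N` indices are among the `N` smallest. -/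
lemma card_amongSmallest {n : ℕ → ℕ} (hn_inj : Function.Injective n) (N : ℕ) (s : Finset ℕ)
    (hs : ∀ k ∈ s, AmongSmallest n N k) : s.card ≤ N := by
  rcases s.eq_empty_or_nonempty with rfl | hne
  · simp
  obtain ⟨k, hk, hmax⟩ := s.exists_max_image n hne
  have hfin : {j : ℕ | n j ≤ n k}.Finite :=
    (Set.finite_Iic (n k)).preimage hn_inj.injOn
  have h1 : (s : Set ℕ) ⊆ {j : ℕ | n j ≤ n k} := fun j hj => hmax j hj
  have h2 := Set.ncard_le_ncard h1 hfin
  rw [Set.ncard_coe_finset] at h2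
  exact h2.trans (hs k hk)

end LIL

/-! ### Moments and characteristic functions of independent sums -/

namespace LIL

lemma exp_le_quadratic {x ε : ℝ} (hx : |x| ≤ ε) (hε : ε ≤ 1) :
    exp x ≤ 1 + x + x ^ 2 / 2 * (1 + ε) := by
  have h := Real.exp_bound (hx.trans hε) (n := 3) (by norm_num)
  simp only [Finset.sum_range_succ, Finset.sum_range_zero, Nat.factorial] at h
  norm_num at h
  have h2 := (abs_le.1 h).2
  have h3 : |x| ^ 3 = x ^ 2 * |x| := by rw [pow_succ, sq_abs]
  rw [h3] at h2
  have h4 : x ^ 2 * |x| ≤ x ^ 2 * ε := mul_le_mul_of_nonneg_left hx (sq_nonneg x)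
  have h5 : 0 ≤ x ^ 2 * |x| := by positivity
  nlinarith

/-- Sub-Gaussian bound for the Laplace transform of a small multiple of a centred bounded `T`. -/
lemma mgf_le {T : ℝ → ℝ} (hTm : Measurable T) {K v ε s : ℝ} (hK : ∀ x, |T x| ≤ K)
    (h0 : ∫ x, T x ∂U = 0) (hv : ∫ x, T x ^ 2 ∂U ≤ v) (hs : |s| * K ≤ ε) (hε : ε ≤ 1) :
    ∫ x, exp (s * T x) ∂U ≤ exp (s ^ 2 * (v * (1 + ε)) / 2) := by
  have hsT : ∀ x, |s * T x| ≤ ε := fun x => by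
    rw [abs_mul]; exact (mul_le_mul_of_nonneg_left (hK x) (abs_nonneg s)).trans hs
  have hε0 : 0 ≤ ε := (abs_nonneg _).trans (hsT 0)
  have i1 : Integrable T U := integrable_of_bdd hTm.aestronglyMeasurable (B := K) hK
  have i2 : Integrable (fun x => T x ^ 2) U :=
    integrable_of_bdd (hTm.pow_const 2).aestronglyMeasurable (B := K ^ 2) fun x => by
      rw [norm_pow]; exact pow_le_pow_left₀ (norm_nonneg _) (hK x) 2
  have i3 : Integrable (fun x => exp (s * T x)) U :=
    integrable_of_bdd (by fun_prop) (B := exp 1) fun x => by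
      rw [Real.norm_eq_abs, Real.abs_exp]
      exact exp_le_exp.2 ((le_abs_self _).trans ((hsT x).trans hε))
  calc ∫ x, exp (s * T x) ∂U
      ≤ ∫ x, (1 + (s * T x + (s ^ 2 * (1 + ε) / 2) * T x ^ 2)) ∂U := by
        refine integral_mono i3 (by fun_prop) fun x => ?_
        have := exp_le_quadratic (hsT x) hε
        show exp (s * T x) ≤ _
        nlinarith
    _ = 1 + (s ^ 2 * (1 + ε) / 2) * ∫ x, T x ^ 2 ∂U := by
        rw [integral_add (by fun_prop) (by fun_prop), integral_add (by fun_prop) (by fun_prop),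
          integral_const_mul, integral_const_mul, h0]
        simp
    _ ≤ 1 + (s ^ 2 * (1 + ε) / 2) * v := by gcongr
    _ ≤ _ := by
        have := Real.add_one_le_exp ((s ^ 2 * (1 + ε) / 2) * v)
        have e : s ^ 2 * (v * (1 + ε)) / 2 = (s ^ 2 * (1 + ε) / 2) * v := by ring
        rw [e]; linarith

lemma pi_mgf_le {ι : Type*} [Fintype ι] {T : ℝ → ℝ} (hTm : Measurable T) {K v ε : ℝ}
    (hK : ∀ x, |T x| ≤ K) (h0 : ∫ x, T x ∂U = 0) (hv : ∫ x, T x ^ 2 ∂U ≤ v) (hε : ε ≤ 1)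
    (s : ι → ℝ) (hs : ∀ k, |s k| * K ≤ ε) :
    ∫ u, exp (∑ k, s k * T (u k)) ∂(Measure.pi fun _ : ι => U) ≤
      exp ((∑ k, s k ^ 2) * (v * (1 + ε)) / 2) := by
  simp_rw [Real.exp_sum]
  rw [integral_fintype_prod_eq_prod (fun k (x : ℝ) => exp (s k * T x)), Finset.sum_mul,
    Finset.sum_div, Real.exp_sum]
  exact Finset.prod_le_prod (fun k _ => integral_nonneg fun x => (exp_pos _).le)
    fun k _ => mgf_le hTm hK h0 hv (hs k) hε

lemma pow_le_exp {u : ℝ} (hu : 0 ≤ u) {n : ℕ} (hn : 0 < n) :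
    u ^ n ≤ (n : ℝ) ^ n * exp (-n) * exp u := by
  have hn' : (0:ℝ) < n := by exact_mod_cast hn
  have h1 : u / n ≤ exp (u / n - 1) := by
    have := Real.add_one_le_exp (u / n - 1); linarith
  have h2 : (u / n) ^ n ≤ exp (u / n - 1) ^ n := pow_le_pow_left₀ (by positivity) h1 n
  rw [← Real.exp_nat_mul, div_pow, div_le_iff₀ (by positivity)] at h2
  have e : (n : ℝ) * (u / n - 1) = -n + u := by field_simp; ring
  rw [e, Real.exp_add] at h2
  linarith

lemma abs_sum_le_of_bdd {ι : Type*} (S : Finset ι) (c : ι → ℝ) {T : ℝ → ℝ} {K : ℝ}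
    (hK : ∀ x, |T x| ≤ K) (y : ι → ℝ) :
    |∑ k ∈ S, c k * T (y k)| ≤ ∑ k ∈ S, |c k| * K := by
  refine (Finset.abs_sum_le_sum_abs _ _).trans (Finset.sum_le_sum fun k _ => ?_)
  rw [abs_mul]; exact mul_le_mul_of_nonneg_left (hK _) (abs_nonneg _)

lemma measurable_lin {ι : Type*} [Fintype ι] (c : ι → ℝ) {T : ℝ → ℝ} (hT : Measurable T) :
    Measurable fun u : ι → ℝ => ∑ k, c k * T (u k) :=
  Finset.measurable_fun_sum _ fun k _ => (hT.comp (measurable_pi_apply k)).const_mul _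

/-- Gaussian-type bound for even moments of linear combinations of independent copies,
obtained from `y ^ (2p) ≤ (2p / (eλ)) ^ (2p) (e ^ (λy) + e ^ (-λy))` with the optimal
`λ = √(2p / (s2 V))`. -/
lemma pi_moment_le {ι : Type*} [Fintype ι] {T : ℝ → ℝ} (hTm : Measurable T) {K v ε s2 V : ℝ}
    (hK : ∀ x, |T x| ≤ K) (h0 : ∫ x, T x ∂U = 0) (hv : ∫ x, T x ^ 2 ∂U ≤ v) (hε : ε ≤ 1)
    (hs2 : 0 < s2) (hvs : v * (1 + ε) ≤ s2) (hV : 0 < V) {p : ℕ} (hp : 0 < p)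
    (c : ι → ℝ) (hcV : ∑ k, c k ^ 2 ≤ V) (hc : ∀ k, √(2 * p / (s2 * V)) * |c k| * K ≤ ε) :
    ∫ u, (∑ k, c k * T (u k)) ^ (2 * p) ∂(Measure.pi fun _ : ι => U) ≤
      2 * (2 * p * s2 * V) ^ p * exp (-p) := by
  have hp' : (0:ℝ) < p := by exact_mod_cast hp
  set l := √(2 * p / (s2 * V)) with hl
  have hl2 : l ^ 2 = 2 * p / (s2 * V) := by rw [hl, Real.sq_sqrt (by positivity)]
  have hl0 : 0 < l := by rw [hl]; positivity
  set A : ℝ := ((2 * p : ℕ) : ℝ) ^ (2 * p) * exp (-((2 * p : ℕ) : ℝ)) / l ^ (2 * p) with hA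
  have hA0 : 0 ≤ A := by positivity
  have key : ∀ y : ℝ, y ^ (2 * p) ≤ A * (exp (l * y) + exp (-l * y)) := by
    intro y
    have h1 := pow_le_exp (u := l * |y|) (by positivity) (n := 2 * p) (by omega)
    rw [mul_pow, (even_two_mul p).pow_abs] at h1
    have h2 : exp (l * |y|) ≤ exp (l * y) + exp (-l * y) := by
      rcases abs_cases y with ⟨h, _⟩ | ⟨h, _⟩ <;> rw [h]
      · linarith [exp_pos (-l * y)]
      · rw [mul_neg, ← neg_mul]; linarith [exp_pos (l * y)]
    rw [hA, div_mul_eq_mul_div, le_div_iff₀ (by positivity), mul_comm (y ^ (2 * p))]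
    exact h1.trans (mul_le_mul_of_nonneg_left h2 (by positivity))
  have half : ∀ t : ℝ, |t| = l → Integrable (fun u : ι → ℝ => exp (t * ∑ k, c k * T (u k)))
        (Measure.pi fun _ : ι => U) ∧
      ∫ u, exp (t * ∑ k, c k * T (u k)) ∂(Measure.pi fun _ : ι => U) ≤ exp p := by
    intro t ht
    constructor
    · refine integrable_of_bdd (B := exp (|t| * ∑ k, |c k| * K))
        (((measurable_lin c hTm).const_mul t).exp.aestronglyMeasurable) fun u => ?_
      rw [Real.norm_eq_abs, Real.abs_exp]
      refine exp_le_exp.2 ((le_abs_self _).trans ?_)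
      rw [abs_mul]
      exact mul_le_mul_of_nonneg_left (abs_sum_le_of_bdd _ _ hK _) (abs_nonneg _)
    · have h := pi_mgf_le hTm hK h0 hv hε (fun k => t * c k) (fun k => by
        rw [abs_mul, ht]; exact hc k)
      simp_rw [Finset.mul_sum, ← mul_assoc]
      refine h.trans (exp_le_exp.2 ?_)
      simp_rw [mul_pow]
      rw [← Finset.mul_sum, ← sq_abs t, ht, hl2]
      calc 2 * p / (s2 * V) * (∑ k, c k ^ 2) * (v * (1 + ε)) / 2
          ≤ 2 * p / (s2 * V) * (∑ k, c k ^ 2) * s2 / 2 := by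
            have : (0:ℝ) ≤ ∑ k, c k ^ 2 := Finset.sum_nonneg fun _ _ => sq_nonneg _
            gcongr
        _ ≤ 2 * p / (s2 * V) * V * s2 / 2 := by gcongr
        _ = p := by field_simp
  have hh1 := half l (abs_of_pos hl0)
  have hh2 := half (-l) (by rw [abs_neg, abs_of_pos hl0])
  calc ∫ u, (∑ k, c k * T (u k)) ^ (2 * p) ∂(Measure.pi fun _ : ι => U)
      ≤ ∫ u, A * (exp (l * ∑ k, c k * T (u k)) + exp (-l * ∑ k, c k * T (u k)))
          ∂(Measure.pi fun _ : ι => U) := by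
        refine integral_mono ?_ ((hh1.1.add hh2.1).const_mul A) fun u => key _
        refine integrable_of_bdd (B := (∑ k, |c k| * K) ^ (2 * p))
          ((measurable_lin c hTm).pow_const _).aestronglyMeasurable fun u => ?_
        rw [norm_pow]
        exact pow_le_pow_left₀ (norm_nonneg _) (abs_sum_le_of_bdd _ _ hK _) _
    _ ≤ A * (exp p + exp p) := by
        rw [integral_const_mul, integral_add hh1.1 hh2.1]
        exact mul_le_mul_of_nonneg_left (add_le_add hh1.2 hh2.2) hA0
    _ = _ := by
        have e1 : exp (-((2 * p : ℕ) : ℝ)) * exp p = exp (-p) := by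
          rw [← Real.exp_add]; congr 1; push_cast; ring
        have e2 : ((2 * p : ℕ) : ℝ) ^ (2 * p) / l ^ (2 * p) = (2 * p * s2 * V) ^ p := by
          rw [pow_mul, pow_mul, hl2, ← div_pow]
          congr 1; push_cast; field_simp
        rw [hA, ← e1, ← e2]; ring

/-- Taylor remainder of `t ↦ exp (z t)` for unimodular imaginary `z`. -/
lemma norm_exp_remainder_nonneg {z : ℂ} (hz : ‖z‖ = 1) (hre : z.re = 0) (n : ℕ) :
    ∀ x : ℝ, 0 ≤ x → ‖Complex.exp (z * x) - ∑ m ∈ Finset.range n, (z * x) ^ m / m.factorial‖ ≤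
      x ^ n / n.factorial := by
  induction n with
  | zero =>
    intro x _
    simp [Complex.norm_exp, hre]
  | succ n ih =>
    intro x hx
    have hd : ∀ y : ℝ, HasDerivAt
        (fun y : ℝ => Complex.exp (z * y) -
          ∑ m ∈ Finset.range (n + 1), (z * y) ^ m / m.factorial)
        (z * (Complex.exp (z * y) - ∑ m ∈ Finset.range n, (z * y) ^ m / m.factorial)) y := by
      intro y
      have hzy : HasDerivAt (fun y : ℝ => z * (y : ℂ)) z y := by
        simpa using (Complex.ofRealCLM.hasDerivAt (x := y)).const_mul z
      have h1 : HasDerivAt (fun y : ℝ => Complex.exp (z * y)) (Complex.exp (z * y) * z) y :=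
        (Complex.hasDerivAt_exp _).comp y hzy
      have h2 : HasDerivAt (fun y : ℝ => ∑ m ∈ Finset.range (n + 1), (z * y) ^ m / m.factorial)
          (∑ m ∈ Finset.range n, z * ((z * y) ^ m / m.factorial)) y := by
        simp_rw [Finset.sum_range_succ' _ n]
        simp only [pow_zero]
        apply HasDerivAt.add_const
        apply HasDerivAt.fun_sum
        intro m _
        have h3 := (hzy.fun_pow (m + 1)).div_const ((m + 1).factorial : ℂ)
        refine h3.congr_deriv ?_
        rw [Nat.factorial_succ]
        have : (m.factorial : ℂ) ≠ 0 := by exact_mod_cast m.factorial_ne_zero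
        have : (m + 1 : ℂ) ≠ 0 := by exact_mod_cast m.succ_ne_zero
        push_cast
        field_simp
      refine (h1.sub h2).congr_deriv ?_
      rw [← Finset.mul_sum]; ring
    have hB : ∀ y : ℝ, HasDerivAt (fun y : ℝ => y ^ (n + 1) / (n + 1).factorial)
        (y ^ n / n.factorial) y := by
      intro y
      have h3 := (hasDerivAt_pow (n + 1) y).div_const ((n + 1).factorial : ℝ)
      refine h3.congr_deriv ?_
      rw [Nat.factorial_succ]
      have : (n.factorial : ℝ) ≠ 0 := by exact_mod_cast n.factorial_ne_zero
      push_cast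
      field_simp
    have := image_norm_le_of_norm_deriv_right_le_deriv_boundary (a := 0) (b := x)
      (fun y _ => (hd y).continuousAt.continuousWithinAt)
      (fun y _ => (hd y).hasDerivWithinAt) (B := fun y : ℝ => y ^ (n + 1) / (n + 1).factorial)
      (B' := fun y => y ^ n / n.factorial) (by
        simp [Finset.sum_range_succ'])
      (fun y => hB y) (fun y hy => by
        rw [norm_mul, hz, one_mul]; exact ih y hy.1) (x := x) ⟨hx, le_refl x⟩
    exact this

lemma norm_exp_I_remainder (n : ℕ) (x : ℝ) :
    ‖Complex.exp (x * Complex.I) - ∑ m ∈ Finset.range n, (x * Complex.I) ^ m / m.factorial‖ ≤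
      |x| ^ n / n.factorial := by
  rcases le_total 0 x with h | h
  · have := norm_exp_remainder_nonneg (z := Complex.I) (by simp) (by simp) n x h
    rw [abs_of_nonneg h]; simpa only [mul_comm] using this
  · have := norm_exp_remainder_nonneg (z := -Complex.I) (by simp) (by simp) n (-x) (by linarith)
    rw [abs_of_nonpos h]
    have e : -Complex.I * ((-x : ℝ) : ℂ) = x * Complex.I := by push_cast; ring
    rwa [e] at this

/-- A bounded random variable's characteristic function against its truncated moment series. -/
lemma norm_charFun_sub_moments {Ω : Type*} [MeasurableSpace Ω] {μ : Measure Ω}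
    [IsProbabilityMeasure μ] {X : Ω → ℝ} (hX : Measurable X) {B : ℝ} (hB : ∀ x, |X x| ≤ B)
    (p : ℕ) :
    ‖∫ x, Complex.exp (X x * Complex.I) ∂μ -
      ∑ m ∈ Finset.range (2 * p), Complex.I ^ m / m.factorial * ((∫ x, X x ^ m ∂μ : ℝ) : ℂ)‖ ≤
      (∫ x, X x ^ (2 * p) ∂μ) / (2 * p).factorial := by
  have im : ∀ m, Integrable (fun x => X x ^ m) μ := fun m =>
    integrable_of_bdd (hX.pow_const m).aestronglyMeasurable (B := B ^ m) fun x => by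
      rw [norm_pow]; exact pow_le_pow_left₀ (norm_nonneg _) (hB x) m
  have imc : ∀ m : ℕ, Integrable (fun x => (X x * Complex.I) ^ m / m.factorial) μ := fun m => by
    have := ((im m).ofReal (𝕜 := ℂ)).const_mul (Complex.I ^ m / m.factorial)
    refine this.congr (ae_of_all _ fun x => ?_)
    simp only [Complex.coe_algebraMap, RCLike.ofReal_pow]
    rw [mul_pow]
    have : ∀ a : ℂ, Complex.I ^ m / m.factorial * a = a * Complex.I ^ m / m.factorial := by
      intro a; ring
    exact this _
  have ie : Integrable (fun x => Complex.exp (X x * Complex.I)) μ :=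
    integrable_of_bdd (by fun_prop) (B := 1) fun x => by
      rw [Complex.norm_exp_ofReal_mul_I]
  have e : ∑ m ∈ Finset.range (2 * p),
      Complex.I ^ m / m.factorial * ((∫ x, X x ^ m ∂μ : ℝ) : ℂ) =
      ∫ x, ∑ m ∈ Finset.range (2 * p), (X x * Complex.I) ^ m / m.factorial ∂μ := by
    rw [integral_finsetSum _ fun m _ => imc m]
    refine Finset.sum_congr rfl fun m _ => ?_
    rw [← integral_complex_ofReal, ← integral_const_mul]
    congr 1; ext x; push_cast; rw [mul_pow]; ring
  rw [e, ← integral_sub ie (integrable_finsetSum _ fun m _ => imc m), ← integral_div]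
  refine norm_integral_le_of_norm_le ((im _).div_const _) (ae_of_all _ fun x => ?_)
  have := norm_exp_I_remainder (2 * p) (X x)
  rwa [(even_two_mul p).pow_abs] at this

/-- If two bounded variables share their first `2p` moments, their characteristic functions differ
by at most twice the Taylor remainder, which involves the `2p`-th moment only. -/
lemma charFun_sub_charFun {Ω Ω' : Type*} [MeasurableSpace Ω] [MeasurableSpace Ω'] {μ : Measure Ω}
    [IsProbabilityMeasure μ] {μ' : Measure Ω'} [IsProbabilityMeasure μ'] {X : Ω → ℝ}
    (hX : Measurable X) {B : ℝ} (hB : ∀ x, |X x| ≤ B) {Y : Ω' → ℝ}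
    (hY : Measurable Y) {B' : ℝ} (hB' : ∀ x, |Y x| ≤ B')
    (p : ℕ) (hm : ∀ m ≤ 2 * p, ∫ x, X x ^ m ∂μ = ∫ y, Y y ^ m ∂μ') :
    ‖∫ x, Complex.exp (X x * Complex.I) ∂μ - ∫ x, Complex.exp (Y x * Complex.I) ∂μ'‖ ≤
      2 * (∫ x, Y x ^ (2 * p) ∂μ') / (2 * p).factorial := by
  have h1 := norm_charFun_sub_moments (μ := μ) hX hB p
  have h2 := norm_charFun_sub_moments (μ := μ') hY hB' p
  have e : ∑ m ∈ Finset.range (2 * p),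
      Complex.I ^ m / m.factorial * ((∫ x, X x ^ m ∂μ : ℝ) : ℂ) = ∑ m ∈ Finset.range (2 * p),
      Complex.I ^ m / m.factorial * ((∫ x, Y x ^ m ∂μ' : ℝ) : ℂ) :=
    Finset.sum_congr rfl fun m hm' => by rw [hm m (Finset.mem_range.1 hm').le]
  rw [e, hm _ le_rfl] at h1
  rw [norm_sub_rev] at h2
  refine (norm_sub_le_norm_sub_add_norm_sub _ _ _).trans ((add_le_add h1 h2).trans (le_of_eq ?_))
  ring

lemma norm_prod_sub_prod_le {ι : Type*} (S : Finset ι) (a b : ι → ℂ) (ha : ∀ k, ‖a k‖ ≤ 1)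
    (hb : ∀ k, ‖b k‖ ≤ 1) : ‖∏ k ∈ S, a k - ∏ k ∈ S, b k‖ ≤ ∑ k ∈ S, ‖a k - b k‖ := by
  classical
  induction S using Finset.induction_on with
  | empty => simp
  | insert i S hi ih =>
    rw [Finset.prod_insert hi, Finset.prod_insert hi, Finset.sum_insert hi]
    have e : a i * ∏ k ∈ S, a k - b i * ∏ k ∈ S, b k =
        (a i - b i) * ∏ k ∈ S, a k + b i * (∏ k ∈ S, a k - ∏ k ∈ S, b k) := by ring
    rw [e]
    refine (norm_add_le _ _).trans (add_le_add ?_ ?_)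
    · rw [norm_mul, norm_prod]
      exact mul_le_of_le_one_right (norm_nonneg _)
        (Finset.prod_le_one (fun _ _ => norm_nonneg _) fun k _ => ha k)
    · rw [norm_mul]
      exact (mul_le_of_le_one_left (norm_nonneg _) (hb i)).trans ih

/-- Second order expansion of the characteristic function of one centred summand. -/
lemma charFun_single {T : ℝ → ℝ} (hTm : Measurable T) {K c : ℝ} (hK : ∀ x, |T x| ≤ K)
    (h0 : ∫ x, T x ∂U = 0) (hc : |c| * K ≤ 1) :
    ‖∫ x, Complex.exp ((c * T x : ℝ) * Complex.I) ∂U -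
      (exp (-(c ^ 2 * ∫ x, T x ^ 2 ∂U) / 2) : ℝ)‖ ≤ (|c| * K) ^ 3 := by
  have hcT : ∀ x, |c * T x| ≤ |c| * K := fun x => by
    rw [abs_mul]; exact mul_le_mul_of_nonneg_left (hK x) (abs_nonneg c)
  have hcK : 0 ≤ |c| * K := (abs_nonneg _).trans (hcT 0)
  set v := ∫ x, T x ^ 2 ∂U with hv
  have i1 : Integrable T U := integrable_of_bdd hTm.aestronglyMeasurable (B := K) hK
  have i2 : Integrable (fun x => T x ^ 2) U :=
    integrable_of_bdd (hTm.pow_const 2).aestronglyMeasurable (B := K ^ 2) fun x => by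
      rw [norm_pow]; exact pow_le_pow_left₀ (norm_nonneg _) (hK x) 2
  have hv0 : 0 ≤ v := integral_nonneg fun x => sq_nonneg _
  have hvK : v ≤ K ^ 2 := by
    have := integral_mono i2 (integrable_const (K ^ 2)) fun x => by
      show T x ^ 2 ≤ K ^ 2
      rw [← sq_abs]; exact pow_le_pow_left₀ (abs_nonneg _) (hK x) 2
    simpa using this
  have ie : Integrable (fun x => Complex.exp ((c * T x : ℝ) * Complex.I)) U :=
    integrable_of_bdd (by fun_prop) (B := 1) fun x => by
      rw [Complex.norm_exp_ofReal_mul_I]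
  have iq : Integrable (fun x => ((1 : ℂ) + (Complex.I * c * (T x : ℂ) +
      (-(c:ℂ) ^ 2 / 2) * ((T x ^ 2 : ℝ) : ℂ)))) U :=
    (integrable_const _).add (((i1.ofReal (𝕜 := ℂ)).const_mul _).add
      ((i2.ofReal (𝕜 := ℂ)).const_mul _))
  have h1 : ‖∫ x, Complex.exp ((c * T x : ℝ) * Complex.I) ∂U - ((1 - c ^ 2 * v / 2 : ℝ) : ℂ)‖ ≤
      (|c| * K) ^ 3 / 6 := by
    have e : ((1 - c ^ 2 * v / 2 : ℝ) : ℂ) = ∫ x, ((1 : ℂ) + (Complex.I * c * (T x : ℂ) +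
      (-(c:ℂ) ^ 2 / 2) * ((T x ^ 2 : ℝ) : ℂ))) ∂U := by
      have j1 : Integrable (fun x => Complex.I * c * (T x : ℂ)) U :=
        (i1.ofReal (𝕜 := ℂ)).const_mul _
      have j2 : Integrable (fun x => (-(c:ℂ) ^ 2 / 2) * ((T x ^ 2 : ℝ) : ℂ)) U :=
        (i2.ofReal (𝕜 := ℂ)).const_mul _
      have j3 := integral_add (integrable_const (μ := U) (1:ℂ)) (j1.add j2)
      simp only [Pi.add_apply] at j3
      rw [j3, integral_add j1 j2, integral_const_mul, integral_const_mul]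
      have e1 : ∫ x, ((T x : ℝ) : ℂ) ∂U = 0 := by rw [integral_complex_ofReal, h0]; simp
      have e2 : ∫ x, ((T x ^ 2 : ℝ) : ℂ) ∂U = (v : ℂ) := by rw [integral_complex_ofReal]
      rw [e1, e2]
      simp
      ring
    rw [e, ← integral_sub ie iq]
    refine (norm_integral_le_of_norm_le_const (C := (|c| * K) ^ 3 / 6)
      (ae_of_all _ fun x => ?_)).trans (by simp)
    have := norm_exp_I_remainder 3 (c * T x)
    simp only [Finset.sum_range_succ, Finset.sum_range_zero, Nat.factorial] at this
    have e3 : ((0:ℂ) + ((c * T x : ℝ) * Complex.I) ^ 0 / ((1:ℕ) : ℂ) +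
        ((c * T x : ℝ) * Complex.I) ^ 1 / (((0 + 1) * 1 : ℕ) : ℂ) +
        ((c * T x : ℝ) * Complex.I) ^ 2 / (((1 + 1) * ((0 + 1) * 1) : ℕ) : ℂ)) =
        ((1 : ℂ) + (Complex.I * c * (T x : ℂ) +
      (-(c:ℂ) ^ 2 / 2) * ((T x ^ 2 : ℝ) : ℂ))) := by
      have := Complex.I_sq
      push_cast
      linear_combination (c:ℂ) ^ 2 * (T x : ℂ) ^ 2 / 2 * this
    rw [e3] at this
    refine this.trans ?_
    have h6 := pow_le_pow_left₀ (abs_nonneg _) (hcT x) 3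
    norm_num at h6 ⊢
    linarith
  have h2 : ‖(((1 - c ^ 2 * v / 2 : ℝ) : ℂ)) - (exp (-(c ^ 2 * v) / 2) : ℝ)‖ ≤
      (|c| * K) ^ 3 / 4 := by
    rw [← Complex.ofReal_sub, Complex.norm_real, Real.norm_eq_abs]
    set y := c ^ 2 * v / 2 with hy
    have hy0 : 0 ≤ y := by positivity
    have hyK : y ≤ (|c| * K) ^ 2 / 2 := by
      rw [mul_pow, sq_abs, hy]; gcongr
    have hy1 : y ≤ 1 / 2 := hyK.trans (by nlinarith)
    have e : -(c ^ 2 * v) / 2 = -y := by rw [hy]; ring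
    rw [e]
    have h3 := Real.abs_exp_sub_one_sub_id_le (x := -y) (by rw [abs_neg, abs_of_nonneg hy0]; linarith)
    rw [abs_sub_comm]
    have e2 : exp (-y) - (1 - y) = exp (-y) - 1 - -y := by ring
    rw [e2]
    refine h3.trans ?_
    have : y ^ 2 ≤ ((|c| * K) ^ 2 / 2) ^ 2 := pow_le_pow_left₀ hy0 hyK 2
    have h5 : (|c| * K) ^ 4 ≤ (|c| * K) ^ 3 := pow_le_pow_of_le_one hcK hc (by norm_num)
    nlinarith
  refine (norm_sub_le_norm_sub_add_norm_sub _ _ _).trans ((add_le_add h1 h2).trans ?_)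
  have : 0 ≤ (|c| * K) ^ 3 := by positivity
  linarith

/-- Gaussian approximation of the characteristic function of a linear combination of independent
copies, with a Lindeberg-type error. -/
lemma pi_charFun {ι : Type*} [Fintype ι] {T : ℝ → ℝ} (hTm : Measurable T) {K : ℝ}
    (hK : ∀ x, |T x| ≤ K) (h0 : ∫ x, T x ∂U = 0) (c : ι → ℝ) (hc : ∀ k, |c k| * K ≤ 1) :
    ‖∫ u, Complex.exp ((∑ k, c k * T (u k) : ℝ) * Complex.I) ∂(Measure.pi fun _ : ι => U) -
      (exp (-((∑ k, c k ^ 2) * ∫ x, T x ^ 2 ∂U) / 2) : ℝ)‖ ≤ ∑ k, (|c k| * K) ^ 3 := by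
  have e1 : ∀ u : ι → ℝ, Complex.exp ((∑ k, c k * T (u k) : ℝ) * Complex.I) =
      ∏ k, Complex.exp ((c k * T (u k) : ℝ) * Complex.I) := by
    intro u
    rw [← Complex.exp_sum, ← Finset.sum_mul]; push_cast; rfl
  simp_rw [e1]
  rw [integral_fintype_prod_eq_prod (fun k (x : ℝ) => Complex.exp ((c k * T x : ℝ) * Complex.I))]
  have e2 : ((exp (-((∑ k, c k ^ 2) * ∫ x, T x ^ 2 ∂U) / 2) : ℝ) : ℂ) =
      ∏ k, ((exp (-(c k ^ 2 * ∫ x, T x ^ 2 ∂U) / 2) : ℝ) : ℂ) := by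
    rw [← Complex.ofReal_prod, ← Real.exp_sum, ← Finset.sum_div, Finset.sum_neg_distrib,
      Finset.sum_mul]
  rw [e2]
  refine (norm_prod_sub_prod_le _ _ _ (fun k => ?_) fun k => ?_).trans
    (Finset.sum_le_sum fun k _ => charFun_single hTm hK h0 (hc k))
  · refine (norm_integral_le_of_norm_le_const (C := 1)
      (ae_of_all _ fun x => (Complex.norm_exp_ofReal_mul_I _).le)).trans (by simp)
  · rw [Complex.norm_real, Real.norm_eq_abs, Real.abs_exp, Real.exp_le_one_iff]
    have : 0 ≤ c k ^ 2 * ∫ x, T x ^ 2 ∂U :=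
      mul_nonneg (sq_nonneg _) (integral_nonneg fun x => sq_nonneg _)
    linarith

end LIL

/-! ### Approximation scales -/

namespace LIL

/-- First Borel–Cantelli lemma, with the summable bound only required eventually. -/
lemma borel_cantelli {E : ℕ → Set ℝ} {a : ℕ → ℝ} (ha : Summable a)
    (h : ∀ᶠ Q in atTop, U.real (E Q) ≤ a Q) : ∀ᵐ x ∂U, ∀ᶠ Q in atTop, x ∉ E Q := by
  obtain ⟨Q₀, hQ₀⟩ := eventually_atTop.1 h
  have h1 : ∀ᵐ x ∂U, ∀ᶠ Q in atTop, x ∉ E (Q + Q₀) := by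
    apply ae_eventually_notMem
    refine ne_top_of_le_ne_top (((summable_nat_add_iff Q₀).2 ha).tsum_ofReal_ne_top) ?_
    refine ENNReal.tsum_le_tsum fun Q => ?_
    rw [← ofReal_measureReal]
    exact ENNReal.ofReal_le_ofReal (hQ₀ _ (by omega))
  filter_upwards [h1] with x hx
  obtain ⟨Q₁, h⟩ := eventually_atTop.1 hx
  refine eventually_atTop.2 ⟨Q₁ + Q₀, fun Q hQ => ?_⟩
  have := h (Q - Q₀) (by omega)
  rwa [Nat.sub_add_cancel (by omega)] at this

lemma measure_ge_le {g : ℝ → ℝ} (hg0 : ∀ x, 0 ≤ g x) (hg : Integrable g U) {t b : ℝ} (ht : 0 < t)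
    (hb : ∫ x, g x ∂U ≤ b) : U.real {x | t ≤ g x} ≤ b / t := by
  have := mul_meas_ge_le_integral_of_nonneg (ae_of_all U hg0) hg t
  rw [le_div_iff₀ ht]; linarith

/-- Dilation by a positive integer preserves integrals of 1-periodic functions. -/
lemma integral_dilate {g : ℝ → ℝ} (hg : Measurable g) {B : ℝ} (hB : ∀ x, |g x| ≤ B)
    (hper : ∀ x, g (x + 1) = g x) {m : ℕ} (hm : 0 < m) :
    ∫ x, g (m * x) ∂U = ∫ x, g x ∂U := by
  have hm' : (m:ℝ) ≠ 0 := by positivity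
  rw [integral_U, integral_U, intervalIntegral.integral_comp_mul_left _ hm']
  have hp : Function.Periodic g 1 := hper
  have hi : ∀ t₁ t₂ : ℝ, IntervalIntegrable g volume t₁ t₂ := fun t₁ t₂ =>
    (intervalIntegrable_const (c := B)).mono_fun hg.aestronglyMeasurable
      (ae_of_all _ fun x => by
        simpa using (hB x).trans (le_abs_self B))
  have := hp.intervalIntegral_add_zsmul_eq m 0 hi
  simp only [zsmul_eq_mul, zero_add, mul_one, Int.cast_natCast] at this
  rw [mul_zero, mul_one, this, smul_eq_mul]
  field_simp

/-- Everything the probabilistic part of the argument needs to know about `f` and `(n_k)`: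
trigonometric approximations `T Q` of `f`, precise enough for partial sums of length up to
`2 ^ (12 * Q)`, together with sets of good indices, missing at most `2 ^ Q` indices, along which
the moments of `∑ c_k T Q (n_k x)` of order `O(log Q)` are those of independent copies. -/
structure Scales (n : ℕ → ℕ) (f : ℝ → ℝ) where
  /-- the approximating trigonometric polynomial at scale `Q` -/
  T : ℕ → ℝ → ℝ
  /-- constant in the sup bound -/
  C : ℝ
  /-- the indices kept at scale `Q`; in `exists_scales`, those outside the `2 ^ Q` smallest -/
  good : ℕ → ℕ → Prop
  C_pos : 0 < C
  meas : ∀ Q, Measurable (T Q)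
  bdd : ∀ Q x, |T Q x| ≤ C * (1 + Q)
  mean : ∀ Q, ∫ x, T Q x ∂U = 0
  sq_le : ∀ Q, ∫ x, T Q x ^ 2 ∂U ≤ ∫ x, f x ^ 2 ∂U
  sq_tendsto : Tendsto (fun Q => ∫ x, T Q x ^ 2 ∂U) atTop (𝓝 (∫ x, f x ^ 2 ∂U))
  /-- at most `2 ^ Q` indices are not good -/
  card_bad : ∀ Q (s : Finset ℕ), (∀ k ∈ s, ¬ good Q k) → s.card ≤ 2 ^ Q
  /-- the total approximation error is almost surely negligible -/
  err : ∀ᵐ x ∂U, ∀ᶠ Q in atTop,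
    ∑ k ∈ Finset.range (2 ^ (12 * Q)), |f (n k * x) - T Q (n k * x)| ≤ 1
  /-- moments of order `O(log Q)` agree with those of the independent model -/
  mom : ∀ D : ℝ, ∀ᶠ Q : ℕ in atTop, ∀ m : ℕ, (m : ℝ) ≤ D * log Q → ∀ I : Finset ℕ,
    (∀ k ∈ I, good Q k) → ∀ c : ℕ → ℝ,
    ∫ x, (∑ k ∈ I, c k * T Q (n k * x)) ^ m ∂U =
      ∫ u, (∑ k : I, c k * T Q (u k)) ^ m ∂(Measure.pi fun _ : I => U)

/-- This is where the growth condition on `ω` enters: moments of order `D log Q` are controlled by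
`ω` at `N = 2 ^ Q`, because `ω (2 ^ Q) ≥ (Q log 2) ^ α`. -/
lemma eventually_log_le_omega {ω : ℕ → ℝ} {α : ℝ} (hα : 0 < α) {k₀ : ℕ}
    (hω_log : ∀ k : ℕ, k₀ ≤ k → (Real.log k) ^ α ≤ ω k) (D : ℝ) :
    ∀ᶠ Q : ℕ in atTop, D * log Q ≤ ω (2 ^ Q) := by
  have h1 : ∀ᶠ Q : ℕ in atTop, ‖log (Q:ℝ)‖ ≤ (log 2 ^ α / (|D| + 1)) * ‖(Q:ℝ) ^ α‖ :=
    tendsto_natCast_atTop_atTop.eventually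
      ((isLittleO_log_rpow_atTop hα).def (c := log 2 ^ α / (|D| + 1)) (by
        have := Real.log_pos (one_lt_two); positivity))
  filter_upwards [h1, eventually_ge_atTop k₀, eventually_ge_atTop 1] with Q h1 h2 h3
  have h4 := hω_log (2 ^ Q) (h2.trans Nat.lt_two_pow_self.le)
  refine le_trans ?_ h4
  push_cast
  rw [Real.log_pow, Real.mul_rpow (by positivity) (Real.log_pos one_lt_two).le]
  have h5 : 0 ≤ log (Q:ℝ) := Real.log_natCast_nonneg Q
  have h6 : (0:ℝ) ≤ (Q:ℝ) ^ α := by positivity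
  rw [Real.norm_of_nonneg h5, Real.norm_of_nonneg h6, div_mul_eq_mul_div,
    le_div_iff₀ (by positivity)] at h1
  have h7 : D * log Q ≤ (|D| + 1) * log Q :=
    mul_le_mul_of_nonneg_right (by linarith [le_abs_self D]) h5
  linarith

lemma eventually_log_le_two_pow (D : ℝ) : ∀ᶠ Q : ℕ in atTop, D * log Q ≤ 2 ^ Q := by
  have h1 : Tendsto (fun Q : ℕ => (Q:ℝ) ^ 1 / 2 ^ Q) atTop (𝓝 0) :=
    tendsto_pow_const_div_const_pow_of_one_lt 1 one_lt_two
  have h2 := h1.eventually (gt_mem_nhds (show (0:ℝ) < 1 / (|D| + 1) by positivity))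
  filter_upwards [h2, eventually_ge_atTop 1] with Q hQ hQ1
  rw [pow_one, div_lt_div_iff₀ (by positivity) (by positivity)] at hQ
  have h5 : 0 ≤ log (Q:ℝ) := Real.log_natCast_nonneg Q
  have h6 : log (Q:ℝ) ≤ Q := Real.log_le_self (by positivity)
  have h7 : D * log Q ≤ (|D| + 1) * Q :=
    mul_le_mul (by linarith [le_abs_self D]) h6 h5 (by positivity)
  linarith

/-- The approximations `T Q` are Fourier partial sums of degree `2 ^ (40 Q)`, and the good indices
are those outside the `2 ^ Q` smallest elements. Condition `A_ω` with `N = 2 ^ Q` then excludes the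
relations that would make a moment of order `m ≤ D log Q` differ from the independent one: the
coefficients are at most `m 2 ^ (40 Q) ≤ N ^ 41 ≤ N ^ ω_N`. -/
theorem exists_scales {ω : ℕ → ℝ} (hω_top : Tendsto ω atTop atTop) {α : ℝ} (hα : 0 < α) {k₀ : ℕ}
    (hω_log : ∀ k : ℕ, k₀ ≤ k → (Real.log k) ^ α ≤ ω k)
    {n : ℕ → ℕ} (hn_pos : ∀ k, 0 < n k) (hn_inj : Function.Injective n) (hA : CondA ω n)
    {f : ℝ → ℝ} (hf_meas : Measurable f) (hf_per : ∀ x, f (x + 1) = f x)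
    (hf_int : ∫ x in (0:ℝ)..1, f x = 0) (hf_bv : BoundedVariationOn f (Set.Icc 0 1)) :
    Nonempty (Scales n f) := by
  obtain ⟨N₀, hA⟩ := hA
  obtain ⟨B, hB0, hB⟩ := bounded_of_bv hf_per hf_bv
  obtain ⟨C, hC, hall⟩ := exists_trig_approx hf_meas hf_per hf_int hf_bv
  have hall' : ∀ Q : ℕ, _ := fun Q => hall (2 ^ (40 * Q)) (by positivity)
  choose w T hT hTb hT0 hTsq hTerr hTv using hall'
  have hTm : ∀ Q, Measurable (T Q) := fun Q => by
    have : T Q = fun x => (∑ a ∈ Finset.Icc (-((2 ^ (40 * Q) : ℕ):ℤ)) ((2 ^ (40 * Q) : ℕ):ℤ),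
        w Q a * ee a x).re := by
      ext x; rw [← hT]; simp
    rw [this]
    exact (Complex.continuous_re.comp (continuous_finsetSum _ fun a _ =>
      (continuous_ee a).const_mul _)).measurable
  have hTper : ∀ Q x, T Q (x + 1) = T Q x := fun Q x => by
    rw [← Complex.ofReal_inj, hT, hT]
    simp_rw [ee_add_one]
  have hTb' : ∀ Q x, |T Q x| ≤ (C * 40) * (1 + Q) := fun Q x => by
    refine (hTb Q x).trans ?_
    rw [mul_assoc]
    refine mul_le_mul_of_nonneg_left ?_ hC.le
    push_cast
    rw [Real.log_pow]
    have := Real.log_two_lt_d9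
    push_cast
    nlinarith [(Nat.cast_nonneg Q : (0:ℝ) ≤ Q)]
  have pow0 : Tendsto (fun Q : ℕ => C / ((2 ^ (40 * Q) : ℕ) : ℝ)) atTop (𝓝 0) := by
    apply Tendsto.div_atTop tendsto_const_nhds
    have : Tendsto (fun Q : ℕ => ((2:ℝ) ^ 40) ^ Q) atTop atTop :=
      tendsto_pow_atTop_atTop_of_one_lt (by norm_num)
    refine this.congr fun Q => ?_
    push_cast; rw [pow_mul]
  refine ⟨⟨T, C * 40, fun Q k => ¬ AmongSmallest n (2 ^ Q) k, by positivity, hTm, hTb', hT0, hTsq,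
    ?_, ?_, ?_, ?_⟩⟩
  · refine tendsto_of_tendsto_of_tendsto_of_le_of_le
      (g := fun Q => ∫ x, f x ^ 2 ∂U - C / ((2 ^ (40 * Q) : ℕ) : ℝ)) ?_ tendsto_const_nhds
      (fun Q => by have := hTv Q; show _ ≤ _; linarith) hTsq
    simpa using tendsto_const_nhds.sub pow0
  · intro Q s hs
    exact card_amongSmallest hn_inj (2 ^ Q) s fun k hk => not_not.1 (hs k hk)
  · -- first absolute moment of `f - T Q` by the AM-GM inequality with weight `2 ^ (-20 Q)`
    have habs : ∀ Q, ∫ x, |f x - T Q x| ∂U ≤ (C + 1) / 2 ^ (20 * Q) := by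
      intro Q
      have hb : ∀ x, |f x - T Q x| ≤ B + (C * 40) * (1 + Q) := fun x =>
        (abs_sub _ _).trans (add_le_add (hB x) (hTb' Q x))
      have i1 : Integrable (fun x => |f x - T Q x|) U :=
        integrable_of_bdd (hf_meas.sub (hTm Q)).abs.aestronglyMeasurable
          (B := B + (C * 40) * (1 + Q)) fun x => by rw [Real.norm_eq_abs, abs_abs]; exact hb x
      have i2 : Integrable (fun x => (f x - T Q x) ^ 2) U :=
        integrable_of_bdd ((hf_meas.sub (hTm Q)).pow_const 2).aestronglyMeasurable
          (B := (B + (C * 40) * (1 + Q)) ^ 2) fun x => by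
            rw [norm_pow]; exact pow_le_pow_left₀ (norm_nonneg _) (hb x) 2
      set r : ℝ := 2 ^ (20 * Q) with hr
      have hr0 : 0 < r := by positivity
      have h1 : ∫ x, |f x - T Q x| ∂U ≤ ∫ x, (r * (f x - T Q x) ^ 2 + 1 / r) ∂U := by
        refine integral_mono i1 ((i2.const_mul r).add (integrable_const _)) fun x => ?_
        show |f x - T Q x| ≤ r * (f x - T Q x) ^ 2 + 1 / r
        rw [← sq_abs]
        set y := |f x - T Q x|
        have : r * y ^ 2 + 1 / r - y = ((r * y) ^ 2 + 1 - r * y) / r := by field_simp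
        have h2 : 0 ≤ ((r * y) ^ 2 + 1 - r * y) / r :=
          div_nonneg (by nlinarith [sq_nonneg (r * y - 1)]) hr0.le
        linarith
      rw [integral_add (i2.const_mul r) (integrable_const _), integral_const_mul] at h1
      have h3 := hTerr Q
      have e : ((2 ^ (40 * Q) : ℕ) : ℝ) = r ^ 2 := by
        rw [hr, ← pow_mul]; push_cast; congr 1; ring
      rw [e] at h3
      have h4 : r * ∫ x, (f x - T Q x) ^ 2 ∂U ≤ r * (C / r ^ 2) :=
        mul_le_mul_of_nonneg_left h3 hr0.le
      have h5 : r * (C / r ^ 2) + 1 / r = (C + 1) / r := by field_simp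
      simp at h1
      rw [← one_div] at h1
      linarith
    have hH : ∀ Q, Integrable (fun x =>
        ∑ k ∈ Finset.range (2 ^ (12 * Q)), |f (n k * x) - T Q (n k * x)|) U ∧
        ∫ x, ∑ k ∈ Finset.range (2 ^ (12 * Q)), |f (n k * x) - T Q (n k * x)| ∂U ≤
          (C + 1) * (1 / 2) ^ Q := by
      intro Q
      have hb : ∀ x, |f x - T Q x| ≤ B + (C * 40) * (1 + Q) := fun x =>
        (abs_sub _ _).trans (add_le_add (hB x) (hTb' Q x))
      have hm := (hf_meas.sub (hTm Q)).abs
      have i1 : ∀ k, Integrable (fun x => |f (n k * x) - T Q (n k * x)|) U := fun k =>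
        integrable_of_bdd (hm.comp (measurable_const_mul (n k : ℝ))).aestronglyMeasurable
          (B := B + (C * 40) * (1 + Q)) fun x => by
            rw [Real.norm_eq_abs, abs_abs]; exact hb _
      refine ⟨integrable_finsetSum _ fun k _ => i1 k, ?_⟩
      rw [integral_finsetSum _ fun k _ => i1 k]
      have e : ∀ k, ∫ x, |f (n k * x) - T Q (n k * x)| ∂U = ∫ x, |f x - T Q x| ∂U := fun k =>
        integral_dilate (g := fun x => |f x - T Q x|) hm (fun x => by rw [abs_abs]; exact hb x)
          (fun x => by rw [hf_per, hTper]) (hn_pos k)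
      simp_rw [e]
      rw [Finset.sum_const, Finset.card_range, nsmul_eq_mul]
      calc ((2 ^ (12 * Q) : ℕ) : ℝ) * ∫ x, |f x - T Q x| ∂U
          ≤ ((2 ^ (12 * Q) : ℕ) : ℝ) * ((C + 1) / 2 ^ (20 * Q)) := by gcongr; exact habs Q
        _ = (C + 1) * (1 / 2) ^ (8 * Q) := by
            push_cast
            have : (2:ℝ) ^ (20 * Q) = 2 ^ (12 * Q) * 2 ^ (8 * Q) := by
              rw [← pow_add]; congr 1; ring
            rw [this, one_div_pow]; field_simp
        _ ≤ (C + 1) * (1 / 2) ^ Q :=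
            mul_le_mul_of_nonneg_left
              (pow_le_pow_of_le_one (by norm_num) (by norm_num) (by omega)) (by positivity)
    have := borel_cantelli (E := fun Q => {x | (1:ℝ) ≤
        ∑ k ∈ Finset.range (2 ^ (12 * Q)), |f (n k * x) - T Q (n k * x)|})
      (a := fun Q => (C + 1) * (1 / 2) ^ Q)
      ((summable_geometric_of_lt_one (by norm_num) (by norm_num)).mul_left _)
      (Eventually.of_forall fun Q => by
        have := measure_ge_le (fun x => Finset.sum_nonneg fun k _ => abs_nonneg _) (hH Q).1
          one_pos (hH Q).2
        simpa using this)
    filter_upwards [this] with x hx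
    filter_upwards [hx] with Q hQ
    exact (not_le.1 hQ).le
  · intro D
    have h2Q : Tendsto (fun Q : ℕ => 2 ^ Q) atTop atTop :=
      tendsto_pow_atTop_atTop_of_one_lt one_lt_two
    filter_upwards [eventually_log_le_omega hα hω_log D, eventually_log_le_two_pow D,
      (hω_top.comp h2Q).eventually_ge_atTop 41, h2Q.eventually_ge_atTop N₀] with Q h1 h2 h3 h4
    intro m hm I hI c
    have hrel := relation_trivial hn_pos hA h4 I hI m (2 ^ (40 * Q)) (hm.trans h1) (by
      push_cast
      calc (m:ℝ) * 2 ^ (40 * Q) ≤ 2 ^ Q * 2 ^ (40 * Q) := by gcongr; exact hm.trans h2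
        _ = (2 ^ Q) ^ (41:ℝ) := by
            rw [show (41:ℝ) = ((41:ℕ) : ℝ) by norm_num, Real.rpow_natCast, ← pow_add, ← pow_mul]
            congr 1; ring
        _ ≤ _ := Real.rpow_le_rpow_of_exponent_le (one_le_pow₀ one_le_two) h3)
    have := moments_match (fun k : I => n k) _ (w Q) (T Q) (hT Q) m hrel (fun k => c k)
    rw [← this]
    congr 1; ext x; congr 1
    exact (Finset.sum_coe_sort I (fun k => c k * T Q (n k * x))).symm

end LIL

/-! ### Moments and characteristic functions of dilated sums -/

namespace LIL

lemma eventually_poly_le (A : ℝ) (k : ℕ) {r : ℝ} (hr : 1 < r) :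
    ∀ᶠ Q : ℕ in atTop, A * (1 + Q) ^ k ≤ r ^ Q := by
  have h1 : Tendsto (fun Q : ℕ => (Q:ℝ) ^ k / r ^ Q) atTop (𝓝 0) :=
    tendsto_pow_const_div_const_pow_of_one_lt k hr
  have h2 := h1.eventually (gt_mem_nhds (show (0:ℝ) < 1 / ((|A| + 1) * 2 ^ k) by positivity))
  filter_upwards [h2, eventually_ge_atTop 1] with Q hQ hQ1
  have hr0 : 0 < r := by linarith
  rw [div_lt_div_iff₀ (by positivity) (by positivity), one_mul] at hQ
  have hQ1' : (1:ℝ) ≤ Q := by exact_mod_cast hQ1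
  calc A * (1 + Q) ^ k ≤ (|A| + 1) * (2 * Q) ^ k := by
        gcongr
        · linarith [le_abs_self A]
        · linarith
    _ = (Q:ℝ) ^ k * ((|A| + 1) * 2 ^ k) := by rw [mul_pow]; ring
    _ ≤ r ^ Q := hQ.le

lemma eventually_log_ge (A : ℝ) : ∀ᶠ Q : ℕ in atTop, A ≤ log Q :=
  (Real.tendsto_log_atTop.comp tendsto_natCast_atTop_atTop).eventually_ge_atTop A

variable {n : ℕ → ℕ} {f : ℝ → ℝ}

lemma Scales.eventually_small (S : Scales n f) (D : ℝ) {s2 ε : ℝ} (hs2 : 0 < s2) (hε : 0 < ε) :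
    ∀ᶠ Q : ℕ in atTop, 2 * (D * log Q) * (S.C * (1 + Q)) ^ 2 ≤ ε ^ 2 * s2 * 2 ^ Q := by
  filter_upwards [eventually_poly_le (2 * |D| * S.C ^ 2 / (ε ^ 2 * s2)) 3 one_lt_two,
    eventually_ge_atTop 1] with Q hQ hQ1
  rw [div_mul_eq_mul_div, div_le_iff₀ (by positivity)] at hQ
  have h5 : 0 ≤ log (Q:ℝ) := Real.log_natCast_nonneg Q
  have h6 : log (Q:ℝ) ≤ 1 + Q := (Real.log_le_self (by positivity)).trans (by linarith)
  calc 2 * (D * log Q) * (S.C * (1 + Q)) ^ 2 ≤ 2 * (|D| * (1 + Q)) * (S.C * (1 + Q)) ^ 2 := by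
        gcongr
        exact le_abs_self D
    _ = 2 * |D| * S.C ^ 2 * (1 + Q) ^ 3 := by ring
    _ ≤ _ := by linarith

/-- The smallness condition on the coefficients needed for the sub-Gaussian bounds. -/
lemma small_coeff {D l s2 ε V c K N : ℝ} {p : ℕ} (hs2 : 0 < s2) (hε : 0 < ε) (hV : 0 < V)
    (hp : (p:ℝ) ≤ D * l) (h : 2 * (D * l) * K ^ 2 ≤ ε ^ 2 * s2 * N)
    (hc : c ^ 2 * N ≤ V) : √(2 * p / (s2 * V)) * |c| * K ≤ ε := by
  refine abs_le_of_sq_le_sq' ?_ hε.le |>.2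
  rw [mul_pow, mul_pow, sq_abs, Real.sq_sqrt (by positivity), div_mul_eq_mul_div,
    div_mul_eq_mul_div, div_le_iff₀ (by positivity)]
  have h1 : 2 * (p:ℝ) * K ^ 2 ≤ ε ^ 2 * s2 * N := le_trans (by gcongr) h
  calc 2 * p * c ^ 2 * K ^ 2 = c ^ 2 * (2 * p * K ^ 2) := by ring
    _ ≤ c ^ 2 * (ε ^ 2 * s2 * N) := by gcongr
    _ = ε ^ 2 * s2 * (c ^ 2 * N) := by ring
    _ ≤ ε ^ 2 * s2 * V := by gcongr
    _ = _ := by ring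

/-- Even moments of order up to a multiple of `log Q` obey the Gaussian-type bound, both for the
dilated functions and for their independent counterparts. -/
theorem Scales.moment_le (S : Scales n f) (D : ℝ) {s2 : ℝ} (hs2 : ∫ x, f x ^ 2 ∂U < s2) :
    ∀ᶠ Q : ℕ in atTop, ∀ p : ℕ, 0 < p → (p:ℝ) ≤ D * log Q → ∀ I : Finset ℕ,
      (∀ k ∈ I, S.good Q k) → ∀ (c : ℕ → ℝ) (V : ℝ), 0 < V → ∑ k ∈ I, c k ^ 2 ≤ V →
      (∀ k ∈ I, c k ^ 2 * 2 ^ Q ≤ V) →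
      ∫ x, (∑ k ∈ I, c k * S.T Q (n k * x)) ^ (2 * p) ∂U ≤
          2 * (2 * p * s2 * V) ^ p * exp (-p) ∧
      ∫ u, (∑ k : I, c k * S.T Q (u k)) ^ (2 * p) ∂(Measure.pi fun _ : I => U) ≤
          2 * (2 * p * s2 * V) ^ p * exp (-p) := by
  set v := ∫ x, f x ^ 2 ∂U with hv
  have hv0 : 0 ≤ v := integral_nonneg fun x => sq_nonneg _
  have hs20 : 0 < s2 := by linarith
  set ε := min 1 ((s2 - v) / (v + 1)) with hε
  have hε0 : 0 < ε := lt_min one_pos (div_pos (by linarith) (by linarith))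
  have hvε : v * (1 + ε) ≤ s2 := by
    have h1 : ε ≤ (s2 - v) / (v + 1) := min_le_right _ _
    rw [le_div_iff₀ (by linarith)] at h1
    nlinarith
  filter_upwards [S.mom (2 * D), S.eventually_small D hs20 hε0] with Q h1 h2
  intro p hp hpD I hI c V hV hcV hc
  have hb := pi_moment_le (ι := I) (S.meas Q) (S.bdd Q) (S.mean Q) (S.sq_le Q) (min_le_left _ _)
    hs20 hvε hV hp (fun k => c k)
    (by rwa [Finset.sum_coe_sort I (fun k => c k ^ 2)])
    (fun k => small_coeff hs20 hε0 hV hpD h2 (hc k k.2))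
  refine ⟨?_, hb⟩
  rw [h1 (2 * p) (by push_cast; linarith) I hI c]
  exact hb

/-- The Taylor remainder of order `2p` with a Gaussian-type moment is exponentially small as soon
as `p ≥ e² a`. -/
lemma moment_div_factorial {p : ℕ} (hp0 : 0 < p) {a : ℝ} (ha : 0 ≤ a) (hq : a * exp 1 ^ 2 ≤ p) :
    2 * (2 * (2 * p * a) ^ p * exp (-p)) / (2 * p).factorial ≤ 4 * exp (-p) := by
  have hppos : (0:ℝ) < p := by exact_mod_cast hp0
  have hfac : (2 * p : ℝ) ^ (2 * p) / exp 1 ^ (2 * p) ≤ (2 * p).factorial := by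
    have := Real.pow_div_factorial_le_exp (2 * p) (by positivity) (2 * p)
    rw [div_le_iff₀ (by positivity)] at this
    rw [← Real.exp_nat_mul, div_le_iff₀ (exp_pos _)]
    push_cast
    rw [mul_one]
    linarith
  rw [div_le_iff₀ (by positivity)]
  have h1 : (2 * p * a) ^ p ≤ (2 * p : ℝ) ^ (2 * p) / exp 1 ^ (2 * p) := by
    rw [pow_mul, pow_mul, ← div_pow]
    refine pow_le_pow_left₀ (by positivity) ?_ p
    rw [le_div_iff₀ (by positivity)]
    nlinarith
  have h2 := mul_le_mul_of_nonneg_right (h1.trans hfac) (exp_pos (-(p:ℝ))).le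
  linarith

/-- Characteristic functions of normalised sums are Gaussian up to an error `Q ^ (-3)`. -/
theorem Scales.charFun_le (S : Scales n f) (D : ℝ) :
    ∀ᶠ Q : ℕ in atTop, ∀ I : Finset ℕ, (∀ k ∈ I, S.good Q k) → ∀ c : ℕ → ℝ,
      ∑ k ∈ I, c k ^ 2 ≤ D * log Q → (∀ k ∈ I, c k ^ 2 * 2 ^ Q ≤ 1) →
      ‖∫ x, Complex.exp ((∑ k ∈ I, c k * S.T Q (n k * x) : ℝ) * Complex.I) ∂U -
        (exp (-((∑ k ∈ I, c k ^ 2) * ∫ x, S.T Q x ^ 2 ∂U) / 2) : ℝ)‖ ≤ 1 / (Q:ℝ) ^ 3 := by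
  set v := ∫ x, f x ^ 2 ∂U with hv
  have hv0 : 0 ≤ v := integral_nonneg fun x => sq_nonneg _
  set s2 := v + 1 with hs2
  set D1 := |D| + 1 with hD1
  have hD1' : 1 ≤ D1 := by rw [hD1]; linarith [abs_nonneg D]
  set D2 := 4 + exp 1 ^ 2 * s2 * D1 with hD2
  have hD2' : 4 ≤ D2 := by
    have : 0 ≤ exp 1 ^ 2 * s2 * D1 := by positivity
    rw [hD2]; linarith
  have hr : (1:ℝ) < √2 := by
    rw [Real.lt_sqrt (by norm_num)]; norm_num
  filter_upwards [S.mom (2 * (D2 + 1)), S.moment_le (D2 + 1) (show v < s2 by linarith),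
    eventually_log_ge 1, eventually_ge_atTop 8, eventually_poly_le (2 * S.C ^ 3 * D1) 7 hr,
    eventually_poly_le S.C 1 hr] with Q hmom hmle hlog hQ8 hpoly hpoly1
  intro I hI c hcD hc
  have hQ0 : (8:ℝ) ≤ Q := by exact_mod_cast hQ8
  have hQpos : (0:ℝ) < Q := by linarith
  set p := ⌈D2 * log Q⌉₊ with hp
  have hp1 : D2 * log Q ≤ p := Nat.le_ceil _
  have hp2 : (p:ℝ) ≤ (D2 + 1) * log Q := by
    have := Nat.ceil_lt_add_one (show 0 ≤ D2 * log Q by positivity)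
    rw [add_mul]; linarith
  have hppos : (0:ℝ) < p := by nlinarith
  have hp0 : 0 < p := by exact_mod_cast hppos
  set V := D1 * log Q with hV
  have hV1 : 1 ≤ V := by rw [hV]; nlinarith
  have hcV : ∑ k ∈ I, c k ^ 2 ≤ V := hcD.trans (by
    rw [hV, hD1]; exact mul_le_mul_of_nonneg_right (by linarith [le_abs_self D]) (by linarith))
  set K := S.C * (1 + Q) with hK
  have hK0 : 0 < K := mul_pos S.C_pos (by positivity)
  set W := √2 ^ Q with hW
  have hW0 : 0 < W := by positivity
  have hW2 : W ^ 2 = 2 ^ Q := by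
    rw [hW, ← pow_mul, mul_comm, pow_mul, Real.sq_sqrt (by norm_num)]
  have hcW : ∀ k ∈ I, |c k| * W ≤ 1 := fun k hk => by
    refine abs_le_of_sq_le_sq' ?_ zero_le_one |>.2
    rw [mul_pow, sq_abs, hW2, one_pow]; exact hc k hk
  have hlogQ : log (Q:ℝ) ≤ 1 + Q := (Real.log_le_self hQpos.le).trans (by linarith)
  have hKW : 2 * K ^ 3 * V * (Q:ℝ) ^ 3 ≤ W := by
    refine le_trans ?_ hpoly
    calc 2 * K ^ 3 * V * (Q:ℝ) ^ 3 ≤ 2 * K ^ 3 * (D1 * (1 + Q)) * (1 + Q) ^ 3 := by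
          rw [hV]; gcongr; linarith
      _ = _ := by rw [hK]; ring
  have hKW1 : K ≤ W := by simpa using hpoly1
  -- Gaussian approximation for independent copies; the smallness of the individual coefficients,
  -- `|c k| ≤ 2 ^ (-Q / 2)`, beats the polynomially large bound on `T Q`
  have hF := pi_charFun (ι := I) (S.meas Q) (S.bdd Q) (S.mean Q) (fun k => c k) (fun k => by
    calc |c k| * K ≤ |c k| * W := by gcongr
      _ ≤ 1 := hcW k k.2)
  have hF2 : ∑ k : I, (|c k| * K) ^ 3 ≤ 1 / (2 * (Q:ℝ) ^ 3) := by
    rw [Finset.sum_coe_sort I (fun k => (|c k| * K) ^ 3)]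
    calc ∑ k ∈ I, (|c k| * K) ^ 3 ≤ ∑ k ∈ I, c k ^ 2 * (K ^ 3 / W) := by
          refine Finset.sum_le_sum fun k hk => ?_
          have e : (|c k| * K) ^ 3 = c k ^ 2 * K ^ 3 * |c k| := by
            rw [← sq_abs]; ring
          rw [e, ← mul_div_assoc, le_div_iff₀ hW0, mul_assoc]
          exact mul_le_of_le_one_right (by positivity) (hcW k hk)
      _ ≤ V * (K ^ 3 / W) := by rw [← Finset.sum_mul]; gcongr
      _ ≤ 1 / (2 * (Q:ℝ) ^ 3) := by
          rw [← mul_div_assoc, div_le_div_iff₀ hW0 (by positivity)]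
          linarith
  -- agreement of moments transfers the approximation to the dilated functions
  have hTn : Measurable fun x : ℝ => ∑ k ∈ I, c k * S.T Q (n k * x) :=
    Finset.measurable_fun_sum _ fun k _ =>
      ((S.meas Q).comp (measurable_const_mul (n k : ℝ))).const_mul _
  have hE := charFun_sub_charFun (μ := U) (μ' := Measure.pi fun _ : I => U) hTn
    (fun x => abs_sum_le_of_bdd I c (S.bdd Q) (fun k => n k * x))
    (measurable_lin (fun k : I => c k) (S.meas Q))
    (fun u => abs_sum_le_of_bdd Finset.univ _ (S.bdd Q) u) p
    (fun m hm => hmom m (by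
      have : (m:ℝ) ≤ 2 * p := by exact_mod_cast hm
      linarith) I hI c)
  have hM := (hmle p hp0 hp2 I hI c V (by linarith) hcV
    (fun k hk => (hc k hk).trans hV1)).2
  have hE2 : 2 * (∫ u, (∑ k : I, c k * S.T Q (u k)) ^ (2 * p) ∂(Measure.pi fun _ : I => U)) /
      (2 * p).factorial ≤ 1 / (2 * (Q:ℝ) ^ 3) := by
    have hq : s2 * V * exp 1 ^ 2 ≤ p := by
      refine le_trans ?_ hp1
      rw [hD2, hV, add_mul]
      nlinarith
    have hexp : exp (-p) ≤ 1 / (Q:ℝ) ^ 4 := by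
      have : exp (-(4 * log Q)) = 1 / (Q:ℝ) ^ 4 := by
        rw [Real.exp_neg, one_div, mul_comm, ← Real.rpow_def_of_pos hQpos]
        norm_cast
      rw [← this]
      refine exp_le_exp.2 (neg_le_neg (le_trans ?_ hp1))
      gcongr
    have hs20 : 0 < s2 := by linarith
    calc _ ≤ 2 * (2 * (2 * p * (s2 * V)) ^ p * exp (-p)) / (2 * p).factorial := by
          rw [← mul_assoc (2 * (p:ℝ))]; gcongr
      _ ≤ 4 * exp (-p) := moment_div_factorial hp0 (by positivity) hq
      _ ≤ 4 * (1 / (Q:ℝ) ^ 4) := by gcongr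
      _ ≤ _ := by
          rw [mul_one_div, div_le_div_iff₀ (by positivity) (by positivity)]
          have : (0:ℝ) < (Q:ℝ) ^ 3 := by positivity
          nlinarith
  rw [Finset.sum_coe_sort I (fun k => c k ^ 2)] at hF
  refine (norm_sub_le_norm_sub_add_norm_sub _ _ _).trans
    ((add_le_add (hE.trans hE2) (hF.trans hF2)).trans (le_of_eq ?_))
  field_simp; norm_num

end LIL

/-! ### Tail estimates for block sums -/

namespace LIL

variable {n : ℕ → ℕ} {f : ℝ → ℝ}

/-- Sum of the approximating functions over the good indices in `[a, b)`. -/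
def Scales.bs (S : Scales n f) (Q a b : ℕ) (x : ℝ) : ℝ :=
  open Classical in ∑ k ∈ (Finset.Ico a b).filter (S.good Q), S.T Q (n k * x)

lemma Scales.measurable_bs (S : Scales n f) (Q a b : ℕ) : Measurable (S.bs Q a b) :=
  Finset.measurable_fun_sum _ fun k _ => (S.meas Q).comp (measurable_const_mul (n k : ℝ))

lemma Scales.bs_add (S : Scales n f) (Q : ℕ) {a b c : ℕ} (hab : a ≤ b) (hbc : b ≤ c) (x : ℝ) :
    S.bs Q a c x = S.bs Q a b x + S.bs Q b c x := by
  classical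
  simp only [Scales.bs, Finset.sum_filter]
  exact (Finset.sum_Ico_consecutive _ hab hbc).symm

lemma Scales.abs_bs_le (S : Scales n f) (Q a b : ℕ) (x : ℝ) :
    |S.bs Q a b x| ≤ (b - a : ℕ) * (S.C * (1 + Q)) := by
  classical
  have hK0 : 0 ≤ S.C * (1 + Q) := mul_nonneg S.C_pos.le (by positivity)
  refine (Finset.abs_sum_le_sum_abs _ _).trans ?_
  refine (Finset.sum_le_sum fun k _ => S.bdd Q _).trans ?_
  rw [Finset.sum_const, nsmul_eq_mul]
  refine mul_le_mul_of_nonneg_right ?_ hK0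
  have := Finset.card_filter_le (Finset.Ico a b) (S.good Q)
  rw [Nat.card_Ico] at this
  exact_mod_cast this

/-- Replacing `f` by its approximation and dropping the bad indices costs at most `B 2^Q + 1`. -/
lemma Scales.abs_sub_bs_le (S : Scales n f) {B : ℝ} (hB : ∀ x, |f x| ≤ B) {Q M : ℕ} {x : ℝ}
    (hM : M ≤ 2 ^ (12 * Q))
    (hx : ∑ k ∈ Finset.range (2 ^ (12 * Q)), |f (n k * x) - S.T Q (n k * x)| ≤ 1) :
    |∑ k ∈ Finset.range M, f (n k * x) - S.bs Q 0 M x| ≤ 2 ^ Q * B + 1 := by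
  classical
  have hB0 : 0 ≤ B := (abs_nonneg _).trans (hB 0)
  have e : ∑ k ∈ Finset.range M, f (n k * x) - S.bs Q 0 M x =
      ∑ k ∈ (Finset.range M).filter (S.good Q), (f (n k * x) - S.T Q (n k * x)) +
      ∑ k ∈ (Finset.range M).filter (fun k => ¬ S.good Q k), f (n k * x) := by
    rw [Scales.bs, ← Finset.range_eq_Ico, Finset.sum_sub_distrib,
      ← Finset.sum_filter_add_sum_filter_not (Finset.range M) (S.good Q) (fun k => f (n k * x))]
    ring
  rw [e]
  refine (abs_add_le _ _).trans ?_
  rw [add_comm]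
  refine add_le_add ?_ ?_
  · refine (Finset.abs_sum_le_sum_abs _ _).trans ((Finset.sum_le_sum fun k _ => hB _).trans ?_)
    rw [Finset.sum_const, nsmul_eq_mul]
    refine mul_le_mul_of_nonneg_right ?_ hB0
    exact_mod_cast S.card_bad Q _ fun k hk => (Finset.mem_filter.1 hk).2
  · refine (Finset.abs_sum_le_sum_abs _ _).trans (le_trans ?_ hx)
    refine Finset.sum_le_sum_of_subset_of_nonneg ?_ fun _ _ _ => abs_nonneg _
    exact (Finset.filter_subset _ _).trans (Finset.range_mono hM)

/-- Markov's inequality for the `2p`-th moment of a block sum. -/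
theorem Scales.tail_le (S : Scales n f) (D : ℝ) {s2 : ℝ} (hs2 : ∫ x, f x ^ 2 ∂U < s2) :
    ∀ᶠ Q : ℕ in atTop, ∀ p : ℕ, 0 < p → (p:ℝ) ≤ D * log Q → ∀ (a b : ℕ) (V l : ℝ),
      ((b - a : ℕ) : ℝ) ≤ V → 2 ^ Q ≤ V → 0 < l →
      U.real {x | l ≤ |S.bs Q a b x|} ≤ 2 * (2 * p * s2 * V / l ^ 2) ^ p * exp (-p) := by
  classical
  filter_upwards [S.moment_le D hs2] with Q hQ p hp hpD a b V l hcard hV hl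
  have hV0 : 0 < V := lt_of_lt_of_le (by positivity) hV
  have h1 := (hQ p hp hpD ((Finset.Ico a b).filter (S.good Q))
    (fun k hk => (Finset.mem_filter.1 hk).2) (fun _ => 1) V hV0 (by
      simp only [one_pow, Finset.sum_const, nsmul_eq_mul, mul_one]
      refine le_trans ?_ hcard
      have := Finset.card_filter_le (Finset.Ico a b) (S.good Q)
      rw [Nat.card_Ico] at this
      exact_mod_cast this) (fun k _ => by simpa using hV)).1
  simp only [one_mul] at h1
  have hi : Integrable (fun x => (S.bs Q a b x) ^ (2 * p)) U :=
    integrable_of_bdd ((S.measurable_bs Q a b).pow_const _).aestronglyMeasurable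
      (B := ((b - a : ℕ) * (S.C * (1 + Q))) ^ (2 * p)) fun x => by
        rw [norm_pow]; exact pow_le_pow_left₀ (norm_nonneg _) (S.abs_bs_le Q a b x) _
  have h2 := measure_ge_le (g := fun x => (S.bs Q a b x) ^ (2 * p))
    (fun x => (even_two_mul p).pow_nonneg _) hi (pow_pos hl (2 * p)) h1
  refine le_trans (measureReal_mono ?_) (h2.trans (le_of_eq ?_))
  · intro x hx
    show l ^ (2 * p) ≤ (S.bs Q a b x) ^ (2 * p)
    rw [← (even_two_mul p).pow_abs (S.bs Q a b x)]
    exact pow_le_pow_left₀ hl.le hx _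
  · rw [div_pow, pow_mul l]; ring

lemma exp_neg_le_rpow {Q : ℕ} (hQ : 0 < Q) {a p : ℝ} (h : a * log Q ≤ p) :
    exp (-p) ≤ 1 / (Q:ℝ) ^ a := by
  have hQ' : (0:ℝ) < Q := by exact_mod_cast hQ
  rw [Real.rpow_def_of_pos hQ', one_div, ← Real.exp_neg]
  exact exp_le_exp.2 (by linarith)

/-- Coarse grid: almost surely, eventually in `Q`, sums up to multiples of `2 ^ (4Q - q)` are
controlled with the sharp constant. -/
lemma Scales.grid (S : Scales n f) {s2 ε : ℝ} (hs2 : ∫ x, f x ^ 2 ∂U < s2) (hε : 0 < ε) (q : ℕ) :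
    ∀ᵐ x ∂U, ∀ᶠ Q : ℕ in atTop, ∀ i ∈ Finset.Icc 1 (2 ^ (q + 4)),
      |S.bs Q 0 (i * 2 ^ (4 * Q - q)) x| ≤
        √(2 * ((1 + 2 * ε) * log Q) * s2 * (i * 2 ^ (4 * Q - q) : ℕ)) := by
  have hv0 : 0 ≤ ∫ x, f x ^ 2 ∂U := integral_nonneg fun x => sq_nonneg _
  have hs20 : 0 < s2 := by linarith
  have key := borel_cantelli (E := fun Q : ℕ => ⋃ i ∈ Finset.Icc 1 (2 ^ (q + 4)),
      {x | √(2 * ((1 + 2 * ε) * log Q) * s2 * (i * 2 ^ (4 * Q - q) : ℕ)) ≤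
        |S.bs Q 0 (i * 2 ^ (4 * Q - q)) x|})
    (a := fun Q : ℕ => (2 ^ (q + 4) * 2) * (1 / (Q:ℝ) ^ (1 + ε)))
    ((Real.summable_one_div_nat_rpow.2 (by linarith)).mul_left _) (by
      filter_upwards [S.tail_le (1 + 2 * ε) hs2, eventually_log_ge 1, eventually_log_ge (1 / ε),
        eventually_ge_atTop (q + 1)] with Q htail hl1 hl2 hQ
      refine (measureReal_biUnion_finset_le _ _).trans ?_
      have : ∀ i ∈ Finset.Icc 1 (2 ^ (q + 4)),
          U.real {x | √(2 * ((1 + 2 * ε) * log Q) * s2 * (i * 2 ^ (4 * Q - q) : ℕ)) ≤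
            |S.bs Q 0 (i * 2 ^ (4 * Q - q)) x|} ≤ 2 * (1 / (Q:ℝ) ^ (1 + ε)) := by
        intro i hi
        have hi1 := (Finset.mem_Icc.1 hi).1
        set p := ⌈(1 + ε) * log Q⌉₊ with hp
        have hp1 : (1 + ε) * log Q ≤ p := Nat.le_ceil _
        have hp2 : (p:ℝ) ≤ (1 + 2 * ε) * log Q := by
          have h1 := Nat.ceil_lt_add_one (show 0 ≤ (1 + ε) * log Q by positivity)
          rw [div_le_iff₀ hε] at hl2
          nlinarith
        have hppos : (0:ℝ) < p := by nlinarith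
        set V : ℝ := ((i * 2 ^ (4 * Q - q) : ℕ) : ℝ) with hV
        have hVQ : (2:ℝ) ^ Q ≤ V := by
          have : 2 ^ Q ≤ i * 2 ^ (4 * Q - q) :=
            calc 2 ^ Q ≤ 2 ^ (4 * Q - q) := Nat.pow_le_pow_right (by norm_num) (by omega)
              _ ≤ _ := Nat.le_mul_of_pos_left _ hi1
          rw [hV]; exact_mod_cast this
        have hV0 : 0 < V := lt_of_lt_of_le (by positivity) hVQ
        refine (htail p (by exact_mod_cast hppos) hp2 0 _ V _ (by simp [hV]) hVQ
          (by positivity)).trans ?_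
        rw [Real.sq_sqrt (by positivity)]
        have h3 : (2 * p * s2 * V / (2 * ((1 + 2 * ε) * log Q) * s2 * V)) ^ p ≤ 1 := by
          refine pow_le_one₀ (by positivity) ?_
          rw [div_le_one (by positivity)]
          gcongr
        have h4 := exp_neg_le_rpow (by omega : 0 < Q) hp1
        calc _ ≤ 2 * 1 * (1 / (Q:ℝ) ^ (1 + ε)) := by gcongr
          _ = _ := by ring
      refine (Finset.sum_le_sum this).trans (le_of_eq ?_)
      rw [Finset.sum_const, Nat.card_Icc, nsmul_eq_mul]
      push_cast [Nat.add_sub_cancel]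
      ring)
  filter_upwards [key] with x hx
  filter_upwards [hx] with Q hQ i hi
  simp only [Set.mem_iUnion, not_exists, Set.mem_ofPred_eq] at hQ
  exact (not_le.1 (hQ i hi)).le

/-- Chaining: almost surely, eventually in `Q`, all dyadic block sums of length `2 ^ (4Q - m)`
are at most `(7/8) ^ m √(16 ^ Q log Q)`. -/
lemma Scales.chain (S : Scales n f) {s2 : ℝ} (hs2 : ∫ x, f x ^ 2 ∂U < s2) {q : ℕ}
    (hq : ∀ m ≥ q, 8 * s2 * (32 / 49) ^ m ≤ (3 / 4 : ℝ) ^ m) :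
    ∀ᵐ x ∂U, ∀ᶠ Q : ℕ in atTop, ∀ m ∈ Finset.Icc (q + 1) (3 * Q), ∀ j ∈ Finset.range (2 ^ (m + 4)),
      |S.bs Q (j * 2 ^ (4 * Q - m)) ((j + 1) * 2 ^ (4 * Q - m)) x| ≤
        (7 / 8) ^ m * √(16 ^ Q * log Q) := by
  have hv0 : 0 ≤ ∫ x, f x ^ 2 ∂U := integral_nonneg fun x => sq_nonneg _
  have hs20 : 0 < s2 := by linarith
  have key := borel_cantelli (E := fun Q : ℕ => ⋃ m ∈ Finset.Icc (q + 1) (3 * Q),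
      ⋃ j ∈ Finset.range (2 ^ (m + 4)),
      {x | (7 / 8) ^ m * √(16 ^ Q * log Q) ≤
        |S.bs Q (j * 2 ^ (4 * Q - m)) ((j + 1) * 2 ^ (4 * Q - m)) x|})
    (a := fun Q : ℕ => 96 * (1 / (Q:ℝ) ^ 2))
    ((Real.summable_one_div_nat_pow.2 (by norm_num)).mul_left _) (by
      filter_upwards [S.tail_le 4 hs2, eventually_log_ge 1, eventually_ge_atTop 1]
        with Q htail hl1 hQ
      have hQ' : (0:ℝ) < Q := by exact_mod_cast hQ
      refine (measureReal_biUnion_finset_le _ _).trans ?_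
      have : ∀ m ∈ Finset.Icc (q + 1) (3 * Q), U.real (⋃ j ∈ Finset.range (2 ^ (m + 4)),
          {x | (7 / 8) ^ m * √(16 ^ Q * log Q) ≤
          |S.bs Q (j * 2 ^ (4 * Q - m)) ((j + 1) * 2 ^ (4 * Q - m)) x|}) ≤
          32 * (1 / (Q:ℝ) ^ 3) := by
        intro m hm
        obtain ⟨hm1, hm2⟩ := Finset.mem_Icc.1 hm
        set p := ⌈3 * log (Q:ℝ)⌉₊ with hp
        have hp1 : 3 * log (Q:ℝ) ≤ p := Nat.le_ceil _
        have hp2 : (p:ℝ) ≤ 4 * log Q := by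
          have h1 := Nat.ceil_lt_add_one (show 0 ≤ 3 * log (Q:ℝ) by positivity)
          linarith
        have hp3 : 3 ≤ p := by
          have : (3:ℝ) ≤ p := by linarith
          exact_mod_cast this
        refine (measureReal_biUnion_finset_le _ _).trans ?_
        have each : ∀ j ∈ Finset.range (2 ^ (m + 4)),
            U.real {x | (7 / 8) ^ m * √(16 ^ Q * log Q) ≤
            |S.bs Q (j * 2 ^ (4 * Q - m)) ((j + 1) * 2 ^ (4 * Q - m)) x|} ≤
            2 * ((3 / 4) ^ 3) ^ m * (1 / (Q:ℝ) ^ 3) := by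
          intro j _
          refine (htail p (by omega) hp2 _ _ (2 ^ (4 * Q - m)) _ (by
              rw [add_mul, one_mul, Nat.add_sub_cancel_left]; push_cast; exact le_rfl)
            (pow_le_pow_right₀ one_le_two (by omega)) (by positivity)).trans ?_
          have hexp : exp (-(p:ℝ)) ≤ 1 / (Q:ℝ) ^ 3 := by
            have := exp_neg_le_rpow hQ hp1
            rwa [show (3:ℝ) = ((3:ℕ):ℝ) by norm_num, Real.rpow_natCast] at this
          have e16 : (16:ℝ) ^ Q = 2 ^ (4 * Q - m) * 2 ^ m := by
            rw [← pow_add, Nat.sub_add_cancel (by omega), pow_mul]; norm_num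
          have hbase : 2 * p * s2 * 2 ^ (4 * Q - m) / ((7 / 8) ^ m * √(16 ^ Q * log Q)) ^ 2 ≤
              (3 / 4 : ℝ) ^ m := by
            refine le_trans ?_ (hq m (by omega))
            rw [mul_pow, Real.sq_sqrt (by positivity), div_le_iff₀ (by positivity), e16]
            have e2 : (32 / 49 : ℝ) ^ m * (((7 / 8) ^ m) ^ 2 * 2 ^ m) = 1 := by
              rw [← pow_mul, mul_comm m 2, pow_mul, ← mul_pow, ← mul_pow]; norm_num
            calc 2 * p * s2 * 2 ^ (4 * Q - m) ≤ 2 * (4 * log Q) * s2 * 2 ^ (4 * Q - m) := by gcongr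
              _ = 8 * s2 * ((32 / 49 : ℝ) ^ m * (((7 / 8) ^ m) ^ 2 * 2 ^ m)) *
                  (2 ^ (4 * Q - m) * log Q) := by rw [e2]; ring
              _ = _ := by ring
          have hpow : (2 * p * s2 * 2 ^ (4 * Q - m) /
              ((7 / 8) ^ m * √(16 ^ Q * log Q)) ^ 2) ^ p ≤ ((3 / 4 : ℝ) ^ 3) ^ m := by
            calc _ ≤ ((3 / 4 : ℝ) ^ m) ^ p := pow_le_pow_left₀ (by positivity) hbase p
              _ ≤ ((3 / 4 : ℝ) ^ m) ^ 3 := pow_le_pow_of_le_one (by positivity)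
                  (pow_le_one₀ (by norm_num) (by norm_num)) hp3
              _ = _ := by rw [← pow_mul, ← pow_mul, mul_comm]
          gcongr
        refine (Finset.sum_le_sum each).trans ?_
        rw [Finset.sum_const, Finset.card_range, nsmul_eq_mul]
        push_cast
        have e3 : (2:ℝ) ^ (m + 4) * (2 * ((3 / 4) ^ 3) ^ m * (1 / (Q:ℝ) ^ 3)) =
            32 * (27 / 32) ^ m * (1 / (Q:ℝ) ^ 3) := by
          have : (27 / 32 : ℝ) ^ m = 2 ^ m * ((3 / 4) ^ 3) ^ m := by rw [← mul_pow]; norm_num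
          rw [this, pow_add]; ring
        rw [e3]
        have : (27 / 32 : ℝ) ^ m ≤ 1 := pow_le_one₀ (by norm_num) (by norm_num)
        have h0 : 0 < 1 / (Q:ℝ) ^ 3 := by positivity
        nlinarith
      refine (Finset.sum_le_sum this).trans ?_
      rw [Finset.sum_const, Nat.card_Icc, nsmul_eq_mul]
      have hc : ((3 * Q + 1 - (q + 1) : ℕ) : ℝ) ≤ 3 * Q := by
        have : 3 * Q + 1 - (q + 1) ≤ 3 * Q := by omega
        exact_mod_cast this
      calc _ ≤ (3 * Q : ℝ) * (32 * (1 / (Q:ℝ) ^ 3)) := by gcongr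
        _ = _ := by field_simp; ring)
  filter_upwards [key] with x hx
  filter_upwards [hx] with Q hQ m hm j hj
  simp only [Set.mem_iUnion, not_exists, Set.mem_ofPred_eq] at hQ
  exact (not_le.1 (hQ m hm j hj)).le

end LIL

/-! ### The upper bound -/

namespace LIL

variable {n : ℕ → ℕ} {f : ℝ → ℝ}

/-- Dyadic chaining for one fixed point: from the coarse grid down to blocks of length `2 ^ Q`. -/
lemma Scales.chain_sum (S : Scales n f) {Q q M : ℕ} {x A R : ℝ} (hM2 : M < 16 ^ (Q + 1))
    (hbase : |S.bs Q 0 (M / 2 ^ (4 * Q - q) * 2 ^ (4 * Q - q)) x| ≤ A)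
    (hR : 0 ≤ R)
    (hch : ∀ m ∈ Finset.Icc (q + 1) (3 * Q), ∀ j ∈ Finset.range (2 ^ (m + 4)),
      |S.bs Q (j * 2 ^ (4 * Q - m)) ((j + 1) * 2 ^ (4 * Q - m)) x| ≤ (7 / 8) ^ m * R) :
    ∀ m, q ≤ m → m ≤ 3 * Q → |S.bs Q 0 (M / 2 ^ (4 * Q - m) * 2 ^ (4 * Q - m)) x| ≤
      A + 7 * ((7 / 8) ^ q - (7 / 8) ^ m) * R := by
  intro m hqm
  induction m, hqm using Nat.le_induction with
  | base => intro _; simpa using hbase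
  | succ m hm ih =>
    intro hm3
    have ih := ih (by omega)
    set d := 2 ^ (4 * Q - (m + 1)) with hd
    have hd0 : 0 < d := by positivity
    have e : 2 ^ (4 * Q - m) = d * 2 := by
      rw [hd, ← pow_succ]; congr 1; omega
    rw [e] at ih
    have hdiv : M / (d * 2) = M / d / 2 := (Nat.div_div_eq_div_mul M d 2).symm
    rw [hdiv] at ih
    have hstep : (7 / 8 : ℝ) ^ (m + 1) = 7 * ((7 / 8) ^ m - (7 / 8) ^ (m + 1)) := by
      rw [pow_succ]; ring
    set a := M / d with ha
    rcases Nat.even_or_odd' a with ⟨b, hb | hb⟩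
    · have e1 : a / 2 * (d * 2) = a * d := by
        rw [hb, Nat.mul_div_cancel_left _ (by norm_num)]; ring
      rw [e1] at ih
      refine ih.trans ?_
      have : (7 / 8 : ℝ) ^ (m + 1) ≤ (7 / 8) ^ m :=
        pow_le_pow_of_le_one (by norm_num) (by norm_num) (by omega)
      gcongr
    · have e1 : a / 2 * (d * 2) = (2 * b) * d := by
        have : a / 2 = b := by omega
        rw [this]; ring
      rw [e1] at ih
      have hj : 2 * b < 2 ^ (m + 1 + 4) := by
        have h1 : a * d ≤ M := Nat.div_mul_le_self M d
        have h2 : (16:ℕ) ^ (Q + 1) = 2 ^ (m + 1 + 4) * d := by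
          rw [hd, ← pow_add, show (16:ℕ) = 2 ^ 4 by norm_num, ← pow_mul]; congr 1; omega
        have h3 : a * d < 2 ^ (m + 1 + 4) * d := by omega
        have := lt_of_mul_lt_mul_right h3 (Nat.zero_le d)
        omega
      have hc := hch (m + 1) (Finset.mem_Icc.2 ⟨by omega, hm3⟩) (2 * b) (Finset.mem_range.2 hj)
      rw [← hb] at hc
      rw [S.bs_add Q (Nat.zero_le (2 * b * d)) (by rw [hb]; gcongr; omega : 2 * b * d ≤ a * d) x]
      refine (abs_add_le _ _).trans ((add_le_add ih hc).trans (le_of_eq ?_))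
      rw [hstep]; ring

lemma tendsto_log16 : Tendsto (fun M : ℕ => Nat.log 16 M) atTop atTop := by
  refine tendsto_atTop_atTop.2 fun b => ⟨16 ^ b, fun M hM => ?_⟩
  exact Nat.le_log_of_pow_le (by norm_num) hM

set_option maxHeartbeats 1000000 in
/-- The upper half of the law of the iterated logarithm. For `16 ^ Q ≤ M < 16 ^ (Q + 1)` the partial
sum is split into a sum up to a point of the coarse grid, dyadic blocks of length at least `2 ^ Q`,
and a remainder that is bounded trivially. -/
theorem Scales.upper (S : Scales n f) {B : ℝ} (hB : ∀ x, |f x| ≤ B) {s : ℝ} (hs0 : 0 < s)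
    (hs : ∫ x, f x ^ 2 ∂U < s ^ 2) :
    ∀ᵐ x ∂U, ∀ᶠ M : ℕ in atTop,
      |∑ k ∈ Finset.range M, f (n k * x)| ≤ s * √(2 * M * log (log M)) := by
  set v := ∫ x, f x ^ 2 ∂U with hv
  have hv0 : 0 ≤ v := integral_nonneg fun x => sq_nonneg _
  have hB0 : 0 ≤ B := (abs_nonneg _).trans (hB 0)
  set t := √((v + s ^ 2) / 2) with ht
  have ht2 : t ^ 2 = (v + s ^ 2) / 2 := Real.sq_sqrt (by positivity)
  have ht0 : 0 ≤ t := Real.sqrt_nonneg _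
  have hts : t < s := by
    refine lt_of_pow_lt_pow_left₀ 2 hs0.le ?_
    rw [ht2]; linarith
  set s2 := (v + t ^ 2) / 2 with hs2
  have hs2v : v < s2 := by rw [hs2]; linarith
  have hs20 : 0 < s2 := by linarith
  set ε := (t ^ 2 / s2 - 1) / 2 with hε
  have hε0 : 0 < ε := by
    rw [hε]
    have : 1 < t ^ 2 / s2 := by rw [one_lt_div hs20]; rw [hs2]; linarith
    linarith
  have hεs : (1 + 2 * ε) * s2 = t ^ 2 := by rw [hε]; field_simp; ring
  set η := (s - t) / 2 with hη
  have hη0 : 0 < η := by rw [hη]; linarith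
  -- choice of the resolution `q` of the coarse grid
  have hq1 : ∀ᶠ q : ℕ in atTop, 8 * s2 * (128 / 147 : ℝ) ^ q ≤ 1 := by
    have : Tendsto (fun q : ℕ => 8 * s2 * (128 / 147 : ℝ) ^ q) atTop (𝓝 (8 * s2 * 0)) :=
      (tendsto_pow_atTop_nhds_zero_of_lt_one (by norm_num) (by norm_num)).const_mul _
    rw [mul_zero] at this
    exact this.eventually (ge_mem_nhds one_pos)
  have hq2 : ∀ᶠ q : ℕ in atTop, 7 * (7 / 8 : ℝ) ^ q ≤ η := by
    have : Tendsto (fun q : ℕ => 7 * (7 / 8 : ℝ) ^ q) atTop (𝓝 (7 * 0)) :=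
      (tendsto_pow_atTop_nhds_zero_of_lt_one (by norm_num) (by norm_num)).const_mul _
    rw [mul_zero] at this
    exact this.eventually (ge_mem_nhds hη0)
  obtain ⟨q, hq1, hq2⟩ := ((eventually_atTop.1 hq1).imp fun q h => h) |>.elim
    (fun a ha => (hq2.and (eventually_ge_atTop a)).exists.elim fun b hb =>
      (⟨b, fun m hm => ha m (hb.2.trans hm), hb.1⟩ :
        ∃ q, (∀ m ≥ q, 8 * s2 * (128 / 147 : ℝ) ^ m ≤ 1) ∧ 7 * (7 / 8 : ℝ) ^ q ≤ η))
  have hq3 : ∀ m ≥ q, 8 * s2 * (32 / 49) ^ m ≤ (3 / 4 : ℝ) ^ m := by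
    intro m hm
    have e : (32 / 49 : ℝ) ^ m = (128 / 147) ^ m * (3 / 4) ^ m := by rw [← mul_pow]; norm_num
    rw [e, ← mul_assoc]
    exact mul_le_of_le_one_left (by positivity) (hq1 m hm)
  filter_upwards [S.err, S.grid hs2v hε0 q, S.chain hs2v hq3] with x h1 h2 h3
  have hall := h1.and (h2.and (h3.and ((eventually_log_ge 1).and ((eventually_ge_atTop (q + 1)).and
    (eventually_poly_le ((B + S.C + 1) / η) 1 one_lt_two)))))
  filter_upwards [tendsto_log16.eventually hall, eventually_ge_atTop 1] with M hM hM1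
  set Q := Nat.log 16 M with hQ
  obtain ⟨h1, h2, h3, hl, hQq, hpoly⟩ := hM
  have hM16 : 16 ^ Q ≤ M := Nat.pow_log_le_self 16 (by omega)
  have hM16' : M < 16 ^ (Q + 1) := Nat.lt_pow_succ_log_self (by norm_num) M
  have hM16r : (16:ℝ) ^ Q ≤ M := by exact_mod_cast hM16
  have hQ1 : (1:ℝ) ≤ Q := by exact_mod_cast (by omega : 1 ≤ Q)
  set W := √(M * log Q) with hW
  have hW4 : (4:ℝ) ^ Q ≤ W := by
    refine Real.le_sqrt_of_sq_le ?_
    rw [← pow_mul, mul_comm Q 2, pow_mul]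
    norm_num
    nlinarith [pow_pos (show (0:ℝ) < 16 by norm_num) Q]
  -- rounding `M` down to the coarse grid, where the sharp constant is available
  have hbase : |S.bs Q 0 (M / 2 ^ (4 * Q - q) * 2 ^ (4 * Q - q)) x| ≤ √2 * t * W := by
    have hi : M / 2 ^ (4 * Q - q) ∈ Finset.Icc 1 (2 ^ (q + 4)) := by
      have e16 : (16:ℕ) ^ Q = 2 ^ (4 * Q) := by rw [pow_mul]; norm_num
      rw [Finset.mem_Icc]
      constructor
      · rw [Nat.one_le_div_iff (by positivity)]
        refine le_trans (Nat.pow_le_pow_right (by norm_num) (by omega)) (e16 ▸ hM16)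
      · refine (Nat.div_lt_of_lt_mul ?_).le
        rw [← pow_add]
        refine lt_of_lt_of_le hM16' (le_of_eq ?_)
        rw [show (16:ℕ) = 2 ^ 4 by norm_num, ← pow_mul]; congr 1; omega
    refine (h2 _ hi).trans ?_
    have e : √2 * t * W = √(2 * t ^ 2 * (M * log Q)) := by
      rw [Real.sqrt_mul (by positivity), Real.sqrt_mul (by norm_num), Real.sqrt_sq ht0]
    rw [e]
    refine Real.sqrt_le_sqrt ?_
    have hle : ((M / 2 ^ (4 * Q - q) * 2 ^ (4 * Q - q) : ℕ) : ℝ) ≤ M := by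
      exact_mod_cast Nat.div_mul_le_self M _
    calc _ ≤ 2 * ((1 + 2 * ε) * log Q) * s2 * M := by gcongr
      _ = 2 * ((1 + 2 * ε) * s2) * (M * log Q) := by ring
      _ = _ := by rw [hεs]
  have hR : √(16 ^ Q * log (Q:ℝ)) ≤ W := Real.sqrt_le_sqrt (by gcongr)
  have hfine := S.chain_sum hM16' hbase (Real.sqrt_nonneg _) h3 (3 * Q) (by omega) le_rfl
  have e4 : 4 * Q - 3 * Q = Q := by omega
  rw [e4] at hfine
  -- the last incomplete block
  have hlast : |S.bs Q (M / 2 ^ Q * 2 ^ Q) M x| ≤ 2 ^ Q * (S.C * (1 + Q)) := by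
    refine (S.abs_bs_le Q _ _ x).trans ?_
    refine mul_le_mul_of_nonneg_right ?_ (mul_nonneg S.C_pos.le (by positivity))
    have h5 : M - M / 2 ^ Q * 2 ^ Q ≤ 2 ^ Q := by
      have h6 := Nat.div_add_mod' M (2 ^ Q)
      have h7 := Nat.mod_lt M (show 0 < 2 ^ Q by positivity)
      omega
    exact_mod_cast h5
  have hbs : |S.bs Q 0 M x| ≤ √2 * t * W + η * W + 2 ^ Q * (S.C * (1 + Q)) := by
    rw [S.bs_add Q (Nat.zero_le _) (Nat.div_mul_le_self M (2 ^ Q)) x]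
    refine (abs_add_le _ _).trans (add_le_add (hfine.trans ?_) hlast)
    have h5 : 7 * ((7 / 8 : ℝ) ^ q - (7 / 8) ^ (3 * Q)) ≤ η := by
      have : (0:ℝ) < (7 / 8) ^ (3 * Q) := by positivity
      linarith
    have : 7 * ((7 / 8 : ℝ) ^ q - (7 / 8) ^ (3 * Q)) * √(16 ^ Q * log (Q:ℝ)) ≤ η * W :=
      (mul_le_mul_of_nonneg_right h5 (Real.sqrt_nonneg _)).trans
        (mul_le_mul_of_nonneg_left hR hη0.le)
    linarith
  have hfin := S.abs_sub_bs_le hB (Q := Q) (M := M) (x := x) (by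
    refine hM16'.le.trans ?_
    rw [show (16:ℕ) = 2 ^ 4 by norm_num, ← pow_mul]
    exact Nat.pow_le_pow_right (by norm_num) (by omega)) h1
  have hsmall : 2 ^ Q * (S.C * (1 + Q)) + (2 ^ Q * B + 1) ≤ η * W := by
    rw [pow_one, div_mul_eq_mul_div, div_le_iff₀ hη0] at hpoly
    have h2Q : (1:ℝ) ≤ 2 ^ Q := one_le_pow₀ one_le_two
    calc 2 ^ Q * (S.C * (1 + Q)) + (2 ^ Q * B + 1)
        ≤ 2 ^ Q * ((B + S.C + 1) * (1 + Q)) := by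
          have : (2:ℝ) ^ Q * B + 1 ≤ 2 ^ Q * ((B + 1) * (1 + Q)) := by
            have h6 : B + 1 ≤ (B + 1) * (1 + Q) := by nlinarith
            nlinarith
          linarith
      _ ≤ 2 ^ Q * (2 ^ Q * η) := by gcongr
      _ = η * 4 ^ Q := by
          rw [show (4:ℝ) = 2 * 2 by norm_num, mul_pow]; ring
      _ ≤ η * W := by gcongr
  have htri : |∑ k ∈ Finset.range M, f (n k * x)| ≤
      |∑ k ∈ Finset.range M, f (n k * x) - S.bs Q 0 M x| + |S.bs Q 0 M x| := by
    have := abs_add_le (∑ k ∈ Finset.range M, f (n k * x) - S.bs Q 0 M x) (S.bs Q 0 M x)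
    simpa using this
  have hW0 : 0 ≤ W := Real.sqrt_nonneg _
  have hsq2 : 1 ≤ √2 := by rw [Real.one_le_sqrt]; norm_num
  have hloglog : log (Q:ℝ) ≤ log (log M) := by
    refine Real.log_le_log (by linarith) ?_
    have h5 : log ((16:ℝ) ^ Q) ≤ log M := Real.log_le_log (by positivity) hM16r
    rw [Real.log_pow] at h5
    have h6 : (1:ℝ) ≤ log 16 := by
      rw [Real.le_log_iff_exp_le (by norm_num)]
      linarith [Real.exp_one_lt_d9]
    nlinarith
  calc |∑ k ∈ Finset.range M, f (n k * x)| ≤ √2 * t * W + 2 * η * W := by linarith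
    _ ≤ √2 * t * W + √2 * (s - t) * W := by
        have : 2 * η = s - t := by rw [hη]; ring
        rw [this]
        have h7 : s - t ≤ √2 * (s - t) := le_mul_of_one_le_left (by linarith) hsq2
        have h8 := mul_le_mul_of_nonneg_right h7 hW0
        linarith
    _ = s * (√2 * W) := by ring
    _ = s * √(2 * M * log Q) := by rw [hW, ← Real.sqrt_mul (by norm_num), mul_assoc 2]
    _ ≤ s * √(2 * M * log (log M)) := by gcongr

end LIL

/-! ### A periodic test function and the second moment method -/

namespace LIL

/-- The periodic test function `cos (θ (y - t)) ^ (2 K)`, concentrated near `y = t`. -/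
def phi (K : ℕ) (θ t y : ℝ) : ℝ := cos (θ * (y - t)) ^ (2 * K)

/-- Frequencies of `phi`. -/
def lam (K : ℕ) (θ : ℝ) (b : ℕ) : ℝ := (2 * b - 2 * K) * θ

/-- Fourier coefficients of `phi`. -/
def coef (K : ℕ) (θ t : ℝ) (b : ℕ) : ℂ :=
  ((2 * K).choose b / 4 ^ K : ℝ) * Complex.exp ((-(lam K θ b * t) : ℝ) * Complex.I)

lemma phi_nonneg (K : ℕ) (θ t y : ℝ) : 0 ≤ phi K θ t y := (even_two_mul K).pow_nonneg _

lemma phi_le_one (K : ℕ) (θ t y : ℝ) : phi K θ t y ≤ 1 := by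
  unfold phi
  rw [pow_mul]
  exact pow_le_one₀ (sq_nonneg _) (cos_sq_le_one _)

lemma measurable_phi (K : ℕ) (θ t : ℝ) : Measurable (phi K θ t) := by
  unfold phi; fun_prop

lemma phi_eq (K : ℕ) (θ t y : ℝ) : (phi K θ t y : ℂ) =
    ∑ b ∈ Finset.range (2 * K + 1), coef K θ t b * Complex.exp ((lam K θ b * y : ℝ) * Complex.I) := by
  unfold phi
  push_cast
  rw [Complex.cos, div_pow, add_pow, Finset.sum_div]
  refine Finset.sum_congr rfl fun b hb => ?_
  have hb : b ≤ 2 * K := by have := Finset.mem_range.1 hb; omega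
  unfold coef lam
  rw [← Complex.exp_nat_mul, ← Complex.exp_nat_mul, ← Complex.exp_add, mul_assoc _ (Complex.exp _),
    ← Complex.exp_add, pow_mul]
  push_cast [Nat.cast_sub hb]
  rw [show (2:ℂ) ^ 2 = 4 by norm_num]
  have : ∀ z w : ℂ, z = w → Complex.exp z * ((2 * K).choose b : ℂ) / 4 ^ K =
      ((2 * K).choose b : ℂ) / 4 ^ K * Complex.exp w := by
    rintro z w rfl; ring
  refine this _ _ ?_
  ring

lemma abs_lam_le {K : ℕ} {θ Λ : ℝ} (hΛ : 2 * K * |θ| ≤ Λ) {b : ℕ}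
    (hb : b ∈ Finset.range (2 * K + 1)) : |lam K θ b| ≤ Λ := by
  refine le_trans ?_ hΛ
  unfold lam
  rw [abs_mul]
  refine mul_le_mul_of_nonneg_right ?_ (abs_nonneg _)
  have hb : (b:ℝ) ≤ 2 * K := by
    have := Finset.mem_range.1 hb
    exact_mod_cast (by omega : b ≤ 2 * K)
  rw [abs_le]
  constructor <;> linarith [(Nat.cast_nonneg b : (0:ℝ) ≤ b)]

lemma sum_norm_coef (K : ℕ) (θ t : ℝ) : ∑ b ∈ Finset.range (2 * K + 1), ‖coef K θ t b‖ = 1 := by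
  have : ∀ b, ‖coef K θ t b‖ = (2 * K).choose b / 4 ^ K := by
    intro b
    unfold coef
    rw [norm_mul, Complex.norm_exp_ofReal_mul_I, mul_one, Complex.norm_real]
    exact abs_of_nonneg (by positivity)
  simp only [this]
  rw [← Finset.sum_div, ← Nat.cast_sum, Nat.sum_range_choose, pow_mul]
  norm_num

/-- Gaussian expectation of the test function. -/
def gmean (K : ℕ) (θ t : ℝ) (v : NNReal) : ℝ :=
  ∫ y, phi K θ t y ∂(ProbabilityTheory.gaussianReal 0 v)

lemma integrable_exp_I {Ω : Type*} [MeasurableSpace Ω] {μ : Measure Ω} [IsProbabilityMeasure μ]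
    {g : Ω → ℝ} (hg : Measurable g) :
    Integrable (fun x => Complex.exp ((g x : ℝ) * Complex.I)) μ :=
  Integrable.of_bound (by fun_prop) 1 (ae_of_all _ fun x => by
    rw [Complex.norm_exp_ofReal_mul_I])

lemma gmean_eq (K : ℕ) (θ t : ℝ) (v : NNReal) : (gmean K θ t v : ℂ) =
    ∑ b ∈ Finset.range (2 * K + 1), coef K θ t b * (exp (-(v * lam K θ b ^ 2) / 2) : ℝ) := by
  unfold gmean
  rw [← integral_complex_ofReal]
  simp only [phi_eq]
  rw [integral_finsetSum _ fun b _ => (integrable_exp_I (by fun_prop)).const_mul _]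
  refine Finset.sum_congr rfl fun b _ => ?_
  rw [integral_const_mul]
  congr 1
  have := ProbabilityTheory.charFun_gaussianReal (μ := 0) (v := v) (lam K θ b)
  rw [charFun_apply_real] at this
  push_cast at this ⊢
  rw [this]
  congr 1
  simp
  ring

lemma gmean_nonneg (K : ℕ) (θ t : ℝ) (v : NNReal) : 0 ≤ gmean K θ t v :=
  integral_nonneg fun y => phi_nonneg K θ t y

lemma gmean_le_one (K : ℕ) (θ t : ℝ) (v : NNReal) : gmean K θ t v ≤ 1 := by
  have : gmean K θ t v ≤ ∫ y, (1:ℝ) ∂(ProbabilityTheory.gaussianReal 0 v) :=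
    integral_mono (Integrable.of_bound (measurable_phi K θ t).aestronglyMeasurable 1
      (ae_of_all _ fun y => by
        rw [Real.norm_eq_abs, abs_of_nonneg (phi_nonneg K θ t y)]; exact phi_le_one K θ t y))
      (integrable_const _) fun y => phi_le_one K θ t y
  simpa using this

lemma norm_sum_mul_sub_le {ι : Type*} (s : Finset ι) (c A B : ι → ℂ) {δ : ℝ}
    (hc : ∑ b ∈ s, ‖c b‖ ≤ 1) (hδ : 0 ≤ δ) (h : ∀ b ∈ s, ‖A b - B b‖ ≤ δ) :
    ‖∑ b ∈ s, c b * A b - ∑ b ∈ s, c b * B b‖ ≤ δ := by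
  rw [← Finset.sum_sub_distrib]
  refine (norm_sum_le _ _).trans ?_
  calc ∑ b ∈ s, ‖c b * A b - c b * B b‖ ≤ ∑ b ∈ s, ‖c b‖ * δ := by
        refine Finset.sum_le_sum fun b hb => ?_
        rw [← mul_sub, norm_mul]
        exact mul_le_mul_of_nonneg_left (h b hb) (norm_nonneg _)
    _ = (∑ b ∈ s, ‖c b‖) * δ := by rw [Finset.sum_mul]
    _ ≤ δ := mul_le_of_le_one_left hδ hc

/-- Expectation of the test function of one block compared with its Gaussian mean. -/
lemma abs_integral_phi_sub {Y : ℝ → ℝ} (hY : Measurable Y) {v : NNReal} {K : ℕ}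
    {θ t Λ δ : ℝ} (hΛ : 2 * K * |θ| ≤ Λ) (hδ : 0 ≤ δ)
    (h : ∀ a, |a| ≤ Λ → ‖∫ x, Complex.exp ((a * Y x : ℝ) * Complex.I) ∂U -
      (exp (-(v * a ^ 2) / 2) : ℝ)‖ ≤ δ) :
    |∫ x, phi K θ t (Y x) ∂U - gmean K θ t v| ≤ δ := by
  rw [← Real.norm_eq_abs, ← Complex.norm_real]
  push_cast
  rw [gmean_eq, ← integral_complex_ofReal]
  simp only [phi_eq]
  rw [integral_finsetSum _ fun b _ => (integrable_exp_I (by fun_prop)).const_mul _]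
  simp only [integral_const_mul]
  exact norm_sum_mul_sub_le _ _ _ _ (sum_norm_coef K θ t).le hδ
    fun b hb => h _ (abs_lam_le hΛ hb)

/-- Two blocks: the test functions are nearly uncorrelated. -/
lemma abs_integral_phi_mul_sub {Y Z : ℝ → ℝ} (hY : Measurable Y) (hZ : Measurable Z) {v : NNReal}
    {K : ℕ} {θ t Λ δ : ℝ} (hΛ : 2 * K * |θ| ≤ Λ) (hδ : 0 ≤ δ)
    (h : ∀ a b, |a| ≤ Λ → |b| ≤ Λ → ‖∫ x, Complex.exp ((a * Y x + b * Z x : ℝ) * Complex.I) ∂U -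
      (exp (-(v * (a ^ 2 + b ^ 2)) / 2) : ℝ)‖ ≤ δ) :
    |∫ x, phi K θ t (Y x) * phi K θ t (Z x) ∂U - gmean K θ t v ^ 2| ≤ δ := by
  rw [← Real.norm_eq_abs, ← Complex.norm_real, sq]
  push_cast
  rw [← integral_complex_ofReal]
  simp only [Complex.ofReal_mul]
  simp only [phi_eq, gmean_eq]
  simp only [Finset.sum_mul_sum, ← Finset.sum_product']
  set s := Finset.range (2 * K + 1) with hs
  set A : ℕ × ℕ → ℂ := fun p => ∫ x, Complex.exp ((lam K θ p.1 * Y x + lam K θ p.2 * Z x : ℝ) *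
    Complex.I) ∂U with hA
  set G : ℕ × ℕ → ℂ := fun p => (exp (-(v * (lam K θ p.1 ^ 2 + lam K θ p.2 ^ 2)) / 2) : ℝ) with hG
  set c : ℕ × ℕ → ℂ := fun p => coef K θ t p.1 * coef K θ t p.2 with hc
  have e1 : ∫ x, ∑ p ∈ s ×ˢ s,
      (coef K θ t p.1 * Complex.exp ((lam K θ p.1 * Y x : ℝ) * Complex.I)) *
      (coef K θ t p.2 * Complex.exp ((lam K θ p.2 * Z x : ℝ) * Complex.I)) ∂U =
      ∑ p ∈ s ×ˢ s, c p * A p := by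
    have e : ∀ x, ∀ p : ℕ × ℕ,
        (coef K θ t p.1 * Complex.exp ((lam K θ p.1 * Y x : ℝ) * Complex.I)) *
        (coef K θ t p.2 * Complex.exp ((lam K θ p.2 * Z x : ℝ) * Complex.I)) =
        c p * Complex.exp ((lam K θ p.1 * Y x + lam K θ p.2 * Z x : ℝ) * Complex.I) := by
      intro x p
      rw [mul_mul_mul_comm, ← Complex.exp_add]
      congr 2
      push_cast
      ring
    simp only [e]
    rw [integral_finsetSum _ fun b _ => (integrable_exp_I (by fun_prop)).const_mul _]
    simp only [integral_const_mul]
    rfl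
  have e2 : ∑ p ∈ s ×ˢ s, (coef K θ t p.1 * (exp (-(v * lam K θ p.1 ^ 2) / 2) : ℝ)) *
      (coef K θ t p.2 * (exp (-(v * lam K θ p.2 ^ 2) / 2) : ℝ)) = ∑ p ∈ s ×ˢ s, c p * G p := by
    refine Finset.sum_congr rfl fun p _ => ?_
    rw [mul_mul_mul_comm, ← Complex.ofReal_mul, ← Real.exp_add]
    simp only [hc, hG]
    congr 3
    ring
  rw [e1, e2]
  refine norm_sum_mul_sub_le _ _ _ _ (le_of_eq ?_) hδ fun p hp => ?_
  · simp only [hc, norm_mul]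
    rw [Finset.sum_product]
    dsimp only
    rw [← Finset.sum_mul_sum, sum_norm_coef, one_mul]
  · rw [Finset.mem_product] at hp
    exact h _ _ (abs_lam_le hΛ hp.1) (abs_lam_le hΛ hp.2)

/-- Second moment bound for the number of blocks close to the target, weighted by `phi`. -/
lemma second_moment {X : ℕ → ℝ → ℝ} (hX : ∀ i, Measurable (X i)) {v : NNReal} {K : ℕ}
    {θ t Λ δ : ℝ} (hΛ : 2 * K * |θ| ≤ Λ) (hδ : 0 ≤ δ) (J : ℕ)
    (h : ∀ i ≥ J, ∀ j ≥ J, i ≠ j → ∀ a b, |a| ≤ Λ → |b| ≤ Λ →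
      ‖∫ x, Complex.exp ((a * X i x + b * X j x : ℝ) * Complex.I) ∂U -
        (exp (-(v * (a ^ 2 + b ^ 2)) / 2) : ℝ)‖ ≤ δ) :
    ∫ x, (∑ i ∈ Finset.Ico J (2 * J), (phi K θ t (X i x) - gmean K θ t v)) ^ 2 ∂U ≤
      J * gmean K θ t v + 3 * J ^ 2 * δ := by
  set m := gmean K θ t v with hm
  have hm0 : 0 ≤ m := gmean_nonneg _ _ _ _
  have hm1 : m ≤ 1 := gmean_le_one _ _ _ _
  have hΛ0 : 0 ≤ Λ := le_trans (by positivity) hΛ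
  have hmeas : ∀ i, Measurable fun x => phi K θ t (X i x) := fun i =>
    (measurable_phi K θ t).comp (hX i)
  have hb : ∀ i x, ‖phi K θ t (X i x)‖ ≤ 1 := fun i x => by
    rw [Real.norm_eq_abs, abs_of_nonneg (phi_nonneg _ _ _ _)]; exact phi_le_one _ _ _ _
  have hint : ∀ i, Integrable (fun x => phi K θ t (X i x)) U := fun i =>
    integrable_of_bdd (hmeas i).aestronglyMeasurable (B := 1) (hb i)
  have hint2 : ∀ i j, Integrable (fun x => phi K θ t (X i x) * phi K θ t (X j x)) U := fun i j =>
    integrable_of_bdd ((hmeas i).mul (hmeas j)).aestronglyMeasurable (B := 1) (fun x => by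
      rw [norm_mul]; exact mul_le_one₀ (hb i x) (norm_nonneg _) (hb j x))
  have h1 : ∀ i ≥ J, |∫ x, phi K θ t (X i x) ∂U - m| ≤ δ := fun i hi =>
    abs_integral_phi_sub (hX i) hΛ hδ fun a ha => by
      have := h i hi (i + 1) (by omega) (by omega) a 0 ha (by simpa using hΛ0)
      simpa using this
  have hterm : ∀ i j, ∫ x, (phi K θ t (X i x) - m) * (phi K θ t (X j x) - m) ∂U =
      ∫ x, phi K θ t (X i x) * phi K θ t (X j x) ∂U - m * ∫ x, phi K θ t (X i x) ∂U -
        m * ∫ x, phi K θ t (X j x) ∂U + m ^ 2 := by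
    intro i j
    have e : ∀ x, (phi K θ t (X i x) - m) * (phi K θ t (X j x) - m) =
        phi K θ t (X i x) * phi K θ t (X j x) - m * phi K θ t (X i x) -
        m * phi K θ t (X j x) + m ^ 2 := fun x => by ring
    simp only [e]
    have i1 : Integrable (fun x => phi K θ t (X i x) * phi K θ t (X j x) -
      m * phi K θ t (X i x)) U := (hint2 i j).sub ((hint i).const_mul m)
    have i2 : Integrable (fun x => phi K θ t (X i x) * phi K θ t (X j x) -
      m * phi K θ t (X i x) - m * phi K θ t (X j x)) U := i1.sub ((hint j).const_mul m)
    rw [integral_add i2 (integrable_const _), integral_sub i1 ((hint j).const_mul m),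
      integral_sub (hint2 i j) ((hint i).const_mul m),
      integral_const_mul, integral_const_mul]
    simp
  have hbound : ∀ i ∈ Finset.Ico J (2 * J), ∀ j ∈ Finset.Ico J (2 * J),
      ∫ x, (phi K θ t (X i x) - m) * (phi K θ t (X j x) - m) ∂U ≤
        (if i = j then m else 0) + 3 * δ := by
    intro i hi j hj
    have hi := (Finset.mem_Ico.1 hi).1
    have hj := (Finset.mem_Ico.1 hj).1
    rw [hterm]
    have a1 := abs_le.1 (h1 i hi)
    have a2 := abs_le.1 (h1 j hj)
    have b1 : m * (m - δ) ≤ m * ∫ x, phi K θ t (X i x) ∂U :=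
      mul_le_mul_of_nonneg_left (by linarith) hm0
    have b2 : m * (m - δ) ≤ m * ∫ x, phi K θ t (X j x) ∂U :=
      mul_le_mul_of_nonneg_left (by linarith) hm0
    have b3 : m * δ ≤ δ := mul_le_of_le_one_left hδ hm1
    split_ifs with hij
    · subst hij
      have : ∫ x, phi K θ t (X i x) * phi K θ t (X i x) ∂U ≤ ∫ x, phi K θ t (X i x) ∂U :=
        integral_mono (hint2 i i) (hint i) fun x =>
          mul_le_of_le_one_left (phi_nonneg _ _ _ _) (phi_le_one _ _ _ _)
      nlinarith
    · have := abs_le.1 (abs_integral_phi_mul_sub (t := t) (hX i) (hX j) hΛ hδ (h i hi j hj hij))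
      rw [← hm] at this
      nlinarith
  have e : ∀ x, (∑ i ∈ Finset.Ico J (2 * J), (phi K θ t (X i x) - m)) ^ 2 =
      ∑ i ∈ Finset.Ico J (2 * J), ∑ j ∈ Finset.Ico J (2 * J),
        (phi K θ t (X i x) - m) * (phi K θ t (X j x) - m) := fun x => by
    rw [sq, Finset.sum_mul_sum]
  have hint3 : ∀ i j, Integrable
      (fun x => (phi K θ t (X i x) - m) * (phi K θ t (X j x) - m)) U := fun i j =>
    integrable_of_bdd (((hmeas i).sub_const m).mul ((hmeas j).sub_const m)).aestronglyMeasurable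
      (B := (1 + 1) * (1 + 1)) (fun x => by
        have hm' : ‖m‖ ≤ 1 := by rw [Real.norm_eq_abs, abs_of_nonneg hm0]; exact hm1
        rw [norm_mul]
        exact mul_le_mul ((norm_sub_le _ _).trans (add_le_add (hb i x) hm'))
          ((norm_sub_le _ _).trans (add_le_add (hb j x) hm')) (norm_nonneg _) (by norm_num))
  simp only [e]
  rw [integral_finsetSum _ fun i _ => integrable_finsetSum _ fun j _ => hint3 i j]
  simp_rw [integral_finsetSum _ fun j _ => hint3 _ j]
  refine (Finset.sum_le_sum fun i hi => Finset.sum_le_sum fun j hj => hbound i hi j hj).trans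
    (le_of_eq ?_)
  simp only [Finset.sum_add_distrib, Finset.sum_ite_eq, Finset.sum_const, Nat.card_Ico,
    nsmul_eq_mul]
  rw [Finset.sum_congr rfl fun i hi => if_pos hi, Finset.sum_const, Nat.card_Ico, nsmul_eq_mul,
    show 2 * J - J = J by omega]
  ring

end LIL

/-! ### Gaussian means of the test function and joint characteristic functions of blocks -/

namespace LIL

/-- A value of `phi` that is not too small forces `y` to be close to `t`, once `y` is known to lie
in the same period. -/
lemma phi_decode {K : ℕ} {θ t y r : ℝ} (hz : |θ * (y - t)| ≤ 1) (h : exp (-r) ≤ phi K θ t y) :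
    4 * K / π ^ 2 * (θ * (y - t)) ^ 2 ≤ r := by
  set z := θ * (y - t) with hzdef
  have h1 : cos z ≤ exp (-(2 / π ^ 2 * z ^ 2)) :=
    (cos_le_one_sub_mul_cos_sq (hz.trans (by linarith [Real.pi_gt_three]))).trans
      (by linarith [Real.add_one_le_exp (-(2 / π ^ 2 * z ^ 2))])
  have h2 : 0 ≤ cos z := (cos_pos_of_le_one hz).le
  have h3 : phi K θ t y ≤ exp (-(4 * K / π ^ 2 * z ^ 2)) := by
    unfold phi
    refine (pow_le_pow_left₀ h2 h1 _).trans (le_of_eq ?_)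
    rw [← Real.exp_nat_mul]
    congr 1
    push_cast
    ring
  have := exp_le_exp.1 (h.trans h3)
  linarith

lemma half_le_phi {K : ℕ} {θ t d y : ℝ} (hK : K * (θ * d) ^ 2 ≤ 1 / 2) (hy : y ∈ Set.Icc t (t + d)) :
    1 / 2 ≤ phi K θ t y := by
  unfold phi
  rcases Nat.eq_zero_or_pos K with rfl | hK0
  · norm_num
  have hK1 : (1:ℝ) ≤ K := by exact_mod_cast hK0
  set z := θ * (y - t) with hz
  have h1 : z ^ 2 ≤ (θ * d) ^ 2 := by
    rw [hz, mul_pow, mul_pow]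
    have := hy.1
    have := hy.2
    refine mul_le_mul_of_nonneg_left ?_ (sq_nonneg _)
    exact pow_le_pow_left₀ (by linarith) (by linarith) 2
  have h2 : K * z ^ 2 ≤ 1 / 2 := (mul_le_mul_of_nonneg_left h1 (by positivity)).trans hK
  have h3 : z ^ 2 ≤ 1 / 2 := by nlinarith [sq_nonneg z]
  have h4 : 1 + -z ^ 2 ≤ cos z ^ 2 := by
    rw [cos_sq']
    have := Real.sin_sq_le_sq (x := z)
    linarith
  rw [pow_mul]
  have h5 := one_add_mul_le_pow (a := -z ^ 2) (by linarith) K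
  have h6 := pow_le_pow_left₀ (by linarith : 0 ≤ 1 + -z ^ 2) h4 K
  linarith

/-- Restricting the Gaussian integral to `[t, t + d]`, where `phi ≥ 1/2`. -/
lemma gmean_ge {K : ℕ} {θ t d : ℝ} {v : NNReal} (hv : 0 < v) (ht : 0 ≤ t) (hd : 0 ≤ d)
    (hK : K * (θ * d) ^ 2 ≤ 1 / 2) :
    d * ((√(2 * π * v))⁻¹ * exp (-(t + d) ^ 2 / (2 * v)) * (1 / 2)) ≤ gmean K θ t v := by
  have hv' : (0:ℝ) < v := hv
  unfold gmean
  rw [ProbabilityTheory.integral_gaussianReal_eq_integral_smul hv.ne']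
  have hint : Integrable (fun x => ProbabilityTheory.gaussianPDFReal 0 v x • phi K θ t x) := by
    refine (ProbabilityTheory.integrable_gaussianPDFReal 0 v).mul_bdd (c := 1)
      (measurable_phi K θ t).aestronglyMeasurable (ae_of_all _ fun x => ?_)
    rw [Real.norm_eq_abs, abs_of_nonneg (phi_nonneg _ _ _ _)]
    exact phi_le_one _ _ _ _
  have h1 := setIntegral_le_integral (s := Set.Icc t (t + d)) hint (ae_of_all _ fun x =>
    mul_nonneg (ProbabilityTheory.gaussianPDFReal_nonneg 0 v x) (phi_nonneg K θ t x))
  refine le_trans ?_ h1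
  have h2 := setIntegral_ge_of_const_le (μ := volume)
    (f := fun x => ProbabilityTheory.gaussianPDFReal 0 v x • phi K θ t x)
    (s := Set.Icc t (t + d)) (c := (√(2 * π * v))⁻¹ * exp (-(t + d) ^ 2 / (2 * v)) * (1 / 2))
    measurableSet_Icc (by simp) (fun x hx => by
      rw [smul_eq_mul]
      refine mul_le_mul ?_ (half_le_phi hK hx) (by norm_num)
        (ProbabilityTheory.gaussianPDFReal_nonneg 0 v x)
      unfold ProbabilityTheory.gaussianPDFReal
      refine mul_le_mul_of_nonneg_left (exp_le_exp.2 ?_) (by positivity)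
      rw [sub_zero, div_le_div_iff_of_pos_right (by positivity), neg_le_neg_iff]
      exact pow_le_pow_left₀ (ht.trans hx.1) hx.2 2) hint.integrableOn
  refine le_trans (le_of_eq ?_) h2
  rw [Real.volume_real_Icc_of_le (by linarith), smul_eq_mul]
  ring

/-- For targets `t = √2 s₂ √(log Q)` with `s₂² < v`, the Gaussian mean of the test function
decays more slowly than `1 / Q`. -/
lemma eventually_gmean_ge {s2 s3 s4 w d : ℝ} (h2 : 0 < s2) (h23 : s2 < s3) (h34 : s3 < s4)
    (hd : 0 < d) : ∀ᶠ Q : ℕ in atTop, ∀ (v : NNReal) (K : ℕ) (θ : ℝ), s4 ^ 2 ≤ v → v ≤ w →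
      K * (θ * d) ^ 2 ≤ 1 / 2 →
      d * (√(2 * π * w))⁻¹ * (1 / 2) * (Q:ℝ) ^ (-(s3 ^ 2 / s4 ^ 2)) ≤
        gmean K θ (√2 * s2 * √(log Q)) v := by
  filter_upwards [eventually_log_ge ((d / (√2 * (s3 - s2))) ^ 2), eventually_ge_atTop 1,
    eventually_log_ge 1] with Q hQ hQ1 hl1 v K θ hv hw hK
  have hQ' : (0:ℝ) < Q := by exact_mod_cast hQ1
  have hs4 : 0 < s4 := by linarith
  have hv0' : (0:ℝ) < v := lt_of_lt_of_le (by positivity) hv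
  have hv0 : 0 < v := hv0'
  have hs : 0 < √2 * (s3 - s2) := mul_pos (by positivity) (by linarith)
  set l := √(log Q) with hl
  have hl2 : l ^ 2 = log Q := Real.sq_sqrt (by linarith)
  have hlge : d / (√2 * (s3 - s2)) ≤ l := by
    rw [hl]; exact Real.le_sqrt_of_sq_le hQ
  rw [div_le_iff₀ hs] at hlge
  refine le_trans ?_ (gmean_ge hv0 (by positivity) hd.le hK)
  have e1 : (√(2 * π * w))⁻¹ ≤ (√(2 * π * v))⁻¹ := by gcongr
  have hmain : (√2 * s2 * l + d) ^ 2 ≤ 2 * s3 ^ 2 * log Q := by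
    have : √2 * s2 * l + d ≤ √2 * s3 * l := by linarith
    calc _ ≤ (√2 * s3 * l) ^ 2 := pow_le_pow_left₀ (by positivity) this 2
      _ = _ := by rw [mul_pow, mul_pow, Real.sq_sqrt (by norm_num), hl2]
  have e2 : (Q:ℝ) ^ (-(s3 ^ 2 / s4 ^ 2)) ≤ exp (-(√2 * s2 * l + d) ^ 2 / (2 * v)) := by
    rw [Real.rpow_def_of_pos hQ']
    refine exp_le_exp.2 ?_
    rw [mul_neg, neg_div, neg_le_neg_iff, div_le_iff₀ (by positivity)]
    refine hmain.trans ?_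
    have : s3 ^ 2 ≤ s3 ^ 2 / s4 ^ 2 * v := by
      rw [div_mul_eq_mul_div, le_div_iff₀ (by positivity)]
      exact mul_le_mul_of_nonneg_left hv (sq_nonneg _)
    nlinarith
  calc d * (√(2 * π * w))⁻¹ * (1 / 2) * (Q:ℝ) ^ (-(s3 ^ 2 / s4 ^ 2))
      ≤ d * (√(2 * π * v))⁻¹ * (1 / 2) * exp (-(√2 * s2 * l + d) ^ 2 / (2 * v)) := by gcongr
    _ = _ := by ring

variable {n : ℕ → ℕ} {f : ℝ → ℝ}

/-- Number of good indices in a block. -/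
def Scales.cnt (S : Scales n f) (Q a b : ℕ) : ℕ :=
  open Classical in ((Finset.Ico a b).filter (S.good Q)).card

lemma Scales.le_cnt (S : Scales n f) (Q a b : ℕ) : b - a ≤ S.cnt Q a b + 2 ^ Q := by
  classical
  have h1 := Finset.card_filter_add_card_filter_not (s := Finset.Ico a b) (S.good Q)
  rw [Nat.card_Ico] at h1
  have h2 := S.card_bad Q ((Finset.Ico a b).filter fun k => ¬ S.good Q k)
    fun k hk => (Finset.mem_filter.1 hk).2
  unfold Scales.cnt
  omega

/-- Joint characteristic function of two normalized disjoint blocks. -/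
lemma Scales.pair (S : Scales n f) (D : ℝ) : ∀ᶠ Q : ℕ in atTop, ∀ a b a' b' : ℕ,
    (b ≤ a' ∨ b' ≤ a) → 0 < S.cnt Q a b → 0 < S.cnt Q a' b' → ∀ p q : ℝ,
    p ^ 2 + q ^ 2 ≤ D * log Q → p ^ 2 * 2 ^ Q ≤ S.cnt Q a b → q ^ 2 * 2 ^ Q ≤ S.cnt Q a' b' →
    ‖∫ x, Complex.exp ((p * (S.bs Q a b x / √(S.cnt Q a b)) +
        q * (S.bs Q a' b' x / √(S.cnt Q a' b')) : ℝ) * Complex.I) ∂U -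
      (exp (-((∫ x, S.T Q x ^ 2 ∂U) * (p ^ 2 + q ^ 2)) / 2) : ℝ)‖ ≤ 1 / (Q:ℝ) ^ 3 := by
  classical
  filter_upwards [S.charFun_le D] with Q hQ a b a' b' hdis h1 h2 p q hpq hp hq
  set A := (Finset.Ico a b).filter (S.good Q) with hA
  set A' := (Finset.Ico a' b').filter (S.good Q) with hA'
  have hcA : S.cnt Q a b = A.card := by simp only [hA, Scales.cnt]
  have hcA' : S.cnt Q a' b' = A'.card := by simp only [hA', Scales.cnt]
  have hd : Disjoint A A' := by
    rw [Finset.disjoint_left]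
    intro k hk hk'
    simp only [hA, hA', Finset.mem_filter, Finset.mem_Ico] at hk hk'
    omega
  rw [hcA] at h1 hp ⊢
  rw [hcA'] at h2 hq ⊢
  have h1' : (0:ℝ) < A.card := by exact_mod_cast h1
  have h2' : (0:ℝ) < A'.card := by exact_mod_cast h2
  set c : ℕ → ℝ := fun k => if k ∈ A then p / √A.card else q / √A'.card with hc
  have cA : ∀ k ∈ A, c k = p / √A.card := fun k hk => if_pos hk
  have cA' : ∀ k ∈ A', c k = q / √A'.card := fun k hk =>
    if_neg (Finset.disjoint_right.1 hd hk)
  have hsum : ∑ k ∈ A ∪ A', c k ^ 2 = p ^ 2 + q ^ 2 := by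
    have g1 : ∑ k ∈ A, c k ^ 2 = ∑ k ∈ A, (p / √A.card) ^ 2 :=
      Finset.sum_congr rfl fun k hk => by rw [cA k hk]
    have g2 : ∑ k ∈ A', c k ^ 2 = ∑ k ∈ A', (q / √A'.card) ^ 2 :=
      Finset.sum_congr rfl fun k hk => by rw [cA' k hk]
    rw [Finset.sum_union hd, g1, g2]
    simp only [Finset.sum_const, nsmul_eq_mul, div_pow]
    rw [Real.sq_sqrt h1'.le, Real.sq_sqrt h2'.le]
    field_simp
  have hlin : ∀ x, ∑ k ∈ A ∪ A', c k * S.T Q (n k * x) =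
      p * (S.bs Q a b x / √A.card) + q * (S.bs Q a' b' x / √A'.card) := by
    intro x
    have g1 : ∑ k ∈ A, c k * S.T Q (n k * x) = ∑ k ∈ A, p / √A.card * S.T Q (n k * x) :=
      Finset.sum_congr rfl fun k hk => by rw [cA k hk]
    have g2 : ∑ k ∈ A', c k * S.T Q (n k * x) = ∑ k ∈ A', q / √A'.card * S.T Q (n k * x) :=
      Finset.sum_congr rfl fun k hk => by rw [cA' k hk]
    rw [Finset.sum_union hd, g1, g2, ← Finset.mul_sum, ← Finset.mul_sum]
    have e1 : S.bs Q a b x = ∑ k ∈ A, S.T Q (n k * x) := by simp only [hA, Scales.bs]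
    have e2 : S.bs Q a' b' x = ∑ k ∈ A', S.T Q (n k * x) := by simp only [hA', Scales.bs]
    rw [e1, e2]
    ring
  have := hQ (A ∪ A') (fun k hk => by
      rcases Finset.mem_union.1 hk with h | h
      · exact (Finset.mem_filter.1 h).2
      · exact (Finset.mem_filter.1 h).2) c (by rw [hsum]; exact hpq) (fun k hk => by
      rcases Finset.mem_union.1 hk with h | h
      · rw [cA k h, div_pow, Real.sq_sqrt h1'.le, div_mul_eq_mul_div, div_le_one h1']
        exact hp
      · rw [cA' k h, div_pow, Real.sq_sqrt h2'.le, div_mul_eq_mul_div, div_le_one h2']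
        exact hq)
  simp only [hlin] at this
  rw [hsum, mul_comm (p ^ 2 + q ^ 2)] at this
  exact this

end LIL

/-! ### Existence of a large block -/

namespace LIL

/-- Second moment method: if all `X i` stay below `τ`, then either some `|X i|` exceeds `w` (and the
periodicity of `phi` might spoil the decoding), or every `phi (X i)` is at most half of its Gaussian
mean, which is a large deviation of `∑ phi (X i)` from `J` times that mean. -/
lemma exists_large_block {X : ℕ → ℝ → ℝ} (hX : ∀ i, Measurable (X i)) {v : NNReal} {K : ℕ}
    {θ t Λ δ δ' r τ w : ℝ} (hΛ : 2 * K * |θ| ≤ Λ) (hδ : 0 ≤ δ) {J : ℕ} (hJ : 0 < J)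
    (h : ∀ i ≥ J, ∀ j ≥ J, i ≠ j → ∀ a b, |a| ≤ Λ → |b| ≤ Λ →
      ‖∫ x, Complex.exp ((a * X i x + b * X j x : ℝ) * Complex.I) ∂U -
        (exp (-(v * (a ^ 2 + b ^ 2)) / 2) : ℝ)‖ ≤ δ)
    (htail : ∀ i ∈ Finset.Ico J (2 * J), U.real {x | w ≤ |X i x|} ≤ δ')
    (hm : 0 < gmean K θ t v) (hr : exp (-r) ≤ gmean K θ t v / 2)
    (ht : 0 ≤ t) (hθ : |θ| * (w + t) ≤ 1)
    (hdec : ∀ y, 4 * K / π ^ 2 * (θ * (y - t)) ^ 2 ≤ r → τ ≤ y) :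
    U.real {x | ∀ i ∈ Finset.Ico J (2 * J), X i x < τ} ≤
      (J * gmean K θ t v + 3 * J ^ 2 * δ) / (J * gmean K θ t v / 2) ^ 2 + J * δ' := by
  set m := gmean K θ t v with hmdef
  have hJ' : (0:ℝ) < J := by exact_mod_cast hJ
  have hmeas : Measurable fun x => ∑ i ∈ Finset.Ico J (2 * J), (phi K θ t (X i x) - m) :=
    Finset.measurable_fun_sum _ fun i _ => ((measurable_phi K θ t).comp (hX i)).sub_const m
  have hint : Integrable
      (fun x => (∑ i ∈ Finset.Ico J (2 * J), (phi K θ t (X i x) - m)) ^ 2) U := by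
    refine integrable_of_bdd (hmeas.pow_const 2).aestronglyMeasurable
      (B := (∑ i ∈ Finset.Ico J (2 * J), (1 + |m|)) ^ 2) fun x => ?_
    rw [norm_pow]
    refine pow_le_pow_left₀ (norm_nonneg _) ((norm_sum_le _ _).trans ?_) 2
    refine Finset.sum_le_sum fun i _ => (norm_sub_le _ _).trans (add_le_add ?_ le_rfl)
    rw [Real.norm_eq_abs, abs_of_nonneg (phi_nonneg _ _ _ _)]
    exact phi_le_one _ _ _ _
  have hsm := measure_ge_le (fun x => sq_nonneg _) hint
    (t := (J * m / 2) ^ 2) (by positivity) (second_moment (t := t) hX hΛ hδ J h)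
  have hun : U.real (⋃ i ∈ Finset.Ico J (2 * J), {x | w ≤ |X i x|}) ≤ J * δ' := by
    refine (measureReal_biUnion_finset_le _ _).trans ((Finset.sum_le_sum htail).trans
      (le_of_eq ?_))
    rw [Finset.sum_const, Nat.card_Ico, nsmul_eq_mul, show 2 * J - J = J by omega]
  refine le_trans (measureReal_mono ?_) ((measureReal_union_le _ _).trans (add_le_add hsm hun))
  intro x hx
  by_contra hcon
  simp only [Set.mem_union, Set.mem_iUnion, Set.mem_ofPred_eq, not_or, not_exists, not_le] at hcon hx
  obtain ⟨hc1, hc2⟩ := hcon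
  refine absurd hc1 (not_lt.2 ?_)
  have hphi : ∀ i ∈ Finset.Ico J (2 * J), phi K θ t (X i x) - m ≤ -(m / 2) := by
    intro i hi
    by_contra hlt
    push Not at hlt
    have hz : |θ * (X i x - t)| ≤ 1 := by
      rw [abs_mul]
      refine le_trans (mul_le_mul_of_nonneg_left ?_ (abs_nonneg _)) hθ
      refine (abs_sub _ _).trans ?_
      rw [abs_of_nonneg ht]
      linarith [hc2 i hi]
    have := hdec _ (phi_decode hz (hr.trans (by linarith)))
    linarith [hx i hi]
  have hsum : ∑ i ∈ Finset.Ico J (2 * J), (phi K θ t (X i x) - m) ≤ -(J * m / 2) := by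
    refine (Finset.sum_le_sum hphi).trans (le_of_eq ?_)
    rw [Finset.sum_const, Nat.card_Ico, nsmul_eq_mul, show 2 * J - J = J by omega]
    ring
  have h0 : 0 ≤ J * m / 2 := by positivity
  nlinarith

/-- The bound of `exists_large_block` in terms of `Q = b J` when the Gaussian mean `m` is at least
`c1 / y`. -/
lemma final_numeric {J b Q m c1 y : ℝ} (hb : 1 ≤ b) (hJ : 0 < J) (hQ : Q = b * J) (hQ1 : 1 ≤ Q)
    (hc : 0 < c1) (hy1 : 1 ≤ y) (hyQ : y ≤ Q) (hm : c1 / y ≤ m) :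
    (J * m + 3 * J ^ 2 * (1 / Q ^ 3)) / (J * m / 2) ^ 2 + J * (2 / Q ^ 3) ≤
      (4 * b / c1 + 12 / c1 ^ 2 + 2) * (y / Q) := by
  have hy0 : 0 < y := by linarith
  have hm0 : 0 < m := lt_of_lt_of_le (by positivity) hm
  have hQ0 : 0 < Q := by linarith
  have hinv : 1 / m ≤ y / c1 := by
    rw [div_le_div_iff₀ hm0 hc]
    rw [div_le_iff₀ hy0] at hm
    linarith
  have e : (J * m + 3 * J ^ 2 * (1 / Q ^ 3)) / (J * m / 2) ^ 2 + J * (2 / Q ^ 3) =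
      4 * (1 / J) * (1 / m) + 12 * (1 / Q ^ 3) * (1 / m) ^ 2 + 2 * (J / Q ^ 3) := by
    field_simp
    ring
  have hJQ : 1 / J = b / Q := by rw [hQ]; field_simp
  have h1 : 4 * (1 / J) * (1 / m) ≤ 4 * b / c1 * (y / Q) := by
    rw [hJQ]
    calc 4 * (b / Q) * (1 / m) ≤ 4 * (b / Q) * (y / c1) := by gcongr
      _ = _ := by ring
  have hyQ1 : y / Q ≤ 1 := by rw [div_le_one hQ0]; exact hyQ
  have h2 : 12 * (1 / Q ^ 3) * (1 / m) ^ 2 ≤ 12 / c1 ^ 2 * (y / Q) := by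
    calc 12 * (1 / Q ^ 3) * (1 / m) ^ 2 ≤ 12 * (1 / Q ^ 3) * (y / c1) ^ 2 := by gcongr
      _ = 12 / c1 ^ 2 * (y / Q) * ((y / Q) * (1 / Q)) := by field_simp
      _ ≤ 12 / c1 ^ 2 * (y / Q) * 1 := by
        gcongr
        refine mul_le_one₀ hyQ1 (by positivity) ?_
        rw [div_le_one hQ0]; exact hQ1
      _ = _ := by ring
  have h3 : 2 * (J / Q ^ 3) ≤ 2 * (y / Q) := by
    have hJle : J ≤ Q := by rw [hQ]; nlinarith
    have : J / Q ^ 3 ≤ y / Q := by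
      rw [div_le_div_iff₀ (by positivity) hQ0]
      have : J * Q ≤ Q * Q := by gcongr
      have h5 : Q * Q ≤ y * Q ^ 3 := by
        have h6 : Q * Q ≤ Q ^ 3 := by nlinarith [sq_nonneg Q]
        have h7 : Q ^ 3 ≤ y * Q ^ 3 := le_mul_of_one_le_left (by positivity) hy1
        linarith
      linarith
    linarith
  rw [e]
  linarith

variable {n : ℕ → ℕ} {f : ℝ → ℝ}

/-- The blocks `[16 ^ (b i), 16 ^ (b (i + 1)))` consist mostly of good indices. -/
lemma Scales.block_cnt (S : Scales n f) {b J i : ℕ} (hi : J ≤ i) :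
    (2:ℝ) ^ (4 * b * (i + 1)) * (1 - 2 / 16 ^ b) ≤
      S.cnt (b * J) (2 ^ (4 * b * i)) (2 ^ (4 * b * (i + 1))) := by
  have h1 := S.le_cnt (b * J) (2 ^ (4 * b * i)) (2 ^ (4 * b * (i + 1)))
  have h2 : 2 ^ (b * J) ≤ 2 ^ (4 * b * i) := by
    refine Nat.pow_le_pow_right (by norm_num) ?_
    calc b * J ≤ b * i := by gcongr
      _ ≤ 4 * (b * i) := by omega
      _ = _ := by ring
  have h3 : 2 ^ (4 * b * (i + 1)) ≤
      S.cnt (b * J) (2 ^ (4 * b * i)) (2 ^ (4 * b * (i + 1))) + 2 * 2 ^ (4 * b * i) := by omega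
  have h4 : (2:ℝ) ^ (4 * b * (i + 1)) ≤
      S.cnt (b * J) (2 ^ (4 * b * i)) (2 ^ (4 * b * (i + 1))) + 2 * 2 ^ (4 * b * i) := by
    exact_mod_cast h3
  have e : (2:ℝ) ^ (4 * b * (i + 1)) = 16 ^ b * 2 ^ (4 * b * i) := by
    rw [show (16:ℝ) = 2 ^ 4 by norm_num, ← pow_mul, ← pow_add]; congr 1; ring
  have e2 : (2:ℝ) ^ (4 * b * (i + 1)) * (1 - 2 / 16 ^ b) =
      2 ^ (4 * b * (i + 1)) - 2 * 2 ^ (4 * b * i) := by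
    rw [e]; field_simp
  rw [e2]
  linarith

lemma Scales.block_cnt_half (S : Scales n f) {b J i : ℕ} (hb : 1 ≤ b) (hi : J ≤ i) :
    (2:ℝ) ^ (4 * b * (i + 1)) / 2 ≤
      S.cnt (b * J) (2 ^ (4 * b * i)) (2 ^ (4 * b * (i + 1))) := by
  refine le_trans ?_ (S.block_cnt hi)
  have : (16:ℝ) ^ 1 ≤ 16 ^ b := pow_le_pow_right₀ (by norm_num) hb
  have h2 : 2 / (16:ℝ) ^ b ≤ 1 / 2 := by
    rw [div_le_div_iff₀ (by positivity) (by norm_num)]; linarith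
  rw [div_eq_mul_inv]
  refine mul_le_mul_of_nonneg_left ?_ (by positivity)
  norm_num at h2 ⊢
  linarith

end LIL

/-! ### Large normalized blocks almost surely -/

namespace LIL

variable {n : ℕ → ℕ} {f : ℝ → ℝ}

/-- The normalized sum over the block `[16 ^ (b i), 16 ^ (b (i + 1)))` at scale `b J`. -/
def Scales.nb (S : Scales n f) (b J i : ℕ) (x : ℝ) : ℝ :=
  S.bs (b * J) (2 ^ (4 * b * i)) (2 ^ (4 * b * (i + 1))) x /
    √(S.cnt (b * J) (2 ^ (4 * b * i)) (2 ^ (4 * b * (i + 1))))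

lemma Scales.measurable_nb (S : Scales n f) (b J i : ℕ) : Measurable (S.nb b J i) :=
  (S.measurable_bs _ _ _).div_const _

/-- Crude large deviation bound for normalized blocks. -/
lemma Scales.nb_tail (S : Scales n f) {b : ℕ} (hb : 1 ≤ b) : ∀ᶠ Q : ℕ in atTop, ∀ J, Q = b * J →
    ∀ i ≥ J, U.real {x | 4 * √(∫ x, f x ^ 2 ∂U + 1) * √(log Q) ≤ |S.nb b J i x|} ≤
      2 / (Q:ℝ) ^ 3 := by
  have hv0 : 0 ≤ ∫ x, f x ^ 2 ∂U := integral_nonneg fun x => sq_nonneg _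
  set v := ∫ x, f x ^ 2 ∂U with hv
  filter_upwards [S.tail_le 4 (show ∫ x, f x ^ 2 ∂U < v + 1 by linarith), eventually_log_ge 1,
    eventually_ge_atTop 1] with Q htail hl hQ1 J hJ i hi
  have hc := S.block_cnt_half (b := b) (J := J) (i := i) hb hi
  have hVQ : (2:ℝ) ^ Q ≤ 2 ^ (4 * b * (i + 1)) := by
    refine pow_le_pow_right₀ (by norm_num) ?_
    rw [hJ]
    calc b * J ≤ b * (i + 1) := by gcongr; omega
      _ ≤ 4 * (b * (i + 1)) := by omega
      _ = _ := by ring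
  unfold Scales.nb
  rw [← hJ] at hc ⊢
  set V : ℝ := 2 ^ (4 * b * (i + 1)) with hV
  set c : ℝ := ((S.cnt Q (2 ^ (4 * b * i)) (2 ^ (4 * b * (i + 1))) : ℕ) : ℝ) with hcdef
  have hV0 : 0 < V := by positivity
  have hc0 : 0 < c := by linarith
  set p := ⌈3 * log Q⌉₊ with hp
  have hp1 : 3 * log Q ≤ p := Nat.le_ceil _
  have hp2 : (p:ℝ) ≤ 4 * log Q := by
    have := Nat.ceil_lt_add_one (show 0 ≤ 3 * log Q by positivity)
    linarith
  have hp0 : (0:ℝ) < p := by linarith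
  set l := 4 * √(v + 1) * √(log Q) * √c with hldef
  have hl0 : 0 < l := by positivity
  have h := htail p (by exact_mod_cast hp0) hp2 (2 ^ (4 * b * i)) (2 ^ (4 * b * (i + 1))) V l
    (by
      rw [hV]
      have : 2 ^ (4 * b * (i + 1)) - 2 ^ (4 * b * i) ≤ 2 ^ (4 * b * (i + 1)) := Nat.sub_le _ _
      exact_mod_cast this) hVQ hl0
  have hset : {x | 4 * √(v + 1) * √(log Q) ≤ |S.bs Q (2 ^ (4 * b * i)) (2 ^ (4 * b * (i + 1))) x / √c|}
      = {x | l ≤ |S.bs Q (2 ^ (4 * b * i)) (2 ^ (4 * b * (i + 1))) x|} := by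
    ext x
    simp only [Set.mem_ofPred_eq]
    rw [abs_div, abs_of_nonneg (Real.sqrt_nonneg c), le_div_iff₀ (by positivity)]
  rw [hset]
  refine h.trans ?_
  have hl2 : l ^ 2 = 16 * (v + 1) * log Q * c := by
    rw [hldef, mul_pow, mul_pow, mul_pow, Real.sq_sqrt (by linarith), Real.sq_sqrt (by linarith),
      Real.sq_sqrt hc0.le]
    norm_num
  have hle1 : 2 * p * (v + 1) * V / l ^ 2 ≤ 1 := by
    rw [hl2, div_le_one (by positivity)]
    calc 2 * p * (v + 1) * V ≤ 2 * (4 * log Q) * (v + 1) * (2 * c) := by gcongr; linarith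
      _ = _ := by ring
  have h3 := exp_neg_le_rpow (a := 3) (by omega : 0 < Q) hp1
  have e3 : (Q:ℝ) ^ (3:ℝ) = (Q:ℝ) ^ 3 := by norm_cast
  rw [e3] at h3
  calc _ ≤ 2 * 1 * (1 / (Q:ℝ) ^ 3) := by
        gcongr
        exact pow_le_one₀ (by positivity) hle1
    _ = _ := by ring

/-- Distinct normalized blocks have nearly Gaussian joint characteristic functions. -/
lemma Scales.nb_pair (S : Scales n f) {b : ℕ} (hb : 1 ≤ b) {L : ℝ} :
    ∀ᶠ Q : ℕ in atTop, ∀ J, Q = b * J →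
    ∀ i ≥ J, ∀ j ≥ J, i ≠ j → ∀ p q, |p| ≤ L * √(log Q) → |q| ≤ L * √(log Q) →
      ‖∫ x, Complex.exp ((p * S.nb b J i x + q * S.nb b J j x : ℝ) * Complex.I) ∂U -
        (exp (-((∫ x, S.T Q x ^ 2 ∂U) * (p ^ 2 + q ^ 2)) / 2) : ℝ)‖ ≤ 1 / (Q:ℝ) ^ 3 := by
  filter_upwards [S.pair (2 * L ^ 2), eventually_log_ge 1, eventually_ge_atTop 1,
    eventually_log_le_two_pow (L ^ 2)] with Q hpair hl hQ1 hpow J hJ i hi j hj hij p q hp hq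
  have hcnt : ∀ i ≥ J, (2:ℝ) ^ Q * 2 ^ Q ≤
      S.cnt Q (2 ^ (4 * b * i)) (2 ^ (4 * b * (i + 1))) := by
    intro i hi
    have hc := S.block_cnt_half (b := b) (J := J) (i := i) hb hi
    rw [← hJ] at hc
    refine le_trans ?_ hc
    rw [le_div_iff₀ (by norm_num), ← pow_add, ← pow_succ]
    refine pow_le_pow_right₀ (by norm_num) ?_
    have h1 : b * J ≤ b * (i + 1) := by gcongr; omega
    have h2 : 4 * (b * (i + 1)) = 4 * b * (i + 1) := by ring
    omega
  have hpos : ∀ i ≥ J, 0 < S.cnt Q (2 ^ (4 * b * i)) (2 ^ (4 * b * (i + 1))) := by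
    intro i hi
    have : (0:ℝ) < 2 ^ Q * 2 ^ Q := by positivity
    exact_mod_cast this.trans_le (hcnt i hi)
  have hsq : ∀ p : ℝ, |p| ≤ L * √(log Q) → p ^ 2 ≤ L ^ 2 * log Q := by
    intro p hp
    rw [← sq_abs]
    refine (pow_le_pow_left₀ (abs_nonneg _) hp 2).trans (le_of_eq ?_)
    rw [mul_pow, Real.sq_sqrt (by linarith)]
  have h2 : ∀ p : ℝ, |p| ≤ L * √(log Q) → ∀ i ≥ J, p ^ 2 * 2 ^ Q ≤
      S.cnt Q (2 ^ (4 * b * i)) (2 ^ (4 * b * (i + 1))) := fun p hp i hi =>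
    (mul_le_mul_of_nonneg_right ((hsq p hp).trans hpow) (by positivity)).trans (hcnt i hi)
  have hdis : 2 ^ (4 * b * (i + 1)) ≤ 2 ^ (4 * b * j) ∨ 2 ^ (4 * b * (j + 1)) ≤ 2 ^ (4 * b * i) := by
    rcases lt_or_gt_of_ne hij with h | h
    · exact Or.inl (Nat.pow_le_pow_right (by norm_num) (by gcongr; omega))
    · exact Or.inr (Nat.pow_le_pow_right (by norm_num) (by gcongr; omega))
  have := hpair _ _ _ _ hdis (hpos i hi) (hpos j hj) p q
    (by linarith [hsq p hp, hsq q hq]) (h2 p hp i hi) (h2 q hq j hj)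
  unfold Scales.nb
  rw [← hJ]
  exact this

/-- With probability `1 - O(Q ^ (κ - 1))`, `κ < 1`, one of the `J` normalized blocks exceeds
`√2 s₁ √(log Q)`. -/
lemma Scales.nb_large (S : Scales n f) {s1 : ℝ} (h1 : 0 < s1) (h1v : s1 ^ 2 < ∫ x, f x ^ 2 ∂U)
    {b : ℕ} (hb : 1 ≤ b) : ∃ κ C : ℝ, 0 < κ ∧ κ < 1 ∧ 0 < C ∧ ∀ᶠ Q : ℕ in atTop, ∀ J, Q = b * J →
      U.real {x | ∀ i ∈ Finset.Ico J (2 * J), S.nb b J i x < √2 * s1 * √(log Q)} ≤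
        C * ((Q:ℝ) ^ κ / Q) := by
  set v := ∫ x, f x ^ 2 ∂U with hv
  have hv0 : 0 < v := lt_of_le_of_lt (sq_nonneg s1) h1v
  set σ := √v with hσ
  have hσ2 : σ ^ 2 = v := Real.sq_sqrt hv0.le
  have hsσ : s1 < σ := Real.lt_sqrt_of_sq_lt h1v
  -- intermediate levels `s1 < s2 < s3 < s4 < σ`: the target is `√2 s2 √(log Q)`, deviations of size
  -- `√2 e √(log Q)` from it are tolerated, and `s3`, `s4` absorb lower order terms
  set e := (σ - s1) / 4 with he
  have he0 : 0 < e := by rw [he]; linarith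
  set s2 := s1 + e with hs2
  set s3 := s2 + e with hs3
  set s4 := s3 + e with hs4
  have h4σ : s4 < σ := by rw [hs4, hs3, hs2, he]; linarith
  have hs2p : 0 < s2 := by linarith
  have hs3p : 0 < s3 := by linarith
  have hs4p : 0 < s4 := by linarith
  have h4v : s4 ^ 2 < v := by rw [← hσ2]; exact pow_lt_pow_left₀ h4σ hs4p.le two_ne_zero
  set W := 4 * √(v + 1) with hW
  have hW0 : 0 < W := by positivity
  -- the test function is `cos (θ (y - t)) ^ (2 K)` with `θ = c / √(log Q)` and `K ≈ β log Q`: `c`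
  -- keeps `|y| ≤ W √(log Q)` inside one period, `β` makes it `≤ 1 / Q` off the tolerated window
  set c := 1 / (W + √2 * s2) with hc
  have hc0 : 0 < c := by positivity
  set β := π ^ 2 / (8 * c ^ 2 * e ^ 2) with hβ
  have hβ0 : 0 < β := by positivity
  set d := √(1 / (2 * (β + 1) * c ^ 2)) with hd
  have hd0 : 0 < d := by positivity
  have hd2 : (β + 1) * c ^ 2 * d ^ 2 = 1 / 2 := by
    rw [hd, Real.sq_sqrt (by positivity)]; field_simp
  set κ := s3 ^ 2 / s4 ^ 2 with hκ
  have hκ0 : 0 < κ := by positivity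
  have hκ1 : κ < 1 := by
    rw [hκ, div_lt_one (by positivity)]
    exact pow_lt_pow_left₀ (by linarith) hs3p.le two_ne_zero
  set c1 := d * (√(2 * π * v))⁻¹ * (1 / 2) with hc1
  have hc10 : 0 < c1 := by positivity
  refine ⟨κ, 4 * b / c1 + 12 / c1 ^ 2 + 2, hκ0, hκ1, by positivity, ?_⟩
  have hrp : ∀ᶠ Q : ℕ in atTop, 2 / c1 ≤ (Q:ℝ) ^ (1 - κ) :=
    ((tendsto_rpow_atTop (by linarith)).comp tendsto_natCast_atTop_atTop).eventually_ge_atTop _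
  have hvQ : ∀ᶠ Q : ℕ in atTop, s4 ^ 2 ≤ ∫ x, S.T Q x ^ 2 ∂U :=
    S.sq_tendsto.eventually (le_mem_nhds h4v)
  filter_upwards [S.nb_tail hb, S.nb_pair hb (L := 2 * (β + 1) * c),
    eventually_gmean_ge (w := v) (d := d) hs2p (by linarith : s2 < s3) (by linarith : s3 < s4) hd0,
    hrp, hvQ, eventually_log_ge 1, eventually_ge_atTop 1] with Q htail hpair hgm hrp hvQ hl hQ1 J hJ
  have hQ' : (0:ℝ) < Q := by exact_mod_cast hQ1
  have hQ1' : (1:ℝ) ≤ Q := by exact_mod_cast hQ1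
  have hJ0 : 0 < J := by
    rcases Nat.eq_zero_or_pos J with h | h
    · subst h; omega
    · exact h
  set u := √(log Q) with hu
  have hu2 : u ^ 2 = log Q := Real.sq_sqrt (by linarith)
  have hu0 : 0 < u := by positivity
  set K := ⌈β * log Q⌉₊ with hK
  have hK1 : β * log Q ≤ K := Nat.le_ceil _
  have hK2 : (K:ℝ) ≤ (β + 1) * u ^ 2 := by
    have := Nat.ceil_lt_add_one (show 0 ≤ β * log Q by positivity)
    rw [hu2]; linarith
  set θ := c / u with hθ
  have hθ0 : 0 < θ := by positivity
  set vQ : NNReal := ⟨∫ x, S.T Q x ^ 2 ∂U, integral_nonneg fun x => sq_nonneg _⟩ with hvQdef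
  have hKd : K * (θ * d) ^ 2 ≤ 1 / 2 := by
    calc K * (θ * d) ^ 2 ≤ (β + 1) * u ^ 2 * (θ * d) ^ 2 := by gcongr
      _ = (β + 1) * c ^ 2 * d ^ 2 := by rw [hθ]; field_simp
      _ ≤ 1 / 2 := hd2.le
  have hg := hgm vQ K θ hvQ (S.sq_le Q) hKd
  set y := (Q:ℝ) ^ κ with hy
  have hy1 : 1 ≤ y := Real.one_le_rpow hQ1' hκ0.le
  have hyQ : y ≤ Q := by
    rw [hy]
    conv_rhs => rw [← Real.rpow_one (Q:ℝ)]
    exact Real.rpow_le_rpow_of_exponent_le hQ1' hκ1.le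
  have hg' : c1 / y ≤ gmean K θ (√2 * s2 * u) vQ := by
    rw [Real.rpow_neg hQ'.le] at hg
    rw [div_eq_mul_inv]
    exact hg
  have hm0 : 0 < gmean K θ (√2 * s2 * u) vQ := lt_of_lt_of_le (by positivity) hg'
  have hfin := final_numeric (J := J) (b := b) (Q := Q) (by exact_mod_cast hb)
    (by exact_mod_cast hJ0) (by rw [hJ]; push_cast; ring) hQ1' hc10 hy1 hyQ hg'
  refine le_trans ?_ hfin
  refine exists_large_block (X := S.nb b J) (S.measurable_nb b J) (Λ := 2 * (β + 1) * c * u)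
    (r := log Q) (w := W * u) ?_ (by positivity) hJ0 (hpair J hJ)
    (fun i hi => htail J hJ i (Finset.mem_Ico.1 hi).1) hm0 ?_ (by positivity) ?_ ?_
  · rw [abs_of_pos hθ0, hθ]
    calc 2 * K * (c / u) ≤ 2 * ((β + 1) * u ^ 2) * (c / u) := by gcongr
      _ = _ := by field_simp
  · rw [Real.exp_neg, Real.exp_log hQ']
    refine le_trans ?_ (div_le_div_of_nonneg_right hg' (by norm_num))
    rw [Real.rpow_sub hQ', Real.rpow_one, ← hy, div_le_div_iff₀ hc10 (by linarith)] at hrp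
    rw [div_div, inv_eq_one_div, div_le_div_iff₀ hQ' (by positivity)]
    linarith
  · rw [abs_of_pos hθ0, hθ, hc]
    refine le_of_eq ?_
    have : 0 < W + √2 * s2 := by positivity
    field_simp
  · intro z hz
    have hz2 : (z - √2 * s2 * u) ^ 2 ≤ (√2 * e * u) ^ 2 := by
      have h5 : 4 * (β * u ^ 2) / π ^ 2 * (θ * (z - √2 * s2 * u)) ^ 2 ≤ u ^ 2 := by
        rw [hu2]
        refine le_trans ?_ hz
        gcongr
      have h6 : 4 * (β * u ^ 2) / π ^ 2 * (θ * (z - √2 * s2 * u)) ^ 2 =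
          (z - √2 * s2 * u) ^ 2 / (2 * e ^ 2) := by
        rw [hβ, hθ]; field_simp; ring
      rw [h6, div_le_iff₀ (by positivity)] at h5
      rw [mul_pow, mul_pow, Real.sq_sqrt (by norm_num)]
      linarith
    have h7 := abs_le_of_sq_le_sq hz2 (by positivity)
    have h8 := (abs_le.1 h7).1
    have h9 : √2 * s2 * u = √2 * s1 * u + √2 * e * u := by rw [hs2]; ring
    linarith

/-- Almost surely, every late dyadic window of blocks contains one that is almost as large as the
iterated logarithm allows. -/
theorem Scales.blocks (S : Scales n f) {s1 : ℝ} (h1 : 0 < s1) (h1v : s1 ^ 2 < ∫ x, f x ^ 2 ∂U)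
    {b : ℕ} (hb : 1 ≤ b) : ∀ᵐ x ∂U, ∀ᶠ s : ℕ in atTop, ∃ i ∈ Finset.Ico (2 ^ s) (2 * 2 ^ s),
      √2 * s1 * √(log (b * 2 ^ s : ℕ)) ≤ S.nb b (2 ^ s) i x := by
  obtain ⟨κ, C, hκ0, hκ1, hC, h⟩ := S.nb_large h1 h1v hb
  have hρ : (2:ℝ) ^ (κ - 1) < 1 := Real.rpow_lt_one_of_one_lt_of_neg one_lt_two (by linarith)
  have htend : Tendsto (fun s : ℕ => b * 2 ^ s) atTop atTop :=
    tendsto_atTop_mono (fun s => (Nat.lt_two_pow_self (n := s)).le.trans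
      (Nat.le_mul_of_pos_left _ hb)) tendsto_id
  have key := borel_cantelli (E := fun s : ℕ => {x | ∀ i ∈ Finset.Ico (2 ^ s) (2 * 2 ^ s),
      S.nb b (2 ^ s) i x < √2 * s1 * √(log (b * 2 ^ s : ℕ))})
    (a := fun s => C * ((2:ℝ) ^ (κ - 1)) ^ s)
    ((summable_geometric_of_lt_one (by positivity) hρ).mul_left C) (by
      filter_upwards [htend.eventually h] with s hs
      refine (hs (2 ^ s) rfl).trans (mul_le_mul_of_nonneg_left ?_ hC.le)
      have hpos : (0:ℝ) < (b * 2 ^ s : ℕ) := by positivity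
      rw [← Real.rpow_sub_one hpos.ne', ← Real.rpow_natCast, ← Real.rpow_mul (by norm_num),
        mul_comm (κ - 1), Real.rpow_mul (by norm_num), Real.rpow_natCast]
      refine Real.rpow_le_rpow_of_nonpos (by positivity) ?_ (by linarith)
      have : 2 ^ s ≤ b * 2 ^ s := Nat.le_mul_of_pos_left _ hb
      exact_mod_cast this)
  filter_upwards [key] with x hx
  filter_upwards [hx] with s hs
  by_contra hcon
  refine hs fun i hi => ?_
  by_contra hge
  exact hcon ⟨i, hi, not_lt.1 hge⟩

end LIL

/-! ### The lower bound and the upper limit -/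

namespace LIL

variable {n : ℕ → ℕ} {f : ℝ → ℝ}

/-- Comparison of the normalizations `log Q` and `log log M` for `M = 16 ^ (b (i + 1))`. -/
lemma loglog_block {b J i : ℕ} (hb : 1 ≤ b) (hi1 : J ≤ i) (hi2 : i < 2 * J)
    (hJ : 1 ≤ J) : log (b * J : ℕ) ≤ log (log ((2:ℝ) ^ (4 * b * (i + 1)))) ∧
      log (log ((2:ℝ) ^ (4 * b * (i + 1)))) ≤ log 8 + log (b * J : ℕ) := by
  have hQ : (0:ℝ) < (b * J : ℕ) := by
    have : 0 < b * J := Nat.mul_pos hb hJ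
    exact_mod_cast this
  have hl2 : (1 / 4 : ℝ) ≤ log 2 := by linarith [Real.log_two_gt_d9]
  have hl2' : log 2 ≤ (1:ℝ) := by linarith [Real.log_two_lt_d9]
  rw [Real.log_pow]
  have h1 : ((b * J : ℕ) : ℝ) * 4 ≤ (4 * b * (i + 1) : ℕ) := by
    have : b * J * 4 ≤ 4 * b * (i + 1) := by
      calc b * J * 4 ≤ b * (i + 1) * 4 := by gcongr; omega
        _ = _ := by ring
    exact_mod_cast this
  have h2 : ((4 * b * (i + 1) : ℕ) : ℝ) ≤ 8 * (b * J : ℕ) := by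
    have : 4 * b * (i + 1) ≤ 8 * (b * J) := by
      calc 4 * b * (i + 1) ≤ 4 * b * (2 * J) := by gcongr; omega
        _ = _ := by ring
    exact_mod_cast this
  have h3 : ((b * J : ℕ) : ℝ) ≤ (4 * b * (i + 1) : ℕ) * log 2 := by nlinarith
  refine ⟨Real.log_le_log hQ h3, ?_⟩
  rw [← Real.log_mul (by norm_num) hQ.ne']
  refine Real.log_le_log (by linarith) ?_
  nlinarith

set_option maxHeartbeats 1000000 in
/-- The lower half of the law of the iterated logarithm: a partial sum that ends with an
exceptionally large geometric block is itself large, since the sum before the block is negligible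
by `Scales.upper`. -/
theorem Scales.lower (S : Scales n f) {B : ℝ} (hB : ∀ x, |f x| ≤ B) {s' : ℝ} (hs0 : 0 < s')
    (hs : s' ^ 2 < ∫ x, f x ^ 2 ∂U) :
    ∀ᵐ x ∂U, ∃ᶠ M : ℕ in atTop,
      s' * √(2 * M * log (log M)) ≤ ∑ k ∈ Finset.range M, f (n k * x) := by
  set v := ∫ x, f x ^ 2 ∂U with hv
  have hv0 : 0 < v := lt_of_le_of_lt (sq_nonneg s') hs
  have hB0 : 0 ≤ B := (abs_nonneg _).trans (hB 0)
  set σ := √v with hσ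
  have hσ2 : σ ^ 2 = v := Real.sq_sqrt hv0.le
  have hσ0 : 0 < σ := by positivity
  have hsσ : s' < σ := Real.lt_sqrt_of_sq_lt hs
  set s1 := (s' + σ) / 2 with hs1
  have hs1p : 0 < s1 := by positivity
  have hss1 : s' < s1 := by rw [hs1]; linarith
  have hs1v : s1 ^ 2 < v := by
    rw [← hσ2]; exact pow_lt_pow_left₀ (by rw [hs1]; linarith) hs1p.le two_ne_zero
  -- chosen so that the three losses `3 s1 η`, `(σ + 1) η` and `η` add up to exactly `s1 - s'`
  set η := (s1 - s') / (3 * s1 + σ + 2) with hη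
  have hden : 0 < 3 * s1 + σ + 2 := by positivity
  have hη0 : 0 < η := div_pos (by linarith) hden
  have hηe : η * (3 * s1 + σ + 2) = s1 - s' := div_mul_cancel₀ _ hden.ne'
  have hη3 : η ≤ 1 / 3 := by
    rw [hη, div_le_div_iff₀ hden (by norm_num)]; linarith
  obtain ⟨b, hbη, hb⟩ : ∃ b : ℕ, (1 / 4 : ℝ) ^ b ≤ η ∧ 1 ≤ b := by
    have : Tendsto (fun q : ℕ => (1 / 4 : ℝ) ^ q) atTop (𝓝 0) :=
      tendsto_pow_atTop_nhds_zero_of_lt_one (by norm_num) (by norm_num)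
    exact ((this.eventually (ge_mem_nhds hη0)).and (eventually_ge_atTop 1)).exists
  have htend : Tendsto (fun s : ℕ => b * 2 ^ s) atTop atTop :=
    tendsto_atTop_mono (fun s => (Nat.lt_two_pow_self (n := s)).le.trans
      (Nat.le_mul_of_pos_left _ hb)) tendsto_id
  filter_upwards [S.err, S.upper hB (s := σ + 1) (by positivity) (by rw [← hv, ← hσ2]; gcongr; linarith),
    S.blocks hs1p hs1v hb] with x herr hup hbl
  rw [frequently_atTop]
  intro N
  obtain ⟨N0, hN0⟩ := eventually_atTop.1 hup
  obtain ⟨s, ⟨herr, hlog, hlog1, hpoly⟩, ⟨i, hi, hnb⟩, hsN⟩ := ((htend.eventually (herr.and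
    ((eventually_log_ge (log 8 / η)).and ((eventually_log_ge 1).and
    (eventually_poly_le (2 * (B + 1) / η) 0 one_lt_two))))).and
    (hbl.and (eventually_ge_atTop (N + N0)))).exists
  set J := 2 ^ s with hJ
  obtain ⟨hi1, hi2⟩ := Finset.mem_Ico.1 hi
  have hJ1 : 1 ≤ J := Nat.one_le_two_pow
  have hsJ : s ≤ J := Nat.lt_two_pow_self.le
  have hiM : i ≤ 2 ^ (4 * b * i) := by
    refine Nat.lt_two_pow_self.le.trans (Nat.pow_le_pow_right (by norm_num) ?_)
    calc i = 1 * i := (one_mul i).symm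
      _ ≤ 4 * b * i := by gcongr; omega
  have hMM : 2 ^ (4 * b * i) ≤ 2 ^ (4 * b * (i + 1)) :=
    Nat.pow_le_pow_right (by norm_num) (by gcongr; omega)
  refine ⟨2 ^ (4 * b * (i + 1)), by omega, ?_⟩
  have hupper := hN0 (2 ^ (4 * b * i)) (by omega)
  obtain ⟨hll1, hll2⟩ := loglog_block hb hi1 hi2 hJ1
  have hMle : ∀ j, j ≤ 2 * J → 2 ^ (4 * b * j) ≤ 2 ^ (12 * (b * J)) := by
    intro j hj
    refine Nat.pow_le_pow_right (by norm_num) ?_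
    calc 4 * b * j ≤ 4 * b * (2 * J) := by gcongr
      _ ≤ 12 * (b * J) := by nlinarith [Nat.zero_le (b * J)]
  have hsub1 := S.abs_sub_bs_le hB (hMle i (by omega)) herr
  have hsub2 := S.abs_sub_bs_le hB (hMle (i + 1) (by omega)) herr
  have hadd := S.bs_add (b * J) (Nat.zero_le _) hMM x
  have hcnt := S.block_cnt (b := b) (J := J) (i := i) hi1
  unfold Scales.nb at hnb
  have e16 : (2:ℝ) ^ (4 * b * (i + 1)) = 16 ^ b * 2 ^ (4 * b * i) := by
    rw [show (16:ℝ) = 2 ^ 4 by norm_num, ← pow_mul, ← pow_add]; congr 1; ring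
  have hM4 : (4:ℝ) ^ (b * J) ≤ √(2 ^ (4 * b * (i + 1))) := by
    refine Real.le_sqrt_of_sq_le ?_
    rw [← pow_mul, show (4:ℝ) = 2 ^ 2 by norm_num, ← pow_mul]
    refine pow_le_pow_right₀ (by norm_num) ?_
    calc 2 * (b * J * 2) = 4 * b * J := by ring
      _ ≤ _ := by gcongr; omega
  set Q := b * J with hQ
  push_cast at hupper ⊢
  set M : ℝ := 2 ^ (4 * b * (i + 1)) with hM
  set M0 : ℝ := 2 ^ (4 * b * i) with hM0
  set c : ℝ := ((S.cnt Q (2 ^ (4 * b * i)) (2 ^ (4 * b * (i + 1))) : ℕ) : ℝ) with hc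
  set LL := log (log M) with hLL
  set G := √(2 * M * LL) with hG
  have hM0p : 0 < M0 := by positivity
  have hMp : 0 < M := by positivity
  have hLL1 : 1 ≤ LL := hlog1.trans hll1
  have hGe : G = √2 * √M * √LL := by
    rw [hG, Real.sqrt_mul (by positivity), Real.sqrt_mul (by norm_num)]
  have h16 : 2 / (16:ℝ) ^ b ≤ 2 * η := by
    have : (1 / 16 : ℝ) ^ b ≤ (1 / 4) ^ b := pow_le_pow_left₀ (by norm_num) (by norm_num) b
    rw [one_div_pow] at this
    rw [div_eq_mul_one_div]
    linarith
  have h2η : 0 ≤ 1 - 2 * η := by linarith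
  have hsc : √M * (1 - 2 * η) ≤ √c := by
    refine Real.le_sqrt_of_sq_le ?_
    rw [mul_pow, Real.sq_sqrt hMp.le]
    refine le_trans ?_ hcnt
    refine mul_le_mul_of_nonneg_left ?_ hMp.le
    nlinarith
  have hc0 : 0 < √c := by
    refine lt_of_lt_of_le (mul_pos (Real.sqrt_pos.2 hMp) ?_) hsc
    linarith
  -- replacing `log Q` by `log log M` in the lower bound for the block costs a factor `1 - η`
  have hu : (1 - η) * √LL ≤ √(log Q) := by
    refine Real.le_sqrt_of_sq_le ?_
    rw [mul_pow, Real.sq_sqrt (by linarith)]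
    rw [div_le_iff₀ hη0] at hlog
    have h8 : (0:ℝ) ≤ log 8 := Real.log_nonneg (by norm_num)
    have : (1 - η) ^ 2 ≤ 1 - η := by nlinarith
    calc (1 - η) ^ 2 * LL ≤ (1 - η) * LL := by gcongr
      _ ≤ (1 - η) * (log 8 + log Q) := by gcongr; linarith
      _ ≤ log Q := by nlinarith
  have hblock : s1 * (1 - 3 * η) * G ≤ S.bs Q (2 ^ (4 * b * i)) (2 ^ (4 * b * (i + 1))) x := by
    rw [le_div_iff₀ hc0] at hnb
    refine le_trans ?_ hnb
    have hG0 : 0 ≤ G := Real.sqrt_nonneg _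
    calc s1 * (1 - 3 * η) * G ≤ s1 * ((1 - η) * (1 - 2 * η)) * G := by
          gcongr; nlinarith
      _ = √2 * s1 * ((1 - η) * √LL) * (√M * (1 - 2 * η)) := by rw [hGe]; ring
      _ ≤ √2 * s1 * √(log Q) * √c := by gcongr
  -- by the upper half, the sum up to `M0 = M / 16 ^ b` is at most `η` times the main term
  have hbefore : |∑ k ∈ Finset.range (2 ^ (4 * b * i)), f (n k * x)| ≤ (σ + 1) * η * G := by
    refine hupper.trans ?_
    rw [mul_assoc (σ + 1) η G]
    refine mul_le_mul_of_nonneg_left ?_ (by linarith)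
    have hLM : log (log M0) ≤ LL := by
      refine Real.log_le_log ?_ ?_
      · refine Real.log_pos ?_
        have h0 : 4 * b * i ≠ 0 := Nat.mul_ne_zero (by omega) (by omega)
        exact one_lt_pow₀ one_lt_two h0
      · refine Real.log_le_log hM0p ?_
        rw [e16]
        exact le_mul_of_one_le_left hM0p.le (one_le_pow₀ (by norm_num))
    have hLL0 : 0 ≤ LL := by linarith
    have e4 : 2 * M0 * LL = ((1 / 4 : ℝ) ^ b) ^ 2 * (2 * M * LL) := by
      rw [e16, ← pow_mul, mul_comm b 2, pow_mul]
      have : ((1 / 4 : ℝ) ^ 2) ^ b * 16 ^ b = 1 := by rw [← mul_pow]; norm_num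
      linear_combination -(2 * M0 * LL) * this
    calc √(2 * M0 * log (log M0)) ≤ √(2 * M0 * LL) := by gcongr
      _ = (1 / 4 : ℝ) ^ b * G := by
          rw [e4, Real.sqrt_mul (by positivity), Real.sqrt_sq (by positivity)]
      _ ≤ η * G := by gcongr
  have herrs : 2 * (2 ^ Q * B + 1) ≤ η * G := by
    have hMG : √M ≤ G := by
      refine Real.sqrt_le_sqrt ?_
      nlinarith
    rw [pow_zero, mul_one, div_le_iff₀ hη0] at hpoly
    have h2Q : (1:ℝ) ≤ 2 ^ Q := one_le_pow₀ one_le_two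
    calc 2 * (2 ^ Q * B + 1) ≤ 2 ^ Q * (2 * (B + 1)) := by nlinarith
      _ ≤ 2 ^ Q * (2 ^ Q * η) := by gcongr
      _ = η * 4 ^ Q := by rw [show (4:ℝ) = 2 * 2 by norm_num, mul_pow]; ring
      _ ≤ η * G := by gcongr; exact hM4.trans hMG
  have a1 := abs_le.1 hsub1
  have a2 := abs_le.1 hsub2
  have a3 := abs_le.1 hbefore
  have hfinal : s' * G = s1 * (1 - 3 * η) * G - (σ + 1) * η * G - η * G := by
    linear_combination G * hηe
  rw [hfinal]
  linarith [a1.1, a1.2, a2.1, a2.2, a3.1, a3.2]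

lemma eventually_norm_pos : ∀ᶠ N : ℕ in atTop, 0 < √(2 * N * log (log N)) := by
  have h : ∀ᶠ N : ℕ in atTop, 1 < log (log (N:ℝ)) :=
    (Real.tendsto_log_atTop.comp (Real.tendsto_log_atTop.comp
      tendsto_natCast_atTop_atTop)).eventually_gt_atTop 1
  filter_upwards [h, eventually_ge_atTop 1] with N h1 h2
  have : (0:ℝ) < N := by exact_mod_cast h2
  exact Real.sqrt_pos.2 (by positivity)

/-- Passing from the two one-sided estimates to the value of the upper limit. -/
lemma limsup_eq_of {a g : ℕ → ℝ} {σ : ℝ} (hg : ∀ᶠ N in atTop, 0 < g N)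
    (hup : ∀ k : ℕ, ∀ᶠ N in atTop, |a N| ≤ (σ + 1 / (k + 1)) * g N)
    (hlo : ∀ k : ℕ, ∃ᶠ N in atTop, (σ - 1 / (k + 1)) * g N ≤ a N) :
    limsup (fun N => a N / g N) atTop = σ := by
  have hup' : ∀ k : ℕ, ∀ᶠ N in atTop, |a N / g N| ≤ σ + 1 / (k + 1) := by
    intro k
    filter_upwards [hup k, hg] with N h1 h2
    rw [abs_div, abs_of_pos h2, div_le_iff₀ h2]
    exact h1
  have hbdd : IsBoundedUnder (· ≤ ·) atTop fun N => a N / g N :=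
    ⟨_, eventually_map.2 ((hup' 0).mono fun N h => (abs_le.1 h).2)⟩
  have hcob : IsCoboundedUnder (· ≤ ·) atTop fun N => a N / g N :=
    IsBoundedUnder.isCoboundedUnder_le
      ⟨_, eventually_map.2 ((hup' 0).mono fun N h => (abs_le.1 h).1)⟩
  have hlim : Tendsto (fun k : ℕ => 1 / ((k:ℝ) + 1)) atTop (𝓝 0) :=
    tendsto_one_div_add_atTop_nhds_zero_nat
  refine le_antisymm ?_ ?_
  · have h1 : Tendsto (fun k : ℕ => σ + 1 / ((k:ℝ) + 1)) atTop (𝓝 (σ + 0)) := hlim.const_add σ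
    rw [add_zero] at h1
    refine ge_of_tendsto h1 (Eventually.of_forall fun k => ?_)
    exact limsup_le_of_le hcob ((hup' k).mono fun N h => (abs_le.1 h).2)
  · have h1 : Tendsto (fun k : ℕ => σ - 1 / ((k:ℝ) + 1)) atTop (𝓝 (σ - 0)) := hlim.const_sub σ
    rw [sub_zero] at h1
    refine le_of_tendsto h1 (Eventually.of_forall fun k => ?_)
    refine le_limsup_of_frequently_le (((hlo k).and_eventually hg).mono fun N h => ?_) hbdd
    rw [le_div_iff₀ h.2]
    exact h.1

end LIL

open LIL

/-- LIL part of Theorem 1 of the paper: under Condition `A_ω` with `ω_k ≥ (log k)^α`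
eventually, for every `f` of bounded variation, 1-periodic and of mean zero,
`limsup_N (∑_{k<N} f(n_k x)) / √(2 N log log N) = ‖f‖` for a.e. `x ∈ (0,1)`. -/
theorem statement3
    (ω : ℕ → ℝ) (hω_pos : ∀ k, 0 < ω k) (hω_mono : Monotone ω)
    (hω_top : Tendsto ω atTop atTop)
    (α : ℝ) (hα : 0 < α) (k₀ : ℕ)
    (hω_log : ∀ k : ℕ, k₀ ≤ k → (Real.log k) ^ α ≤ ω k)
    (n : ℕ → ℕ) (hn_pos : ∀ k, 0 < n k) (hn_inj : Function.Injective n)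
    (hA : CondA ω n)
    (f : ℝ → ℝ) (hf_meas : Measurable f)
    (hf_per : ∀ x, f (x + 1) = f x)
    (hf_int : ∫ x in (0:ℝ)..1, f x = 0)
    (hf_bv : BoundedVariationOn f (Set.Icc 0 1)) :
    ∀ᵐ x ∂(volume.restrict (Set.Ioo (0:ℝ) 1)),
      Filter.limsup (fun N : ℕ =>
          (∑ k ∈ Finset.range N, f (n k * x)) /
            Real.sqrt (2 * N * Real.log (Real.log N))) atTop
        = Real.sqrt (∫ x in (0:ℝ)..1, f x ^ 2) := by
  obtain ⟨S⟩ := exists_scales hω_top hα hω_log hn_pos hn_inj hA hf_meas hf_per hf_int hf_bv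
  obtain ⟨B, hB0, hB⟩ := bounded_of_bv hf_per hf_bv
  rw [Measure.restrict_congr_set (Ioo_ae_eq_Ioc (μ := volume) (a := (0:ℝ)) (b := 1))]
  rw [← integral_U]
  set v := ∫ x, f x ^ 2 ∂U with hv
  have hv0 : 0 ≤ v := integral_nonneg fun x => sq_nonneg _
  set σ := √v with hσ
  have hσ2 : σ ^ 2 = v := Real.sq_sqrt hv0
  have hσ0 : 0 ≤ σ := Real.sqrt_nonneg _
  have hup : ∀ᵐ x ∂U, ∀ k : ℕ, ∀ᶠ M : ℕ in atTop,
      |∑ j ∈ Finset.range M, f (n j * x)| ≤ (σ + 1 / (k + 1)) * √(2 * M * log (log M)) := by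
    rw [ae_all_iff]
    intro k
    have hk : (0:ℝ) < 1 / (k + 1) := by positivity
    refine S.upper hB (by linarith) ?_
    rw [← hv, ← hσ2]
    exact pow_lt_pow_left₀ (by linarith) hσ0 two_ne_zero
  have hlo : ∀ᵐ x ∂U, ∀ k : ℕ, ∃ᶠ M : ℕ in atTop,
      (σ - 1 / (k + 1)) * √(2 * M * log (log M)) ≤ ∑ j ∈ Finset.range M, f (n j * x) := by
    rcases hσ0.eq_or_lt with h0 | h0
    · filter_upwards [hup] with x hx k
      refine ((hx k).mono fun M hM => ?_).frequently
      have := (abs_le.1 hM).1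
      rw [← h0] at this ⊢
      linarith
    · rw [ae_all_iff]
      intro k
      have hk : (0:ℝ) < 1 / (k + 1) := by positivity
      have hlt : max (σ / 2) (σ - 1 / (k + 1)) < σ := max_lt (by linarith) (by linarith)
      have hpos : 0 < max (σ / 2) (σ - 1 / (k + 1)) := lt_max_of_lt_left (by linarith)
      filter_upwards [S.lower hB hpos (by
        rw [← hv, ← hσ2]
        exact pow_lt_pow_left₀ hlt hpos.le two_ne_zero)] with x hx
      refine hx.mono fun M hM => le_trans ?_ hM
      exact mul_le_mul_of_nonneg_right (le_max_right _ _) (Real.sqrt_nonneg _)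
  change ∀ᵐ x ∂U, _
  filter_upwards [hup, hlo] with x h1 h2
  exact limsup_eq_of eventually_norm_pos h1 h2
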